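/- Let 1 < p < ∞, −1 < α < ∞, let ω be a radial weight in the class D̂, and let ν(s) = ω(s) ω̂₁(s)^α. Then the maximal Bergman projection P⁺_ω is bounded on L^p_ν if and only if A_p(ω,ν) < ∞ and ω ∈ 𝒟. -/

import Mathlib

/-!
Everything is phrased in terms of the measure `μ = s ω(s) ds`, whose tail is `ω̂₁`. This tail
pushes `μ` forward to Lebesgue measure on an interval, so integrals of powers of `ω̂₁` are
integrals of powers of the variable. In particular `A_p(ω, ν) < ∞` if and only if `α < p - 1`, and
the claim becomes: `P⁺_ω` is bounded if and only if `α < p - 1` and `ω̂₁` satisfies `Ď`.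

*Sufficiency.* By `D̂`, the moments `ω_{2n+1}` are comparable to `ω̂₁(1 - 1/n)`. Splitting the
kernel into dyadic blocks, cut off by piecewise linear multipliers so that each block has integral
mean at most a constant times the size of its coefficients, bounds `∫ |B^ω(x e^{iθ})| dθ` by
`∑ 1 / ω̂₁(1 - 2⁻ᵏ)`, summed over `2ᵏ ≲ 1 / (1 - x)`. Under `Ď` this sum is geometric, hence at
most `C / ω̂₁(x)`. Schur's test with a power of `ω̂₁` as test function then applies precisely when
`-1 < α < p - 1`.

*Necessity.* Hardy's inequality bounds the integral means of the kernel from below by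
`∑ (1 / ω_{2n+1}) xⁿ / n`. If `α ≥ p - 1`, testing on truncations of `1 / ω̂₁` makes the norm of
the image grow faster than that of the function. Testing on the indicator of an annulus near the
boundary gives `∑ (1 / ω_{2n+1}) ρ²ⁿ / n ≲ 1 / ω̂₁(ρ)`; for `ρ = 1 - (1 - r) / 2ʲ` the terms with
`1 / (1 - r) < n < 2ʲ / (1 - r)` contribute about `j / ω̂₁(r)`, which is `Ď` once `j` is large.
-/

open MeasureTheory Set Metric
open scoped ENNReal NNReal

noncomputable section

/-- `ω̂(r) = ∫_r^1 ω(s) ds`. -/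
def hatw (w : ℝ → ℝ) (r : ℝ) : ℝ := ∫ s in Set.Ioo r 1, w s

/-- `ω̂₁(r) = ∫_r^1 s ω(s) ds`. -/
def hat1 (w : ℝ → ℝ) (r : ℝ) : ℝ := ∫ s in Set.Ioo r 1, s * w s

/-- A radial weight: nonnegative, integrable on `[0,1)`, with `ω̂(r) > 0` for `0 ≤ r < 1`. -/
def IsRadialWeight (w : ℝ → ℝ) : Prop :=
  (∀ r ∈ Set.Ico (0:ℝ) 1, 0 ≤ w r) ∧ MeasureTheory.IntegrableOn w (Set.Ico (0:ℝ) 1) ∧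
    ∀ r ∈ Set.Ico (0:ℝ) 1, 0 < hatw w r

/-- The class `D̂`: `sup_{0 ≤ r < 1} ω̂(r)/ω̂((1+r)/2) < ∞`. -/
def Dhat (w : ℝ → ℝ) : Prop :=
  ∃ C : ℝ, ∀ r ∈ Set.Ico (0:ℝ) 1, hatw w r ≤ C * hatw w ((1 + r) / 2)

/-- The class `Ď`: there are `K > 1` and `C > 1` with `ω̂(r) ≥ C ω̂(1-(1-r)/K)`. -/
def Dcheck (w : ℝ → ℝ) : Prop :=
  ∃ K > (1:ℝ), ∃ C > (1:ℝ), ∀ r ∈ Set.Ico (0:ℝ) 1, C * hatw w (1 - (1 - r) / K) ≤ hatw w r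

/-- The odd moment `ω_{2n+1} = ∫₀¹ r^{2n+1} ω(r) dr`. -/
def moment (w : ℝ → ℝ) (n : ℕ) : ℝ := ∫ r in Set.Ioo (0:ℝ) 1, r ^ (2 * n + 1) * w r

/-- The Bergman reproducing kernel `B_z^ω(ζ) = Σ_n (conj z · ζ)^n / (2 ω_{2n+1})`. -/
def Bker (w : ℝ → ℝ) (z ζ : ℂ) : ℂ :=
  ∑' n : ℕ, ((starRingEnd ℂ) z * ζ) ^ n / ((2 * moment w n : ℝ) : ℂ)

/-- The `L^p_ν` norm (with `dA` = area measure divided by `π`) of a complex-valued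
function on the unit disc. -/
def LpC (p : ℝ) (v : ℝ → ℝ) (f : ℂ → ℂ) : ℝ≥0∞ :=
  ((∫⁻ z in Metric.ball (0:ℂ) 1, ENNReal.ofReal (‖f z‖ ^ p * v ‖z‖)) /
    ENNReal.ofReal Real.pi) ^ (1 / p)

/-- The Bergman projection `P_ω(f)(z) = ∫_𝔻 f(ζ) conj(B_z^ω(ζ)) ω(ζ) dA(ζ)`. -/
def Pw (w : ℝ → ℝ) (f : ℂ → ℂ) (z : ℂ) : ℂ :=
  (∫ ζ in Metric.ball (0:ℂ) 1, f ζ * (starRingEnd ℂ) (Bker w z ζ) * ((w ‖ζ‖ : ℝ) : ℂ)) /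
    ((Real.pi : ℝ) : ℂ)

/-- `P_ω` is bounded on `L^p_ν`: for every `f ∈ L^p_ν` the defining integral converges
absolutely for a.e. `z ∈ 𝔻` and `‖P_ω f‖_{L^p_ν} ≤ C ‖f‖_{L^p_ν}`. -/
def PwBounded (p : ℝ) (w v : ℝ → ℝ) : Prop :=
  ∃ C > (0:ℝ), ∀ f : ℂ → ℂ, Measurable f → LpC p v f < ⊤ →
    (∀ᵐ z ∂(volume.restrict (Metric.ball (0:ℂ) 1)),
      (∫⁻ ζ in Metric.ball (0:ℂ) 1, ENNReal.ofReal (‖f ζ‖ * ‖Bker w z ζ‖ * w ‖ζ‖)) < ⊤) ∧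
    LpC p v (Pw w f) ≤ ENNReal.ofReal C * LpC p v f

/-- `σ(s) = (ω(s)/ν(s)^{1/p})^{p'}`, as an extended nonnegative real (so `σ(s) = ∞`
when `ν(s) = 0 < ω(s)`). -/
def sigmaE (p : ℝ) (w v : ℝ → ℝ) (s : ℝ) : ℝ≥0∞ :=
  (ENNReal.ofReal (w s) / ENNReal.ofReal (v s) ^ (1 / p)) ^ (p / (p - 1))

/-- The Muckenhoupt-type quantity
`A_p(ω,ν) = sup_{0 ≤ r < 1} ν̂₁(r)^{1/p} σ̂₁(r)^{1/p'} / ω̂₁(r)` (note `1/p' = 1 - 1/p`). -/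
def ApE (p : ℝ) (w v : ℝ → ℝ) : ℝ≥0∞ :=
  ⨆ r ∈ Set.Ico (0:ℝ) 1,
    (∫⁻ s in Set.Ioo r 1, ENNReal.ofReal (s * v s)) ^ (1 / p) *
      (∫⁻ s in Set.Ioo r 1, ENNReal.ofReal s * sigmaE p w v s) ^ (1 - 1 / p) /
      ENNReal.ofReal (hat1 w r)

/-- The `L^p_ν` norm of a real-valued function on the disc. -/
def LpR (p : ℝ) (v : ℝ → ℝ) (f : ℂ → ℝ) : ℝ≥0∞ :=
  ((∫⁻ z in Metric.ball (0:ℂ) 1, ENNReal.ofReal (|f z| ^ p * v ‖z‖)) /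
    ENNReal.ofReal Real.pi) ^ (1 / p)

/-- The maximal Bergman projection `P⁺_ω(f)(z) = ∫_𝔻 f(ζ) |B_z^ω(ζ)| ω(ζ) dA(ζ)`. -/
def Pplus (w : ℝ → ℝ) (f : ℂ → ℂ) (z : ℂ) : ℝ :=
  (∫ ζ in Metric.ball (0:ℂ) 1, ‖f ζ‖ * ‖Bker w z ζ‖ * w ‖ζ‖) / Real.pi

/-- `P⁺_ω` is bounded on `L^p_ν`. -/
def PplusBounded (p : ℝ) (w v : ℝ → ℝ) : Prop :=
  ∃ C > (0:ℝ), ∀ f : ℂ → ℂ, Measurable f → LpC p v f < ⊤ →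
    (∀ᵐ z ∂(volume.restrict (Metric.ball (0:ℂ) 1)),
      (∫⁻ ζ in Metric.ball (0:ℂ) 1, ENNReal.ofReal (‖f ζ‖ * ‖Bker w z ζ‖ * w ‖ζ‖)) < ⊤) ∧
    LpR p v (Pplus w f) ≤ ENNReal.ofReal C * LpC p v f

open Finset (range)
open scoped Real Topology

section FourierSums

@[fun_prop]
lemma continuous_circleExp : Continuous fun θ : ℝ => (Circle.exp θ : ℂ) :=
  continuous_subtype_val.comp Circle.exp.continuous

lemma integral_circleExp_zpow_eq_zero {k : ℤ} (hk : k ≠ 0) :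
    ∫ θ in -π..π, (Circle.exp θ : ℂ) ^ k = 0 := by
  have hexp (θ : ℝ) : (Circle.exp θ : ℂ) ^ k = Complex.exp (k * Complex.I * θ) := by
    rw [Circle.coe_exp, ← Complex.exp_int_mul]
    ring_nf
  simp_rw [hexp]
  rw [integral_exp_mul_complex (by simp [hk]), div_eq_zero_iff, sub_eq_zero,
    Complex.exp_eq_exp_iff_exists_int]
  exact Or.inl ⟨k, by push_cast; ring⟩

lemma integral_circleExp_pow_mul_conj (n m : ℕ) :
    ∫ θ in -π..π, (Circle.exp θ : ℂ) ^ n * (starRingEnd ℂ) ((Circle.exp θ : ℂ) ^ m) =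
      if n = m then (2 * π : ℂ) else 0 := by
  have hzpow (θ : ℝ) : (Circle.exp θ : ℂ) ^ n * (starRingEnd ℂ) ((Circle.exp θ : ℂ) ^ m) =
      (Circle.exp θ : ℂ) ^ ((n : ℤ) - m) := by
    rw [map_pow, ← Circle.coe_inv_eq_conj, Circle.coe_inv, zpow_sub₀ (Circle.coe_ne_zero _),
      zpow_natCast, zpow_natCast, inv_pow, div_eq_mul_inv]
  simp_rw [hzpow]
  split_ifs with h
  · simp only [h, sub_self, zpow_zero, intervalIntegral.integral_const, Complex.real_smul]
    push_cast
    ring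
  · exact integral_circleExp_zpow_eq_zero (by omega)

lemma integral_norm_sq_sum_circleExp (d : ℕ → ℂ) (L : ℕ) :
    ∫ θ in -π..π, ‖∑ n ∈ range L, d n * (Circle.exp θ : ℂ) ^ n‖ ^ 2 =
      2 * π * ∑ n ∈ range L, ‖d n‖ ^ 2 := by
  apply Complex.ofReal_injective
  rw [← intervalIntegral.integral_ofReal]
  have hexpand (θ : ℝ) : ((‖∑ n ∈ range L, d n * (Circle.exp θ : ℂ) ^ n‖ ^ 2 : ℝ) : ℂ) =
      ∑ n ∈ range L, ∑ m ∈ range L, (d n * (starRingEnd ℂ) (d m)) *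
        ((Circle.exp θ : ℂ) ^ n * (starRingEnd ℂ) ((Circle.exp θ : ℂ) ^ m)) := by
    rw [Complex.ofReal_pow, ← Complex.mul_conj', map_sum, Finset.sum_mul_sum]
    refine Finset.sum_congr rfl fun n _ => Finset.sum_congr rfl fun m _ => ?_
    rw [map_mul]
    ring
  have hcont (n m : ℕ) : Continuous fun θ : ℝ => (d n * (starRingEnd ℂ) (d m)) *
      ((Circle.exp θ : ℂ) ^ n * (starRingEnd ℂ) ((Circle.exp θ : ℂ) ^ m)) := by
    have := Complex.continuous_conj.comp (continuous_circleExp.pow m)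
    fun_prop
  simp_rw [hexpand]
  rw [intervalIntegral.integral_finsetSum fun n _ =>
    (continuous_finsetSum _ fun m _ => hcont n m).intervalIntegrable _ _]
  simp_rw [intervalIntegral.integral_finsetSum fun m _ => (hcont _ m).intervalIntegrable _ _,
    intervalIntegral.integral_const_mul, integral_circleExp_pow_mul_conj]
  push_cast
  rw [Finset.mul_sum]
  refine Finset.sum_congr rfl fun n hn => ?_
  simp only [mul_ite, mul_zero, Finset.sum_ite_eq, hn, if_true]
  rw [Complex.mul_conj']
  ring

lemma two_div_pi_mul_abs_le_norm_circleExp_sub_one {θ : ℝ} (h : |θ| ≤ π) :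
    2 / π * |θ| ≤ ‖(Circle.exp θ : ℂ) - 1‖ := by
  have hhalf : |θ / 2| ≤ π / 2 := by
    rw [abs_div, abs_two]
    linarith
  have hsin := Real.mul_abs_le_abs_sin hhalf
  rw [Circle.coe_exp, mul_comm (θ : ℂ) Complex.I, Complex.norm_exp_I_mul_ofReal_sub_one,
    Real.norm_eq_abs, abs_mul, abs_two]
  rw [abs_div, abs_two] at hsin
  linarith

lemma integral_inv_one_add_sq_norm_circleExp_sub_one_le {N : ℝ} (hN : 0 < N) :
    ∫ θ in -π..π, (1 + N ^ 2 * ‖(Circle.exp θ : ℂ) - 1‖ ^ 2)⁻¹ ≤ π ^ 2 / (2 * N) := by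
  have hpi := Real.pi_pos
  set c : ℝ := 2 / π * N with hc
  have hc0 : 0 < c := by positivity
  calc ∫ θ in -π..π, (1 + N ^ 2 * ‖(Circle.exp θ : ℂ) - 1‖ ^ 2)⁻¹
      ≤ ∫ θ in -π..π, (1 + (c * θ) ^ 2)⁻¹ := by
        refine intervalIntegral.integral_mono_on (by linarith)
          (Continuous.intervalIntegrable ?_ _ _) (Continuous.intervalIntegrable ?_ _ _)
          fun θ hθ => ?_
        · exact Continuous.inv₀ (by fun_prop) fun θ => by positivity
        · exact Continuous.inv₀ (by fun_prop) fun θ => by positivity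
        · have := two_div_pi_mul_abs_le_norm_circleExp_sub_one (abs_le.2 hθ)
          rw [← mul_pow, ← sq_abs (c * θ), abs_mul, abs_of_pos hc0, hc, mul_right_comm,
            mul_comm _ N]
          gcongr
    _ = c⁻¹ * (Real.arctan (c * π) - Real.arctan (c * -π)) := by
        rw [intervalIntegral.integral_comp_mul_left (fun x => (1 + x ^ 2)⁻¹) hc0.ne',
          integral_inv_one_add_sq, smul_eq_mul]
    _ ≤ c⁻¹ * π := by
        gcongr
        linarith [Real.arctan_lt_pi_div_two (c * π), Real.neg_pi_div_two_lt_arctan (c * -π)]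
    _ = π ^ 2 / (2 * N) := by
        rw [hc]
        field_simp

lemma norm_circleExp_sub_one_mul_sum (d : ℕ → ℂ) (L : ℕ) (hd0 : d 0 = 0) (hdL : d L = 0) (θ : ℝ) :
    ‖((Circle.exp θ : ℂ) - 1) * ∑ n ∈ range L, d n * (Circle.exp θ : ℂ) ^ n‖ =
      ‖∑ n ∈ range L, (d n - d (n + 1)) * (Circle.exp θ : ℂ) ^ n‖ := by
  set e : ℂ := (Circle.exp θ : ℂ)
  have hshift : ∑ n ∈ range L, d n * e ^ n = ∑ n ∈ range L, d (n + 1) * e ^ (n + 1) := by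
    have hlast := Finset.sum_range_succ (fun n => d n * e ^ n) L
    have hfirst := Finset.sum_range_succ' (fun n => d n * e ^ n) L
    simp only [hdL, hd0, zero_mul, add_zero] at hlast hfirst
    rw [← hlast, hfirst]
  have habel : (e - 1) * ∑ n ∈ range L, d n * e ^ n =
      e * ∑ n ∈ range L, (d n - d (n + 1)) * e ^ n := by
    rw [sub_mul, one_mul]
    nth_rewrite 2 [hshift]
    rw [Finset.mul_sum, Finset.mul_sum, ← Finset.sum_sub_distrib]
    exact Finset.sum_congr rfl fun n _ => by ring
  rw [habel, norm_mul, Circle.norm_coe, one_mul]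

lemma two_mul_mul_le_sq_mul_inv_add {W : ℝ} (hW : 0 < W) (t y : ℝ) :
    2 * t * y ≤ t ^ 2 * W⁻¹ + W * y ^ 2 := by
  have hsq : t ^ 2 * W⁻¹ + W * y ^ 2 - 2 * t * y = (t - W * y) ^ 2 / W := by
    field_simp
    ring
  linarith [div_nonneg (sq_nonneg (t - W * y)) hW.le]

/- Cauchy–Schwarz with the weight `1 + N² |e^{iθ} - 1|²`, in its AM-GM form; Parseval evaluates the
weighted `L²` norm because multiplication by `e^{iθ} - 1` differences the coefficients. -/
lemma two_mul_mul_integral_norm_sum_circleExp_le (d : ℕ → ℂ) (L : ℕ) (hd0 : d 0 = 0)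
    (hdL : d L = 0) {N : ℝ} (hN : 0 < N) (t : ℝ) :
    2 * t * ∫ θ in -π..π, ‖∑ n ∈ range L, d n * (Circle.exp θ : ℂ) ^ n‖ ≤
      t ^ 2 * (π ^ 2 / (2 * N)) + 2 * π * (∑ n ∈ range L, ‖d n‖ ^ 2 +
        N ^ 2 * ∑ n ∈ range L, ‖d n - d (n + 1)‖ ^ 2) := by
  have hpi := Real.pi_pos
  set P : ℝ → ℂ := fun θ => ∑ n ∈ range L, d n * (Circle.exp θ : ℂ) ^ n with hP
  have hPcont : Continuous P := by fun_prop
  have hweight : Continuous fun θ : ℝ => (1 + N ^ 2 * ‖(Circle.exp θ : ℂ) - 1‖ ^ 2)⁻¹ :=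
    Continuous.inv₀ (by fun_prop) fun θ => by positivity
  have hdiff : ∫ θ in -π..π, ‖((Circle.exp θ : ℂ) - 1) * P θ‖ ^ 2 =
      2 * π * ∑ n ∈ range L, ‖d n - d (n + 1)‖ ^ 2 := by
    simp_rw [hP, norm_circleExp_sub_one_mul_sum d L hd0 hdL, integral_norm_sq_sum_circleExp]
  calc 2 * t * ∫ θ in -π..π, ‖P θ‖ = ∫ θ in -π..π, 2 * t * ‖P θ‖ := by
        rw [intervalIntegral.integral_const_mul]
    _ ≤ ∫ θ in -π..π, (t ^ 2 * (1 + N ^ 2 * ‖(Circle.exp θ : ℂ) - 1‖ ^ 2)⁻¹ +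
          (‖P θ‖ ^ 2 + N ^ 2 * ‖((Circle.exp θ : ℂ) - 1) * P θ‖ ^ 2)) := by
        refine intervalIntegral.integral_mono_on (by linarith)
          (Continuous.intervalIntegrable (by fun_prop) _ _)
          (Continuous.intervalIntegrable (by fun_prop) _ _) fun θ _ => ?_
        refine (two_mul_mul_le_sq_mul_inv_add
          (W := 1 + N ^ 2 * ‖(Circle.exp θ : ℂ) - 1‖ ^ 2) (by positivity) t _).trans_eq ?_
        rw [norm_mul]
        ring
    _ = t ^ 2 * (∫ θ in -π..π, (1 + N ^ 2 * ‖(Circle.exp θ : ℂ) - 1‖ ^ 2)⁻¹) +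
          ((∫ θ in -π..π, ‖P θ‖ ^ 2) +
            N ^ 2 * ∫ θ in -π..π, ‖((Circle.exp θ : ℂ) - 1) * P θ‖ ^ 2) := by
        rw [intervalIntegral.integral_add, intervalIntegral.integral_add]
        · simp only [intervalIntegral.integral_const_mul]
        all_goals exact Continuous.intervalIntegrable (by fun_prop) _ _
    _ ≤ t ^ 2 * (π ^ 2 / (2 * N)) + (2 * π * ∑ n ∈ range L, ‖d n‖ ^ 2 +
          N ^ 2 * (2 * π * ∑ n ∈ range L, ‖d n - d (n + 1)‖ ^ 2)) := by
        rw [integral_norm_sq_sum_circleExp, hdiff]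
        gcongr
        exact integral_inv_one_add_sq_norm_circleExp_sub_one_le hN
    _ = _ := by ring

lemma integral_norm_sum_circleExp_le_of_norm_sub_le {d : ℕ → ℂ} {N : ℕ} (hN : N ≠ 0) (K : ℕ)
    (hd0 : d 0 = 0) (hdL : d (K * N) = 0) {A M : ℝ} (hA : 0 ≤ A)
    (hbound : ∀ n < K * N, ‖d n‖ ≤ A) (hdiff : ∀ n < K * N, ‖d n - d (n + 1)‖ ≤ M * A / N) :
    ∫ θ in -π..π, ‖∑ n ∈ range (K * N), d n * (Circle.exp θ : ℂ) ^ n‖ ≤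
      (π ^ 2 / 4 + π * K * (1 + M ^ 2)) * A := by
  have hN' : (0 : ℝ) < N := by positivity
  rcases hA.eq_or_lt with rfl | hA
  · have hzero (θ : ℝ) : ∑ n ∈ range (K * N), d n * (Circle.exp θ : ℂ) ^ n = 0 :=
      Finset.sum_eq_zero fun n hn => by
        rw [norm_le_zero_iff.1 (hbound n (Finset.mem_range.1 hn)), zero_mul]
    simp only [hzero, norm_zero, intervalIntegral.integral_zero, mul_zero, le_refl]
  have hsum : ∑ n ∈ range (K * N), ‖d n‖ ^ 2 ≤ K * N * A ^ 2 := by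
    refine (Finset.sum_le_card_nsmul _ _ (A ^ 2) fun n hn => ?_).trans_eq (by simp)
    have := hbound n (Finset.mem_range.1 hn)
    gcongr
  have hsumDiff : ∑ n ∈ range (K * N), ‖d n - d (n + 1)‖ ^ 2 ≤ K * N * (M * A / N) ^ 2 := by
    refine (Finset.sum_le_card_nsmul _ _ ((M * A / N) ^ 2) fun n hn => ?_).trans_eq (by simp)
    have := hdiff n (Finset.mem_range.1 hn)
    gcongr
  have hmain : 2 * (N * A) * ∫ θ in -π..π, ‖∑ n ∈ range (K * N), d n * (Circle.exp θ : ℂ) ^ n‖ ≤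
      2 * (N * A) * ((π ^ 2 / 4 + π * K * (1 + M ^ 2)) * A) :=
    calc _ ≤ (N * A) ^ 2 * (π ^ 2 / (2 * N)) +
          2 * π * (K * N * A ^ 2 + N ^ 2 * (K * N * (M * A / N) ^ 2)) := by
          refine (two_mul_mul_integral_norm_sum_circleExp_le d _ hd0 hdL hN' _).trans ?_
          gcongr
      _ = _ := by
          field_simp
          ring
  exact le_of_mul_le_mul_left hmain (by positivity)

end FourierSums

section VallePoussin

/-- The piecewise linear cut-off equal to `1` on `(-∞, 1]` and to `0` on `[2, ∞)`, used as the
multiplier of the de la Vallée-Poussin means. -/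
def linearCutoff (y : ℝ) : ℝ := max 0 (min 1 (2 - y))

lemma linearCutoff_nonneg (y : ℝ) : 0 ≤ linearCutoff y := le_max_left _ _

lemma linearCutoff_le_one (y : ℝ) : linearCutoff y ≤ 1 := max_le zero_le_one (min_le_left _ _)

lemma linearCutoff_of_le_one {y : ℝ} (h : y ≤ 1) : linearCutoff y = 1 := by
  rw [linearCutoff, min_eq_left (by linarith), max_eq_right zero_le_one]

lemma linearCutoff_of_two_le {y : ℝ} (h : 2 ≤ y) : linearCutoff y = 0 :=
  max_eq_left ((min_le_right _ _).trans (by linarith))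

lemma abs_linearCutoff_sub_le (y z : ℝ) : |linearCutoff y - linearCutoff z| ≤ |y - z| :=
  calc |linearCutoff y - linearCutoff z| ≤ |min 1 (2 - y) - min 1 (2 - z)| := by
        simpa [linearCutoff, max_comm] using
          abs_max_sub_max_le_abs (min 1 (2 - y)) (min 1 (2 - z)) 0
    _ ≤ |(2 - y) - (2 - z)| := by
        simpa using abs_min_sub_min_le_max 1 (2 - y) 1 (2 - z)
    _ = |y - z| := by
        rw [sub_sub_sub_cancel_left, abs_sub_comm]

/-- The boundary values `∑ cₙ e^{inθ}` of the power series with coefficients `c`. -/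
def circleSeries (c : ℕ → ℂ) (θ : ℝ) : ℂ := ∑' n, c n * (Circle.exp θ : ℂ) ^ n

/-- The multiplier of the `k`-th dyadic block, the difference of two de la Vallée-Poussin
multipliers. It is supported on `2 * 2 ^ k < n < 8 * 2 ^ k`. -/
def dyadicMultiplier (k n : ℕ) : ℝ :=
  linearCutoff (n / (2 * 2 ^ (k + 1))) - linearCutoff (n / (2 * 2 ^ k))

lemma dyadicMultiplier_of_le {k n : ℕ} (h : n ≤ 2 * 2 ^ k) : dyadicMultiplier k n = 0 := by
  have h' : (n : ℝ) ≤ 2 * 2 ^ k := mod_cast h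
  have h2 : (2 : ℝ) ^ k ≤ 2 ^ (k + 1) := pow_le_pow_right₀ one_le_two k.le_succ
  rw [dyadicMultiplier, linearCutoff_of_le_one, linearCutoff_of_le_one, sub_self] <;>
    rw [div_le_one (by positivity)] <;> linarith

lemma dyadicMultiplier_of_ge {k n : ℕ} (h : 8 * 2 ^ k ≤ n) : dyadicMultiplier k n = 0 := by
  have h' : (8 : ℝ) * 2 ^ k ≤ n := mod_cast h
  have hpos : (0 : ℝ) < 2 ^ k := by positivity
  rw [dyadicMultiplier, linearCutoff_of_two_le, linearCutoff_of_two_le, sub_self] <;>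
    rw [le_div_iff₀ (by positivity)] <;> try rw [pow_succ]
  all_goals linarith

lemma abs_dyadicMultiplier_le_one (k n : ℕ) : |dyadicMultiplier k n| ≤ 1 := by
  rw [dyadicMultiplier, abs_le]
  constructor <;>
    linarith [linearCutoff_nonneg (n / (2 * 2 ^ (k + 1))), linearCutoff_nonneg (n / (2 * 2 ^ k)),
      linearCutoff_le_one (n / (2 * 2 ^ (k + 1))), linearCutoff_le_one (n / (2 * 2 ^ k))]

lemma abs_dyadicMultiplier_sub_succ_le (k n : ℕ) :
    |dyadicMultiplier k n - dyadicMultiplier k (n + 1)| ≤ 1 / 2 ^ k := by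
  have hcutoff (M : ℝ) (hM : 0 < M) :
      |linearCutoff (n / M) - linearCutoff ((n + 1 : ℕ) / M)| ≤ 1 / M := by
    refine (abs_linearCutoff_sub_le _ _).trans_eq ?_
    rw [← sub_div, Nat.cast_add_one, sub_add_cancel_left, abs_div, abs_neg, abs_one, abs_of_pos hM]
  calc |dyadicMultiplier k n - dyadicMultiplier k (n + 1)|
      = |(linearCutoff (n / (2 * 2 ^ (k + 1))) - linearCutoff ((n + 1 : ℕ) / (2 * 2 ^ (k + 1)))) -
          (linearCutoff (n / (2 * 2 ^ k)) - linearCutoff ((n + 1 : ℕ) / (2 * 2 ^ k)))| := by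
        rw [dyadicMultiplier, dyadicMultiplier, sub_sub_sub_comm]
    _ ≤ 1 / (2 * 2 ^ (k + 1)) + 1 / (2 * 2 ^ k) :=
        (abs_sub _ _).trans (add_le_add (hcutoff _ (by positivity)) (hcutoff _ (by positivity)))
    _ = 3 / 4 * (1 / 2 ^ k) := by
        rw [pow_succ]
        field_simp
        norm_num
    _ ≤ 1 / 2 ^ k := mul_le_of_le_one_left (by positivity) (by norm_num)

lemma integral_norm_dyadicBlock_le {c : ℕ → ℂ} {k : ℕ} {A M : ℝ} (hA : 0 ≤ A) (hM : 0 ≤ M)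
    (hbound : ∀ n, 2 * 2 ^ k ≤ n → n < 8 * 2 ^ k → ‖c n‖ ≤ A)
    (hdiff : ∀ n, 2 * 2 ^ k ≤ n → n < 8 * 2 ^ k → ‖c n - c (n + 1)‖ ≤ M * A / 2 ^ k) :
    ∫ θ in -π..π, ‖∑ n ∈ range (8 * 2 ^ k), dyadicMultiplier k n * c n * (Circle.exp θ : ℂ) ^ n‖ ≤
      (π ^ 2 / 4 + 8 * π * (1 + (1 + M) ^ 2)) * A := by
  have hmul (u : ℂ) (j : ℕ) : ‖dyadicMultiplier k j * u‖ ≤ ‖u‖ := by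
    rw [norm_mul, Complex.norm_real, Real.norm_eq_abs]
    exact mul_le_of_le_one_left (norm_nonneg _) (abs_dyadicMultiplier_le_one k j)
  refine (integral_norm_sum_circleExp_le_of_norm_sub_le (d := fun n => dyadicMultiplier k n * c n)
    (N := 2 ^ k) (M := 1 + M) (by positivity) 8 ?_ ?_ hA (fun n hn => ?_)
    (fun n hn => ?_)).trans_eq ?_
  · simp [dyadicMultiplier_of_le]
  · simp [dyadicMultiplier_of_ge]
  · rcases le_total n (2 * 2 ^ k) with hlow | hlow
    · simpa [dyadicMultiplier_of_le hlow] using hA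
    · exact (hmul _ _).trans (hbound n hlow hn)
  · rcases lt_or_ge n (2 * 2 ^ k) with hlow | hlow
    · rw [dyadicMultiplier_of_le hlow.le, dyadicMultiplier_of_le (Nat.succ_le_of_lt hlow)]
      simp only [Complex.ofReal_zero, zero_mul, sub_zero, norm_zero]
      positivity
    · calc ‖dyadicMultiplier k n * c n - dyadicMultiplier k (n + 1) * c (n + 1)‖
          = ‖((dyadicMultiplier k n - dyadicMultiplier k (n + 1) : ℝ) : ℂ) * c n +
              dyadicMultiplier k (n + 1) * (c n - c (n + 1))‖ := by
            push_cast
            ring_nf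
        _ ≤ 1 / 2 ^ k * A + M * A / 2 ^ k := by
            refine norm_add_le_of_le ?_ ((hmul _ _).trans (hdiff n hlow hn))
            rw [norm_mul, Complex.norm_real, Real.norm_eq_abs]
            exact mul_le_mul (abs_dyadicMultiplier_sub_succ_le k n) (hbound n hlow hn)
              (norm_nonneg _) (by positivity)
        _ = (1 + M) * A / (2 ^ k : ℕ) := by
            push_cast
            ring
  · push_cast
    ring

/-- The de la Vallée-Poussin mean of order `N` of `circleSeries c`. -/
def vallePoussinMean (c : ℕ → ℂ) (N : ℕ) (θ : ℝ) : ℂ :=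
  ∑ n ∈ range (2 * N), linearCutoff (n / N) * c n * (Circle.exp θ : ℂ) ^ n

lemma vallePoussinMean_eq_sum {N L : ℕ} (hN : N ≠ 0) (hL : 2 * N ≤ L) (c : ℕ → ℂ) (θ : ℝ) :
    vallePoussinMean c N θ =
      ∑ n ∈ range L, linearCutoff (n / N) * c n * (Circle.exp θ : ℂ) ^ n := by
  refine Finset.sum_subset (Finset.range_mono hL) fun n _ hn => ?_
  have hn' : (2 : ℝ) * N ≤ n := by
    rw [Finset.mem_range, not_lt] at hn
    exact_mod_cast hn
  rw [linearCutoff_of_two_le ((le_div_iff₀ (by positivity)).2 hn')]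
  simp

lemma vallePoussinMean_eq_add_sum_dyadicBlock (c : ℕ → ℂ) (K : ℕ) (θ : ℝ) :
    vallePoussinMean c (2 * 2 ^ K) θ = vallePoussinMean c 2 θ +
      ∑ k ∈ range K, ∑ n ∈ range (8 * 2 ^ k),
        dyadicMultiplier k n * c n * (Circle.exp θ : ℂ) ^ n := by
  induction K with
  | zero => simp
  | succ K ih =>
    rw [Finset.sum_range_succ, ← add_assoc, ← ih,
      vallePoussinMean_eq_sum (L := 8 * 2 ^ K) (by positivity) (by rw [pow_succ]; omega),
      vallePoussinMean_eq_sum (L := 8 * 2 ^ K) (by positivity) (by omega),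
      ← Finset.sum_add_distrib]
    refine Finset.sum_congr rfl fun n _ => ?_
    rw [dyadicMultiplier]
    push_cast
    ring

end VallePoussin

section CircleSeries

variable {c : ℕ → ℂ}

lemma norm_mul_circleExp_pow (u : ℂ) (n : ℕ) (θ : ℝ) : ‖u * (Circle.exp θ : ℂ) ^ n‖ = ‖u‖ := by
  rw [norm_mul, norm_pow, Circle.norm_coe, one_pow, mul_one]

lemma hasSum_circleSeries (hc : Summable c) (θ : ℝ) :
    HasSum (fun n => c n * (Circle.exp θ : ℂ) ^ n) (circleSeries c θ) := by
  refine Summable.hasSum (Summable.of_norm ?_)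
  simpa only [norm_mul_circleExp_pow] using hc.norm

lemma continuous_circleSeries (hc : Summable c) : Continuous (circleSeries c) :=
  continuous_tsum (fun n => by fun_prop) hc.norm fun n θ => (norm_mul_circleExp_pow _ n θ).le

lemma periodic_circleSeries (c : ℕ → ℂ) : Function.Periodic (circleSeries c) (2 * π) := fun θ => by
  simp only [circleSeries, Circle.periodic_exp θ]

lemma hasSum_mul_integral_mul_circleExp_pow (hc : Summable c) {ψ : ℝ → ℂ} (hψ : Continuous ψ)
    (a b : ℝ) :
    HasSum (fun n => c n * ∫ θ in a..b, ψ θ * (Circle.exp θ : ℂ) ^ n)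
      (∫ θ in a..b, ψ θ * circleSeries c θ) := by
  simp_rw [← intervalIntegral.integral_const_mul]
  refine intervalIntegral.hasSum_integral_of_dominated_convergence (fun n θ => ‖c n‖ * ‖ψ θ‖)
    (fun n => (by fun_prop : Continuous _).aestronglyMeasurable)
    (fun n => .of_forall fun θ _ => ?_) (.of_forall fun θ _ => hc.norm.mul_right _)
    (by simpa only [tsum_mul_right] using (hψ.norm.const_mul _).intervalIntegrable _ _)
    (.of_forall fun θ _ => ?_)
  · rw [← mul_assoc, norm_mul_circleExp_pow, norm_mul]
  · simpa only [mul_left_comm] using (hasSum_circleSeries hc θ).mul_left (ψ θ)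

lemma two_pi_mul_norm_coeff_zero_le (hc : Summable c) :
    2 * π * ‖c 0‖ ≤ ∫ θ in -π..π, ‖circleSeries c θ‖ := by
  have hsum := hasSum_mul_integral_mul_circleExp_pow hc (continuous_const (y := (1 : ℂ))) (-π) π
  simp only [one_mul] at hsum
  have hmean := hsum.unique <| hasSum_single 0 fun n hn => by
    have := integral_circleExp_zpow_eq_zero (k := n) (by exact_mod_cast hn)
    simp only [zpow_natCast] at this
    rw [this, mul_zero]
  calc 2 * π * ‖c 0‖ = ‖∫ θ in -π..π, circleSeries c θ‖ := by
        rw [hmean]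
        simp only [pow_zero, intervalIntegral.integral_const, sub_neg_eq_add, Complex.real_smul,
          mul_one, norm_mul, Complex.norm_real, Real.norm_eq_abs]
        rw [abs_of_pos (by positivity), mul_comm, two_mul]
    _ ≤ ∫ θ in -π..π, ‖circleSeries c θ‖ :=
        intervalIntegral.norm_integral_le_integral_norm (by linarith [Real.pi_pos])

/- At `n = 0` the left-hand side vanishes, in agreement with `x / 0 = 0`. -/
lemma integral_pi_sub_mul_circleExp_pow (n : ℕ) :
    ∫ θ in 0..2 * π, ((π - θ : ℝ) : ℂ) * (Circle.exp θ : ℂ) ^ n = 2 * π * Complex.I / n := by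
  rcases eq_or_ne n 0 with rfl | hn
  · simp only [pow_zero, mul_one]
    rw [intervalIntegral.integral_ofReal, intervalIntegral.integral_sub (by simp) (by simp),
      integral_id, intervalIntegral.integral_const, Nat.cast_zero, div_zero,
      Complex.ofReal_eq_zero, smul_eq_mul]
    ring
  have hn' : (n : ℂ) ≠ 0 := mod_cast hn
  set a : ℂ := n * Complex.I with ha
  have ha0 : a ≠ 0 := mul_ne_zero hn' Complex.I_ne_zero
  have hexp (θ : ℝ) : (Circle.exp θ : ℂ) ^ n = Complex.exp (a * θ) := by
    rw [Circle.coe_exp, ← Complex.exp_nat_mul, ha]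
    ring_nf
  have hderiv (θ : ℝ) : HasDerivAt
      (fun θ : ℝ => ((π : ℂ) - θ) * Complex.exp (a * θ) / a + Complex.exp (a * θ) / a ^ 2)
      (((π - θ : ℝ) : ℂ) * Complex.exp (a * θ)) θ := by
    have hid : HasDerivAt (fun θ : ℝ => (θ : ℂ)) 1 θ := Complex.ofRealCLM.hasDerivAt
    have hcexp := (hid.const_mul a).cexp
    refine ((((hid.const_sub (π : ℂ)).mul hcexp).div_const a).add
      (hcexp.div_const (a ^ 2))).congr_deriv ?_
    push_cast
    field_simp
    ring
  have hperiod : Complex.exp (a * ((2 * π : ℝ) : ℂ)) = 1 :=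
    Complex.exp_eq_one_iff.2 ⟨n, by rw [ha]; push_cast; ring⟩
  simp_rw [hexp]
  rw [intervalIntegral.integral_eq_sub_of_hasDerivAt (fun θ _ => hderiv θ)
    ((by fun_prop : Continuous _).intervalIntegrable _ _), hperiod]
  simp only [Complex.ofReal_zero, mul_zero, Complex.exp_zero]
  rw [eq_div_iff hn', ha]
  push_cast
  field_simp
  linear_combination -2 * π * Complex.I * n * Complex.I_sq

lemma hasSum_integral_pi_sub_mul_circleSeries (hc : Summable c) :
    HasSum (fun n => 2 * π * Complex.I * (c n / n))
      (∫ θ in 0..2 * π, ((π - θ : ℝ) : ℂ) * circleSeries c θ) := by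
  have hsum := hasSum_mul_integral_mul_circleExp_pow hc
    (ψ := fun θ => ((π - θ : ℝ) : ℂ)) (by fun_prop) 0 (2 * π)
  simp_rw [integral_pi_sub_mul_circleExp_pow] at hsum
  exact hsum.congr_fun fun n => by ring

lemma summable_div_natCast {c : ℕ → ℝ} (hc0 : ∀ n, 0 ≤ c n) (hc : Summable c) :
    Summable fun n => c n / n := by
  refine Summable.of_nonneg_of_le (fun n => div_nonneg (hc0 n) n.cast_nonneg) (fun n => ?_) hc
  rcases eq_or_ne n 0 with rfl | hn
  · simpa using hc0 0
  · exact div_le_self (hc0 n) (mod_cast Nat.one_le_iff_ne_zero.2 hn)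

/- Hardy's inequality: pair the series with `π - θ`, whose Fourier coefficients are `2πi / n`. -/
lemma two_mul_sum_div_le_integral_norm_circleSeries {c : ℕ → ℝ} (hc0 : ∀ n, 0 ≤ c n)
    (hc : Summable c) (s : Finset ℕ) :
    2 * ∑ n ∈ s, c n / n ≤ ∫ θ in -π..π, ‖circleSeries (fun n => c n) θ‖ := by
  have hpi := Real.pi_pos
  have hcC : Summable fun n => (c n : ℂ) := Complex.summable_ofReal.2 hc
  have hsummable := summable_div_natCast hc0 hc
  have hpairing : ∫ θ in 0..2 * π, ((π - θ : ℝ) : ℂ) * circleSeries (fun n => c n) θ =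
      2 * π * Complex.I * (∑' n, c n / n : ℝ) := by
    refine (hasSum_integral_pi_sub_mul_circleSeries hcC).unique ?_
    exact_mod_cast (Complex.hasSum_ofReal.2 hsummable.hasSum).mul_left (2 * π * Complex.I)
  have hcont := continuous_circleSeries hcC
  refine le_of_mul_le_mul_left ?_ hpi
  calc π * (2 * ∑ n ∈ s, c n / n) ≤ π * (2 * ∑' n, c n / n) := by
        gcongr
        exact hsummable.sum_le_tsum s fun n _ => div_nonneg (hc0 n) n.cast_nonneg
    _ = ‖∫ θ in 0..2 * π, ((π - θ : ℝ) : ℂ) * circleSeries (fun n => c n) θ‖ := by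
        rw [hpairing]
        simp only [norm_mul, Complex.norm_ofNat, Complex.norm_real, Complex.norm_I, mul_one,
          Real.norm_eq_abs, abs_of_pos hpi,
          abs_of_nonneg (tsum_nonneg fun n => div_nonneg (hc0 n) n.cast_nonneg)]
        ring
    _ ≤ ∫ θ in 0..2 * π, ‖((π - θ : ℝ) : ℂ) * circleSeries (fun n => c n) θ‖ :=
        intervalIntegral.norm_integral_le_integral_norm (by positivity)
    _ ≤ ∫ θ in 0..2 * π, π * ‖circleSeries (fun n => c n) θ‖ := by
        refine intervalIntegral.integral_mono_on (by positivity)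
          (Continuous.intervalIntegrable (by fun_prop) _ _)
          (Continuous.intervalIntegrable (by fun_prop) _ _) fun θ hθ => ?_
        rw [norm_mul, Complex.norm_real, Real.norm_eq_abs]
        gcongr
        exact abs_le.2 ⟨by linarith [hθ.2], by linarith [hθ.1]⟩
    _ = π * ∫ θ in -π..π, ‖circleSeries (fun n => c n) θ‖ := by
        have hperiod := ((periodic_circleSeries fun n => (c n : ℂ)).comp norm
          ).intervalIntegral_add_eq 0 (-π)
        rw [zero_add, show -π + 2 * π = π by ring] at hperiod
        rw [intervalIntegral.integral_const_mul]
        exact congrArg (π * ·) hperiod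

lemma norm_linearCutoff_mul_mul_circleExp_pow_le (u : ℂ) (y : ℝ) (n : ℕ) (θ : ℝ) :
    ‖linearCutoff y * u * (Circle.exp θ : ℂ) ^ n‖ ≤ ‖u‖ := by
  rw [norm_mul_circleExp_pow, norm_mul, Complex.norm_real, Real.norm_eq_abs,
    abs_of_nonneg (linearCutoff_nonneg y)]
  exact mul_le_of_le_one_left (norm_nonneg _) (linearCutoff_le_one y)

lemma norm_vallePoussinMean_le (c : ℕ → ℂ) (N : ℕ) (θ : ℝ) :
    ‖vallePoussinMean c N θ‖ ≤ ∑ n ∈ range (2 * N), ‖c n‖ :=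
  norm_sum_le_of_le _ fun n _ => norm_linearCutoff_mul_mul_circleExp_pow_le _ _ n θ

@[fun_prop]
lemma continuous_vallePoussinMean (c : ℕ → ℂ) (N : ℕ) : Continuous (vallePoussinMean c N) := by
  unfold vallePoussinMean
  fun_prop

lemma tendsto_vallePoussinMean (hc : Summable c) {N : ℕ → ℕ} (hN : Filter.Tendsto N .atTop .atTop)
    (θ : ℝ) :
    Filter.Tendsto (fun K => vallePoussinMean c (N K) θ) .atTop (𝓝 (circleSeries c θ)) := by
  have htsum : ∀ᶠ K in .atTop, ∑' n : ℕ, linearCutoff (n / N K) * c n * (Circle.exp θ : ℂ) ^ n =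
      vallePoussinMean c (N K) θ := by
    filter_upwards [hN.eventually_ne_atTop 0] with K hK
    refine tsum_eq_sum fun n hn => ?_
    have hn' : (2 : ℝ) * N K ≤ n := mod_cast not_lt.1 (Finset.mem_range.not.1 hn)
    rw [linearCutoff_of_two_le ((le_div_iff₀ (by positivity)).2 hn'), Complex.ofReal_zero,
      zero_mul, zero_mul]
  refine (tendsto_tsum_of_dominated_convergence hc.norm (fun n => ?_) <| .of_forall fun K n =>
    norm_linearCutoff_mul_mul_circleExp_pow_le _ _ n θ).congr' htsum
  refine tendsto_const_nhds.congr' ?_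
  filter_upwards [hN.eventually_ge_atTop n] with K hK
  rw [linearCutoff_of_le_one (div_le_one_of_le₀ (mod_cast hK) (by positivity)),
    Complex.ofReal_one, one_mul]

lemma integral_norm_vallePoussinMean_le {A : ℕ → ℝ} {M : ℝ} (hA : ∀ k, 0 ≤ A k) (hM : 0 ≤ M)
    (hbound : ∀ k n, 2 * 2 ^ k ≤ n → n < 8 * 2 ^ k → ‖c n‖ ≤ A k)
    (hdiff : ∀ k n, 2 * 2 ^ k ≤ n → n < 8 * 2 ^ k → ‖c n - c (n + 1)‖ ≤ M * A k / 2 ^ k) (K : ℕ) :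
    ∫ θ in -π..π, ‖vallePoussinMean c (2 * 2 ^ K) θ‖ ≤ 2 * π * ∑ n ∈ range 4, ‖c n‖ +
      (π ^ 2 / 4 + 8 * π * (1 + (1 + M) ^ 2)) * ∑ k ∈ range K, A k := by
  have hpi := Real.pi_pos
  set block : ℕ → ℝ → ℂ := fun k θ =>
    ∑ n ∈ range (8 * 2 ^ k), dyadicMultiplier k n * c n * (Circle.exp θ : ℂ) ^ n
  have hblockCont (k : ℕ) : Continuous (block k) := by fun_prop
  calc ∫ θ in -π..π, ‖vallePoussinMean c (2 * 2 ^ K) θ‖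
      ≤ ∫ θ in -π..π, (∑ n ∈ range 4, ‖c n‖ + ∑ k ∈ range K, ‖block k θ‖) := by
        refine intervalIntegral.integral_mono_on (by linarith)
          (Continuous.intervalIntegrable (by fun_prop) _ _)
          (Continuous.intervalIntegrable (by fun_prop) _ _) fun θ _ => ?_
        rw [vallePoussinMean_eq_add_sum_dyadicBlock]
        exact norm_add_le_of_le (norm_vallePoussinMean_le c 2 θ) (norm_sum_le _ _)
    _ = 2 * π * ∑ n ∈ range 4, ‖c n‖ + ∑ k ∈ range K, ∫ θ in -π..π, ‖block k θ‖ := by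
        rw [intervalIntegral.integral_add (Continuous.intervalIntegrable (by fun_prop) _ _)
          (Continuous.intervalIntegrable (by fun_prop) _ _), intervalIntegral.integral_const,
          intervalIntegral.integral_finsetSum fun k _ =>
            (hblockCont k).norm.intervalIntegrable _ _, sub_neg_eq_add, smul_eq_mul, two_mul]
    _ ≤ _ := by
        rw [Finset.mul_sum (range K)]
        gcongr with k
        exact integral_norm_dyadicBlock_le (hA k) hM (hbound k) (hdiff k)

theorem integral_norm_circleSeries_le {A : ℕ → ℝ} {M S : ℝ} (hc : Summable c) (hA : ∀ k, 0 ≤ A k)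
    (hM : 0 ≤ M) (hbound : ∀ k n, 2 * 2 ^ k ≤ n → n < 8 * 2 ^ k → ‖c n‖ ≤ A k)
    (hdiff : ∀ k n, 2 * 2 ^ k ≤ n → n < 8 * 2 ^ k → ‖c n - c (n + 1)‖ ≤ M * A k / 2 ^ k)
    (hS : ∀ K, ∑ k ∈ range K, A k ≤ S) :
    ∫ θ in -π..π, ‖circleSeries c θ‖ ≤
      2 * π * ∑ n ∈ range 4, ‖c n‖ + (π ^ 2 / 4 + 8 * π * (1 + (1 + M) ^ 2)) * S := by
  have horder : Filter.Tendsto (fun K => 2 * 2 ^ K) .atTop (.atTop (α := ℕ)) :=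
    (tendsto_pow_atTop_atTop_of_one_lt one_lt_two).const_mul_atTop' two_pos
  have hlim : Filter.Tendsto (fun K => ∫ θ in -π..π, ‖vallePoussinMean c (2 * 2 ^ K) θ‖) .atTop
      (𝓝 (∫ θ in -π..π, ‖circleSeries c θ‖)) := by
    refine intervalIntegral.tendsto_integral_filter_of_dominated_convergence (fun _ => ∑' n, ‖c n‖)
      (.of_forall fun K => (by fun_prop : Continuous _).aestronglyMeasurable)
      (.of_forall fun K => .of_forall fun θ _ => ?_) intervalIntegrable_const
      (.of_forall fun θ _ => (tendsto_vallePoussinMean hc horder θ).norm)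
    rw [norm_norm]
    exact (norm_vallePoussinMean_le c _ θ).trans
      (hc.norm.sum_le_tsum _ fun n _ => norm_nonneg _)
  refine le_of_tendsto' hlim fun K =>
    (integral_norm_vallePoussinMean_le hA hM hbound hdiff K).trans ?_
  gcongr
  exact hS K

end CircleSeries

section RadialMeasure

/-- The tail `μ((r, ∞))` of a measure on the line. For `μ = s ω(s) ds` it is `ω̂₁`. -/
def tail (μ : Measure ℝ) (r : ℝ) : ℝ := μ.real (Ioi r)

/-- The moments `∫ s^{2n} dμ(s)`. For `μ = s ω(s) ds` they are the odd moments `ω_{2n+1}`. -/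
def evenMoment (μ : Measure ℝ) (n : ℕ) : ℝ := ∫ s, s ^ (2 * n) ∂μ

/-- The measures that play the role of `s ω(s) ds` for a radial weight `ω`: finite, without atoms,
carried by `(0, 1)` and charging every neighbourhood of `1`. -/
class IsRadialMeasure (μ : Measure ℝ) : Prop extends IsFiniteMeasure μ, NullSingletonClass μ where
  ae_mem_Ioo : ∀ᵐ s ∂μ, s ∈ Ioo (0 : ℝ) 1
  tail_pos : ∀ r < 1, 0 < tail μ r

/-- The class `D̂` with explicit constant, for the tail of a measure. -/
def TailDoubling (μ : Measure ℝ) (D : ℝ) : Prop := ∀ r < 1, tail μ r ≤ D * tail μ ((1 + r) / 2)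

variable {μ : Measure ℝ} {D x : ℝ}

lemma tail_nonneg (r : ℝ) : 0 ≤ tail μ r := measureReal_nonneg

lemma tail_antitone [IsFiniteMeasure μ] : Antitone (tail μ) :=
  fun _ _ hab => measureReal_mono (Ioi_subset_Ioi hab)

lemma ofReal_tail [IsFiniteMeasure μ] (r : ℝ) : ENNReal.ofReal (tail μ r) = μ (Ioi r) :=
  ofReal_measureReal

lemma one_sub_inv_two_pow_lt_one (k : ℕ) : (1 - 1 / 2 ^ k : ℝ) < 1 :=
  sub_lt_self _ (by positivity)

lemma summable_pow_mul_exp_neg_two_pow (D : ℝ) :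
    Summable fun j : ℕ => D ^ j * Real.exp (-(2 : ℝ) ^ j) := by
  obtain ⟨m, hm⟩ := pow_unbounded_of_one_lt |D| one_lt_two
  have hgeom : Summable fun j : ℕ => (m.factorial : ℝ) * (|D| / 2 ^ m) ^ j :=
    (summable_geometric_of_lt_one (by positivity) ((div_lt_one (by positivity)).2 hm)).mul_left _
  refine hgeom.of_norm_bounded fun j => ?_
  have hexp : Real.exp (-(2 : ℝ) ^ j) ≤ m.factorial / ((2 : ℝ) ^ j) ^ m := by
    rw [Real.exp_neg, ← inv_div]
    exact inv_anti₀ (by positivity) (Real.pow_div_factorial_le_exp _ (by positivity) m)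
  calc ‖D ^ j * Real.exp (-(2 : ℝ) ^ j)‖ = |D| ^ j * Real.exp (-(2 : ℝ) ^ j) := by
        rw [norm_mul, norm_pow, Real.norm_eq_abs, Real.norm_of_nonneg (Real.exp_pos _).le]
    _ ≤ |D| ^ j * (m.factorial / ((2 : ℝ) ^ j) ^ m) := by gcongr
    _ = m.factorial * (|D| / 2 ^ m) ^ j := by
        rw [← pow_mul, mul_comm j m, pow_mul, div_pow]; ring

lemma pow_mul_one_sub_le_inv {y : ℝ} (hy0 : 0 ≤ y) (hy : y ≤ 1) {N : ℕ} (hN : 1 ≤ N) :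
    y ^ N * (1 - y) ≤ (N : ℝ)⁻¹ := by
  have hgeom : N * y ^ N ≤ ∑ i ∈ range N, y ^ i := by
    simpa using Finset.card_nsmul_le_sum (range N) (fun i => y ^ i) (y ^ N)
      fun i hi => pow_le_pow_of_le_one hy0 hy (Finset.mem_range.1 hi).le
  rw [← one_div, le_div_iff₀ (by exact_mod_cast hN)]
  calc y ^ N * (1 - y) * N = N * y ^ N * (1 - y) := by ring
    _ ≤ (∑ i ∈ range N, y ^ i) * (1 - y) := by gcongr
    _ = 1 - y ^ N := geom_sum_mul_neg y N
    _ ≤ 1 := sub_le_self _ (by positivity)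

/-- `j` is the first index with `1 - 2^j / n < s`. -/
lemma exists_one_sub_lt_and_pow_le_exp {s : ℝ} (hs0 : 0 < s) (hs : s < 1) {n : ℕ} (hn : 1 ≤ n) :
    ∃ j : ℕ, 1 - 2 ^ j * (1 / n : ℝ) < s ∧
      s ^ (2 * n) ≤ Real.exp 1 * Real.exp (-(2 : ℝ) ^ j) := by
  classical
  have hn' : (0 : ℝ) < n := by exact_mod_cast hn
  have hex : ∃ j : ℕ, 1 - 2 ^ j * (1 / n : ℝ) < s := by
    obtain ⟨m, hm⟩ := pow_unbounded_of_one_lt (n : ℝ) one_lt_two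
    have : 1 < 2 ^ m * (1 / n : ℝ) := by
      rwa [mul_one_div, one_lt_div hn']
    exact ⟨m, by linarith⟩
  refine ⟨Nat.find hex, Nat.find_spec hex, ?_⟩
  rcases hj : Nat.find hex with _ | i
  · rw [← Real.exp_add]
    simpa using pow_le_one₀ hs0.le hs.le
  have hle : s ≤ 1 - 2 ^ i * (1 / n : ℝ) := not_lt.1 (Nat.find_min hex (by omega))
  calc s ^ (2 * n) ≤ Real.exp (-(2 ^ i * (1 / n : ℝ))) ^ (2 * n) := by
        gcongr
        exact hle.trans (Real.one_sub_le_exp_neg _)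
    _ = Real.exp (-(2 : ℝ) ^ (i + 1)) := by
        rw [← Real.exp_nat_mul]; congr 1; push_cast; field_simp; ring
    _ ≤ Real.exp 1 * Real.exp (-(2 : ℝ) ^ (i + 1)) :=
        le_mul_of_one_le_left (Real.exp_pos _).le (Real.one_le_exp zero_le_one)

variable [IsRadialMeasure μ]

lemma tail_pos {r : ℝ} (hr : r < 1) : 0 < tail μ r := IsRadialMeasure.tail_pos r hr

lemma TailDoubling.pos (hD : TailDoubling μ D) : 0 < D :=
  pos_of_mul_pos_left ((tail_pos zero_lt_one).trans_le (hD 0 zero_lt_one)) (tail_nonneg _)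

lemma TailDoubling.tail_le_pow_mul (hD : TailDoubling μ D) (j : ℕ) {t : ℝ} (ht : 0 < t) :
    tail μ (1 - 2 ^ j * t) ≤ D ^ j * tail μ (1 - t) := by
  induction j with
  | zero => simp
  | succ j ih =>
    have hD0 := hD.pos
    calc tail μ (1 - 2 ^ (j + 1) * t) ≤ D * tail μ ((1 + (1 - 2 ^ (j + 1) * t)) / 2) :=
          hD _ (sub_lt_self _ (by positivity))
      _ = D * tail μ (1 - 2 ^ j * t) := by ring_nf
      _ ≤ D * (D ^ j * tail μ (1 - t)) := by gcongr
      _ = D ^ (j + 1) * tail μ (1 - t) := by ring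

lemma tail_eq_tail_zero {r : ℝ} (hr : r ≤ 0) :
    tail μ r = tail μ 0 := by
  refine measureReal_congr ?_
  filter_upwards [IsRadialMeasure.ae_mem_Ioo (μ := μ)] with s hs
  exact propext ⟨fun _ => hs.1, fun _ => hr.trans_lt hs.1⟩

lemma integrable_pow_of_isRadialMeasure (n : ℕ) : Integrable (fun s => s ^ n) μ := by
  refine (integrable_const (1 : ℝ)).mono' (by fun_prop) ?_
  filter_upwards [IsRadialMeasure.ae_mem_Ioo (μ := μ)] with s hs
  rw [norm_pow, Real.norm_of_nonneg hs.1.le]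
  exact pow_le_one₀ hs.1.le hs.2.le

lemma evenMoment_antitone : Antitone (evenMoment μ) := by
  intro a b hab
  refine integral_mono_ae (integrable_pow_of_isRadialMeasure _)
    (integrable_pow_of_isRadialMeasure _) ?_
  filter_upwards [IsRadialMeasure.ae_mem_Ioo (μ := μ)] with s hs
  exact pow_le_pow_of_le_one hs.1.le hs.2.le (by omega)

lemma pow_mul_tail_le_evenMoment (n : ℕ) {t : ℝ} (ht : 0 ≤ t) :
    t ^ (2 * n) * tail μ t ≤ evenMoment μ n := by
  have hint : t ^ (2 * n) * tail μ t = ∫ s, (Ioi t).indicator (fun _ => t ^ (2 * n)) s ∂μ := by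
    rw [integral_indicator measurableSet_Ioi, setIntegral_const, tail, smul_eq_mul, mul_comm]
  rw [hint]
  refine integral_mono_ae ((integrable_const _).indicator measurableSet_Ioi)
    (integrable_pow_of_isRadialMeasure _) ?_
  filter_upwards [IsRadialMeasure.ae_mem_Ioo (μ := μ)] with s hs
  exact indicator_apply_le' (fun hst => pow_le_pow_left₀ ht (le_of_lt hst) _)
    fun _ => pow_nonneg hs.1.le _

lemma evenMoment_pos (n : ℕ) : 0 < evenMoment μ n := by
  have := tail_pos (μ := μ) (r := 1 / 2) (by norm_num)
  exact lt_of_lt_of_le (by positivity) (pow_mul_tail_le_evenMoment n (t := 1 / 2) (by norm_num))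

lemma tail_le_two_mul_evenMoment {n : ℕ} (hn : 1 ≤ n) :
    tail μ (1 - 1 / (4 * n)) ≤ 2 * evenMoment μ n := by
  have hn' : (1 : ℝ) ≤ n := by exact_mod_cast hn
  have ht : (1 : ℝ) / (4 * n) ≤ 1 / 4 := by gcongr; linarith
  have hbernoulli : (1 : ℝ) / 2 ≤ (1 - 1 / (4 * n)) ^ (2 * n) := by
    have := one_add_mul_le_pow (a := -(1 / (4 * n) : ℝ)) (by linarith) (2 * n)
    have e : (1 : ℝ) + ((2 * n : ℕ) : ℝ) * (-(1 / (4 * n))) = 1 / 2 := by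
      push_cast; field_simp; norm_num
    rwa [e, ← sub_eq_add_neg] at this
  have hmoment := pow_mul_tail_le_evenMoment (μ := μ) n (t := 1 - 1 / (4 * n)) (by linarith)
  nlinarith [tail_nonneg (μ := μ) (1 - 1 / (4 * n))]

lemma TailDoubling.exists_evenMoment_le (hD : TailDoubling μ D) :
    ∃ C > 0, ∀ n : ℕ, 1 ≤ n → evenMoment μ n ≤ C * tail μ (1 - 1 / n) := by
  have hD0 := hD.pos
  have hsum := (summable_pow_mul_exp_neg_two_pow D).mul_left (Real.exp 1)
  refine ⟨∑' j : ℕ, Real.exp 1 * (D ^ j * Real.exp (-(2 : ℝ) ^ j)),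
    hsum.tsum_pos (fun j => by positivity) 0 (by positivity), fun n hn => ?_⟩
  have : (0 : ℝ) < n := by exact_mod_cast hn
  have htail := tail_nonneg (μ := μ) (1 - 1 / n)
  rw [← tsum_mul_right, ← ENNReal.ofReal_le_ofReal_iff (tsum_nonneg fun j => by positivity),
    ENNReal.ofReal_tsum_of_nonneg (fun j => by positivity) (hsum.mul_right _), evenMoment,
    ofReal_integral_eq_lintegral_ofReal (integrable_pow_of_isRadialMeasure _)
      (IsRadialMeasure.ae_mem_Ioo.mono fun s hs => pow_nonneg hs.1.le _)]
  calc ∫⁻ s, ENNReal.ofReal (s ^ (2 * n)) ∂μ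
      ≤ ∫⁻ s, ∑' j : ℕ, (Ioi (1 - 2 ^ j * (1 / n : ℝ))).indicator
          (fun _ => ENNReal.ofReal (Real.exp 1 * Real.exp (-(2 : ℝ) ^ j))) s ∂μ := by
        refine lintegral_mono_ae (IsRadialMeasure.ae_mem_Ioo.mono fun s hs => ?_)
        obtain ⟨j, hj, hpow⟩ := exists_one_sub_lt_and_pow_le_exp hs.1 hs.2 hn
        refine le_trans ?_ (ENNReal.le_tsum j)
        rw [indicator_of_mem (mem_Ioi.2 hj)]
        exact ENNReal.ofReal_le_ofReal hpow
    _ = ∑' j : ℕ, ENNReal.ofReal (Real.exp 1 * Real.exp (-(2 : ℝ) ^ j)) *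
          μ (Ioi (1 - 2 ^ j * (1 / n : ℝ))) := by
        rw [lintegral_tsum fun j => (measurable_const.indicator measurableSet_Ioi).aemeasurable]
        simp_rw [lintegral_indicator measurableSet_Ioi, setLIntegral_const]
    _ ≤ ∑' j : ℕ, ENNReal.ofReal
          (Real.exp 1 * (D ^ j * Real.exp (-(2 : ℝ) ^ j)) * tail μ (1 - 1 / n)) := by
        refine ENNReal.tsum_le_tsum fun j => ?_
        rw [← ofReal_tail, ← ENNReal.ofReal_mul (by positivity)]
        refine ENNReal.ofReal_le_ofReal ?_
        calc _ ≤ Real.exp 1 * Real.exp (-(2 : ℝ) ^ j) * (D ^ j * tail μ (1 - 1 / n)) := by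
              gcongr
              exact hD.tail_le_pow_mul j (by positivity)
          _ = _ := by ring

lemma TailDoubling.tail_le_evenMoment_eight_mul (hD : TailDoubling μ D) {n : ℕ} (hn : 1 ≤ n) :
    tail μ (1 - 1 / n) ≤ D ^ 5 * (2 * evenMoment μ (8 * n)) := by
  have : (0 : ℝ) < n := by exact_mod_cast hn
  have hD0 := hD.pos
  calc tail μ (1 - 1 / n) = tail μ (1 - 2 ^ 5 * (1 / (4 * ((8 * n : ℕ) : ℝ)))) := by
        congr 2; push_cast; field_simp; norm_num
    _ ≤ D ^ 5 * tail μ (1 - 1 / (4 * ((8 * n : ℕ) : ℝ))) := hD.tail_le_pow_mul 5 (by positivity)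
    _ ≤ D ^ 5 * (2 * evenMoment μ (8 * n)) := by
        gcongr; exact tail_le_two_mul_evenMoment (by omega)

lemma TailDoubling.exists_evenMoment_le_eight_mul (hD : TailDoubling μ D) :
    ∃ E > 0, ∀ n : ℕ, 1 ≤ n → evenMoment μ n ≤ E * evenMoment μ (8 * n) := by
  obtain ⟨C, hC, hmoment⟩ := hD.exists_evenMoment_le
  have hD0 := hD.pos
  refine ⟨C * (D ^ 5 * 2), by positivity, fun n hn => (hmoment n hn).trans ?_⟩
  calc C * tail μ (1 - 1 / n) ≤ C * (D ^ 5 * (2 * evenMoment μ (8 * n))) := by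
        gcongr; exact hD.tail_le_evenMoment_eight_mul hn
    _ = C * (D ^ 5 * 2) * evenMoment μ (8 * n) := by ring

lemma evenMoment_sub_evenMoment_succ_le {N n : ℕ} (hN : 1 ≤ N) (hn : 2 * N ≤ n) :
    evenMoment μ n - evenMoment μ (n + 1) ≤ evenMoment μ N / N := by
  have hint (k : ℕ) : Integrable (fun s => s ^ k) μ := integrable_pow_of_isRadialMeasure k
  rw [evenMoment, evenMoment, evenMoment, ← integral_sub (hint _) (hint _), div_eq_mul_inv,
    ← integral_mul_const]
  refine integral_mono_ae ((hint _).sub (hint _)) ((hint _).mul_const _) ?_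
  filter_upwards [IsRadialMeasure.ae_mem_Ioo (μ := μ)] with s hs
  have hs0 : 0 ≤ s := hs.1.le
  have hs1 : s ^ 2 ≤ 1 := pow_le_one₀ hs0 hs.2.le
  calc s ^ (2 * n) - s ^ (2 * (n + 1)) = s ^ (2 * n) * (1 - s ^ 2) := by ring
    _ ≤ s ^ (2 * N + 2 * N) * (1 - s ^ 2) :=
        mul_le_mul_of_nonneg_right (pow_le_pow_of_le_one hs0 hs.2.le (by omega)) (by linarith)
    _ = s ^ (2 * N) * ((s ^ 2) ^ N * (1 - s ^ 2)) := by rw [pow_add, ← pow_mul]; ring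
    _ ≤ s ^ (2 * N) * (N : ℝ)⁻¹ := by
        gcongr; exact pow_mul_one_sub_le_inv (by positivity) hs1 hN

end RadialMeasure

section RadialKernel

/-- The Taylor coefficients `1 / (2 ω_{2n+1})` of the Bergman kernel. -/
def kernelCoeff (μ : Measure ℝ) (n : ℕ) : ℝ := (2 * evenMoment μ n)⁻¹

/-- The Bergman kernel `B_z^ω(ζ)` as a function of the single variable `ξ = conj z · ζ`. -/
def radialKernel (μ : Measure ℝ) (ξ : ℂ) : ℂ := ∑' n : ℕ, (kernelCoeff μ n : ℂ) * ξ ^ n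

/-- The integral mean of the kernel over the circle of radius `x`, not normalized by `2π`. -/
def kernelMean (μ : Measure ℝ) (x : ℝ) : ℝ := ∫ θ in -π..π, ‖radialKernel μ (x * Circle.exp θ)‖

/-- The reciprocal tail at the dyadic point `1 - 2⁻ᵏ`. -/
def dyadicInvTail (μ : Measure ℝ) (k : ℕ) : ℝ := (tail μ (1 - 1 / 2 ^ k))⁻¹

variable {μ : Measure ℝ} {D E x : ℝ}

lemma radialKernel_mul_circleExp (x θ : ℝ) :
    radialKernel μ (x * Circle.exp θ) =
      circleSeries (fun n => ((kernelCoeff μ n * x ^ n : ℝ) : ℂ)) θ := by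
  simp only [radialKernel, circleSeries, mul_pow, Complex.ofReal_mul, Complex.ofReal_pow, mul_assoc]

lemma kernelMean_eq_integral_circleSeries (x : ℝ) :
    kernelMean μ x =
      ∫ θ in -π..π, ‖circleSeries (fun n => ((kernelCoeff μ n * x ^ n : ℝ) : ℂ)) θ‖ := by
  simp only [kernelMean, radialKernel_mul_circleExp]

lemma integral_norm_radialKernel_eq_kernelMean (x a : ℝ) :
    ∫ θ in a..a + 2 * π, ‖radialKernel μ (x * Circle.exp θ)‖ = kernelMean μ x := by
  simp only [kernelMean_eq_integral_circleSeries, radialKernel_mul_circleExp]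
  refine (((periodic_circleSeries _).comp (‖·‖)).intervalIntegral_add_eq a (-π)).trans ?_
  rw [show -π + 2 * π = π by ring]
  rfl

lemma sum_le_of_mul_le_add {G : ℕ → ℝ} {C : ℝ} {j : ℕ} (hG0 : ∀ k, 0 ≤ G k) (hG : Monotone G)
    (hC : 1 < C) (hgrowth : ∀ k, C * G k ≤ G (k + j)) (m : ℕ) :
    ∑ k ∈ range (m + 1), G k ≤ j * C / (C - 1) * G m := by
  have hGm := hG0 m
  have hC1 : 0 < C - 1 := by linarith
  have hlast (f : ℕ → ℕ) (n : ℕ) (hf : ∀ k < n, f k ≤ m) : ∑ k ∈ range n, G (f k) ≤ n * G m := by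
    simpa using Finset.sum_le_card_nsmul (range n) (G ∘ f) (G m)
      fun k hk => hG (hf k (Finset.mem_range.1 hk))
  rw [div_mul_eq_mul_div, le_div_iff₀ hC1]
  rcases le_or_gt (m + 1) j with hmj | hjm
  · have hsum := hlast id (m + 1) fun k hk => by simpa using Nat.lt_succ_iff.1 hk
    calc (∑ k ∈ range (m + 1), G k) * (C - 1) ≤ (m + 1 : ℕ) * G m * (C - 1) := by
          gcongr; exact hsum
      _ ≤ j * G m * C := by gcongr; linarith
      _ = j * C * G m := by ring
  · obtain ⟨i, hi⟩ := Nat.exists_eq_add_of_le hjm.le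
    have hsplit : ∑ k ∈ range (m + 1), G k = ∑ k ∈ range i, G k + ∑ k ∈ range j, G (i + k) := by
      rw [hi, add_comm j i, Finset.sum_range_add]
    have hshift : C * ∑ k ∈ range i, G k ≤ ∑ k ∈ range (m + 1), G k := by
      rw [hi, Finset.sum_range_add, Finset.mul_sum]
      refine (Finset.sum_le_sum fun k _ => ?_).trans
        (le_add_of_nonneg_left (Finset.sum_nonneg fun k _ => hG0 k))
      exact (hgrowth k).trans_eq (by rw [add_comm])
    have hsum := hlast (i + ·) j fun k hk => by omega
    have hC0 : 0 ≤ C := by linarith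
    nlinarith [mul_le_mul_of_nonneg_left hsum hC0]

variable [IsRadialMeasure μ]

lemma dyadicInvTail_pos (k : ℕ) : 0 < dyadicInvTail μ k :=
  inv_pos.2 (tail_pos (one_sub_inv_two_pow_lt_one k))

lemma dyadicInvTail_monotone : Monotone (dyadicInvTail μ) := fun k m hkm =>
  inv_anti₀ (tail_pos (one_sub_inv_two_pow_lt_one m)) <| tail_antitone <| by gcongr; norm_num

lemma kernelCoeff_pos (n : ℕ) : 0 < kernelCoeff μ n :=
  inv_pos.2 (mul_pos two_pos (evenMoment_pos n))

lemma kernelCoeff_monotone : Monotone (kernelCoeff μ) := fun _ b hab =>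
  inv_anti₀ (mul_pos two_pos (evenMoment_pos b))
    (mul_le_mul_of_nonneg_left (evenMoment_antitone hab) two_pos.le)

lemma summable_kernelCoeff_mul_pow (hx0 : 0 ≤ x) (hx : x < 1) :
    Summable fun n => kernelCoeff μ n * x ^ n := by
  obtain ⟨y, hxy, hy1⟩ := exists_between hx
  have hy0 : 0 < y := hx0.trans_lt hxy
  have htail : 0 < tail μ √y := tail_pos (by rwa [Real.sqrt_lt' one_pos, one_pow])
  have hgeom : Summable fun n : ℕ => (2 * tail μ √y)⁻¹ * (x / y) ^ n :=
    (summable_geometric_of_lt_one (by positivity) ((div_lt_one hy0).2 hxy)).mul_left _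
  refine hgeom.of_nonneg_of_le
    (fun n => mul_nonneg (kernelCoeff_pos n).le (by positivity)) fun n => ?_
  have hmoment : y ^ n * tail μ √y ≤ evenMoment μ n := by
    simpa only [pow_mul, Real.sq_sqrt hy0.le] using
      pow_mul_tail_le_evenMoment (μ := μ) n (Real.sqrt_nonneg y)
  calc kernelCoeff μ n * x ^ n ≤ (2 * (y ^ n * tail μ √y))⁻¹ * x ^ n := by
        rw [kernelCoeff]; gcongr
    _ = (2 * tail μ √y)⁻¹ * (x / y) ^ n := by rw [div_pow]; field_simp

lemma summable_ofReal_kernelCoeff_mul_pow (hx0 : 0 ≤ x) (hx : x < 1) :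
    Summable fun n => ((kernelCoeff μ n * x ^ n : ℝ) : ℂ) :=
  Complex.summable_ofReal.2 (summable_kernelCoeff_mul_pow hx0 hx)

lemma continuousOn_radialKernel : ContinuousOn (radialKernel μ) (ball 0 1) := by
  intro ξ hξ
  obtain ⟨R, hξR, hR1⟩ := exists_between (mem_ball_zero_iff.1 hξ)
  have hR : ContinuousOn (radialKernel μ) (ball 0 R) := by
    refine continuousOn_tsum (fun n => by fun_prop)
      (summable_kernelCoeff_mul_pow (μ := μ) ((norm_nonneg _).trans hξR.le) hR1) fun n z hz => ?_
    have hcoeff : 0 ≤ kernelCoeff μ n := (kernelCoeff_pos n).le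
    rw [norm_mul, norm_pow, Complex.norm_of_nonneg hcoeff]
    gcongr
    exact (mem_ball_zero_iff.1 hz).le
  exact (hR.continuousAt (isOpen_ball.mem_nhds (mem_ball_zero_iff.2 hξR))).continuousWithinAt

lemma kernelCoeff_succ_sub_le (hE : ∀ n : ℕ, 1 ≤ n → evenMoment μ n ≤ E * evenMoment μ (8 * n))
    {N n : ℕ} (hN : 1 ≤ N) (hNn : 2 * N ≤ n) (hnN : n < 8 * N) :
    kernelCoeff μ (n + 1) - kernelCoeff μ n ≤ E * kernelCoeff μ (8 * N) / N := by
  have hn := evenMoment_pos (μ := μ) n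
  have hn1 := evenMoment_pos (μ := μ) (n + 1)
  have hN8 := evenMoment_pos (μ := μ) (8 * N)
  have hle : evenMoment μ (8 * N) ≤ evenMoment μ n := evenMoment_antitone (by omega)
  have hle1 : evenMoment μ (8 * N) ≤ evenMoment μ (n + 1) := evenMoment_antitone (by omega)
  have hdiff0 : 0 ≤ evenMoment μ n - evenMoment μ (n + 1) :=
    sub_nonneg.2 (evenMoment_antitone n.le_succ)
  have hdiff : evenMoment μ n - evenMoment μ (n + 1) ≤ E * evenMoment μ (8 * N) / N :=
    (evenMoment_sub_evenMoment_succ_le hN hNn).trans (by gcongr; exact hE N hN)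
  calc kernelCoeff μ (n + 1) - kernelCoeff μ n =
        (evenMoment μ n - evenMoment μ (n + 1)) / (2 * evenMoment μ n * evenMoment μ (n + 1)) := by
        unfold kernelCoeff; field_simp
    _ ≤ (E * evenMoment μ (8 * N) / N) / (2 * evenMoment μ (8 * N) * evenMoment μ (8 * N)) := by
        gcongr
        exact hdiff0.trans hdiff
    _ = E * kernelCoeff μ (8 * N) / N := by unfold kernelCoeff; field_simp

lemma kernelCoeff_mul_pow_le (hx0 : 0 ≤ x) (hx : x ≤ 1) {N n : ℕ} (hNn : N ≤ n) (hnN : n ≤ 8 * N) :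
    kernelCoeff μ n * x ^ n ≤ kernelCoeff μ (8 * N) * x ^ N :=
  mul_le_mul (kernelCoeff_monotone hnN) (pow_le_pow_of_le_one hx0 hx hNn) (by positivity)
    (kernelCoeff_pos _).le

lemma abs_kernelCoeff_mul_pow_sub_le (hE0 : 0 ≤ E)
    (hE : ∀ n : ℕ, 1 ≤ n → evenMoment μ n ≤ E * evenMoment μ (8 * n)) (hx0 : 0 ≤ x) (hx : x ≤ 1)
    {N n : ℕ} (hN : 1 ≤ N) (hNn : 2 * N ≤ n) (hnN : n < 8 * N) :
    |kernelCoeff μ n * x ^ n - kernelCoeff μ (n + 1) * x ^ (n + 1)| ≤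
      (1 + E) * (kernelCoeff μ (8 * N) * x ^ N) / N := by
  have hN8 := (kernelCoeff_pos (μ := μ) (8 * N)).le
  have hmono : kernelCoeff μ n ≤ kernelCoeff μ (n + 1) := kernelCoeff_monotone n.le_succ
  have hpow : x ^ n * (1 - x) ≤ x ^ N * (N : ℝ)⁻¹ := by
    calc x ^ n * (1 - x) ≤ x ^ (N + N) * (1 - x) := mul_le_mul_of_nonneg_right
          (pow_le_pow_of_le_one hx0 hx (by omega)) (by linarith)
      _ = x ^ N * (x ^ N * (1 - x)) := by rw [pow_add, mul_assoc]
      _ ≤ x ^ N * (N : ℝ)⁻¹ := by gcongr; exact pow_mul_one_sub_le_inv hx0 hx hN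
  calc |kernelCoeff μ n * x ^ n - kernelCoeff μ (n + 1) * x ^ (n + 1)|
      = |kernelCoeff μ n * (x ^ n * (1 - x)) -
          (kernelCoeff μ (n + 1) - kernelCoeff μ n) * x ^ (n + 1)| := by ring_nf
    _ ≤ kernelCoeff μ n * (x ^ n * (1 - x)) +
          (kernelCoeff μ (n + 1) - kernelCoeff μ n) * x ^ (n + 1) := by
        refine (abs_sub _ _).trans_eq ?_
        rw [abs_of_nonneg (mul_nonneg (kernelCoeff_pos n).le
          (mul_nonneg (by positivity) (by linarith))),
          abs_of_nonneg (mul_nonneg (by linarith) (by positivity))]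
    _ ≤ kernelCoeff μ (8 * N) * (x ^ N * (N : ℝ)⁻¹) + E * kernelCoeff μ (8 * N) / N * x ^ N := by
        refine add_le_add (mul_le_mul (kernelCoeff_monotone hnN.le) hpow
          (mul_nonneg (by positivity) (by linarith)) hN8) (mul_le_mul
          (kernelCoeff_succ_sub_le hE hN hNn hnN) (pow_le_pow_of_le_one hx0 hx (by omega))
          (by positivity) (by positivity))
    _ = (1 + E) * (kernelCoeff μ (8 * N) * x ^ N) / N := by ring

lemma kernelMean_le_of_sum_le (hE0 : 0 ≤ E)
    (hE : ∀ n : ℕ, 1 ≤ n → evenMoment μ n ≤ E * evenMoment μ (8 * n)) (hx0 : 0 ≤ x) (hx : x < 1)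
    {S : ℝ} (hS : ∀ K, ∑ k ∈ range K, kernelCoeff μ (8 * 2 ^ k) * x ^ 2 ^ k ≤ S) :
    kernelMean μ x ≤ 2 * π * ∑ n ∈ range 4, kernelCoeff μ n +
      (π ^ 2 / 4 + 8 * π * (1 + (2 + E) ^ 2)) * S := by
  have hcoeff (n : ℕ) := (kernelCoeff_pos (μ := μ) n).le
  rw [kernelMean_eq_integral_circleSeries]
  refine (integral_norm_circleSeries_le (M := 1 + E) (summable_ofReal_kernelCoeff_mul_pow hx0 hx)
    (fun k => mul_nonneg (hcoeff _) (by positivity)) (by positivity) (fun k n hkn hnk => ?_)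
    (fun k n hkn hnk => ?_) hS).trans ?_
  · rw [Complex.norm_of_nonneg (mul_nonneg (hcoeff n) (by positivity))]
    exact kernelCoeff_mul_pow_le hx0 hx.le (by omega) hnk.le
  · rw [← Complex.ofReal_sub, Complex.norm_real, Real.norm_eq_abs]
    exact_mod_cast abs_kernelCoeff_mul_pow_sub_le hE0 hE hx0 hx.le Nat.one_le_two_pow hkn hnk
  · rw [← add_assoc, one_add_one_eq_two]
    gcongr with n
    rw [Complex.norm_of_nonneg (mul_nonneg (hcoeff n) (by positivity))]
    exact mul_le_of_le_one_right (hcoeff n) (pow_le_one₀ hx0 hx.le)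

lemma TailDoubling.kernelCoeff_le (hD : TailDoubling μ D) (k : ℕ) :
    kernelCoeff μ (8 * 2 ^ k) ≤ D ^ 5 * dyadicInvTail μ k := by
  have hmoment := evenMoment_pos (μ := μ) (8 * 2 ^ k)
  have htail := hD.tail_le_evenMoment_eight_mul (Nat.one_le_two_pow (n := k))
  push_cast at htail
  rw [kernelCoeff, dyadicInvTail, ← div_eq_mul_inv,
    le_div_iff₀ (tail_pos (one_sub_inv_two_pow_lt_one k)), inv_mul_le_iff₀ (by positivity)]
  linarith

lemma TailDoubling.dyadicInvTail_add_le (hD : TailDoubling μ D) (m j : ℕ) :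
    dyadicInvTail μ (m + j) ≤ D ^ j * dyadicInvTail μ m := by
  rw [dyadicInvTail, dyadicInvTail, ← div_eq_mul_inv,
    le_div_iff₀ (tail_pos (one_sub_inv_two_pow_lt_one m)),
    inv_mul_le_iff₀ (tail_pos (one_sub_inv_two_pow_lt_one _)), mul_comm _ (D ^ j)]
  have ht : (1 : ℝ) / 2 ^ m = 2 ^ j * (1 / 2 ^ (m + j)) := by rw [pow_add]; field_simp
  rw [ht]
  exact hD.tail_le_pow_mul j (by positivity)

lemma TailDoubling.dyadicInvTail_mul_pow_le (hD : TailDoubling μ D) (hx0 : 0 ≤ x) {m : ℕ}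
    (hx : x ≤ 1 - 1 / 2 ^ (m + 1)) (j : ℕ) :
    dyadicInvTail μ (m + 1 + j) * x ^ 2 ^ (m + 1 + j) ≤
      D * dyadicInvTail μ m * (D ^ j * Real.exp (-(2 : ℝ) ^ j)) := by
  have hD0 := hD.pos
  have hm := dyadicInvTail_pos (μ := μ) m
  have hpow : x ^ 2 ^ (m + 1 + j) ≤ Real.exp (-(2 : ℝ) ^ j) := by
    calc x ^ 2 ^ (m + 1 + j) ≤ Real.exp (-(1 / 2 ^ (m + 1))) ^ 2 ^ (m + 1 + j) := by
          gcongr; exact hx.trans (Real.one_sub_le_exp_neg _)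
      _ = Real.exp (-(2 : ℝ) ^ j) := by
          rw [← Real.exp_nat_mul]; congr 1; push_cast; rw [pow_add _ (m + 1) j]; field_simp
  calc dyadicInvTail μ (m + 1 + j) * x ^ 2 ^ (m + 1 + j)
      ≤ D ^ (j + 1) * dyadicInvTail μ m * Real.exp (-(2 : ℝ) ^ j) := by
        gcongr
        exact (hD.dyadicInvTail_add_le m (j + 1)).trans_eq' (by ring_nf)
    _ = D * dyadicInvTail μ m * (D ^ j * Real.exp (-(2 : ℝ) ^ j)) := by ring

lemma exists_dyadic_bracket (hx0 : 0 ≤ x) (hx : x < 1) :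
    ∃ m : ℕ, 1 - 1 / 2 ^ m ≤ x ∧ x ≤ 1 - 1 / 2 ^ (m + 1) := by
  obtain ⟨m, hle, hlt⟩ := exists_nat_pow_near (x := 1 / (1 - x)) (y := (2 : ℝ))
    (by rw [le_div_iff₀ (by linarith)]; linarith) one_lt_two
  rw [le_one_div (by positivity) (by linarith)] at hle
  rw [one_div_lt (by linarith) (by positivity)] at hlt
  exact ⟨m, by linarith, by linarith⟩

lemma TailDoubling.sum_dyadicInvTail_mul_pow_le (hD : TailDoubling μ D) {A : ℝ}
    (hA : ∀ m, ∑ k ∈ range (m + 1), dyadicInvTail μ k ≤ A * dyadicInvTail μ m)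
    (hx0 : 0 ≤ x) (hx : x < 1) (K : ℕ) :
    ∑ k ∈ range K, dyadicInvTail μ k * x ^ 2 ^ k ≤
      (A + D * ∑' j : ℕ, D ^ j * Real.exp (-(2 : ℝ) ^ j)) * (tail μ x)⁻¹ := by
  have hD0 := hD.pos
  have hpos (k : ℕ) := (dyadicInvTail_pos (μ := μ) k).le
  have hA0 : 0 ≤ A := nonneg_of_mul_nonneg_left
    ((Finset.sum_nonneg fun k _ => hpos k).trans (hA 0)) (dyadicInvTail_pos 0)
  obtain ⟨m, hmx, hxm⟩ := exists_dyadic_bracket hx0 hx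
  calc ∑ k ∈ range K, dyadicInvTail μ k * x ^ 2 ^ k
      ≤ ∑ k ∈ range (m + 1 + K), dyadicInvTail μ k * x ^ 2 ^ k :=
        Finset.sum_le_sum_of_subset_of_nonneg (Finset.range_mono (by omega))
          fun k _ _ => mul_nonneg (hpos k) (by positivity)
    _ ≤ A * dyadicInvTail μ m +
          D * dyadicInvTail μ m * ∑' j : ℕ, D ^ j * Real.exp (-(2 : ℝ) ^ j) := by
        rw [Finset.sum_range_add]
        refine add_le_add (le_trans (Finset.sum_le_sum fun k _ => ?_) (hA m))
          ((Finset.sum_le_sum fun j _ => hD.dyadicInvTail_mul_pow_le hx0 hxm j).trans ?_)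
        · exact mul_le_of_le_one_right (hpos k) (pow_le_one₀ hx0 hx.le)
        · rw [← Finset.mul_sum]
          exact mul_le_mul_of_nonneg_left ((summable_pow_mul_exp_neg_two_pow D).sum_le_tsum _
            fun j _ => by positivity) (mul_nonneg hD0.le (hpos m))
    _ = (A + D * ∑' j : ℕ, D ^ j * Real.exp (-(2 : ℝ) ^ j)) * dyadicInvTail μ m := by ring
    _ ≤ (A + D * ∑' j : ℕ, D ^ j * Real.exp (-(2 : ℝ) ^ j)) * (tail μ x)⁻¹ := by
        refine mul_le_mul_of_nonneg_left (inv_anti₀ (tail_pos hx) (tail_antitone hmx)) ?_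
        exact add_nonneg hA0 (mul_nonneg hD0.le (tsum_nonneg fun j => by positivity))

theorem TailDoubling.exists_kernelMean_le (hD : TailDoubling μ D) {A : ℝ}
    (hA : ∀ m, ∑ k ∈ range (m + 1), dyadicInvTail μ k ≤ A * dyadicInvTail μ m) :
    ∃ C > 0, ∀ x, 0 ≤ x → x < 1 → kernelMean μ x ≤ C * (tail μ x)⁻¹ := by
  obtain ⟨E, hE0, hE⟩ := hD.exists_evenMoment_le_eight_mul
  have hD0 := hD.pos
  have htail0 := tail_pos (μ := μ) zero_lt_one
  set B := A + D * ∑' j : ℕ, D ^ j * Real.exp (-(2 : ℝ) ^ j)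
  set c := π ^ 2 / 4 + 8 * π * (1 + (2 + E) ^ 2)
  have hB : 0 ≤ B := by
    simpa [htail0] using hD.sum_dyadicInvTail_mul_pow_le hA le_rfl zero_lt_one 0
  set s := ∑ n ∈ range 4, kernelCoeff μ n
  have hs : 0 < s := Finset.sum_pos (fun n _ => kernelCoeff_pos n) ⟨0, by simp⟩
  refine ⟨2 * π * s * tail μ 0 + c * (D ^ 5 * B), by positivity, fun x hx0 hx => ?_⟩
  have htail := tail_pos (μ := μ) hx
  calc kernelMean μ x ≤ 2 * π * s + c * (D ^ 5 * (B * (tail μ x)⁻¹)) := by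
        refine kernelMean_le_of_sum_le hE0.le hE hx0 hx fun K => ?_
        calc ∑ k ∈ range K, kernelCoeff μ (8 * 2 ^ k) * x ^ 2 ^ k
            ≤ ∑ k ∈ range K, D ^ 5 * (dyadicInvTail μ k * x ^ 2 ^ k) := by
              simp_rw [← mul_assoc]
              gcongr
              exact hD.kernelCoeff_le _
          _ ≤ D ^ 5 * (B * (tail μ x)⁻¹) := by
              rw [← Finset.mul_sum]
              gcongr
              exact hD.sum_dyadicInvTail_mul_pow_le hA hx0 hx K
    _ ≤ 2 * π * s * (tail μ 0 * (tail μ x)⁻¹) + c * (D ^ 5 * (B * (tail μ x)⁻¹)) := by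
        refine add_le_add_left (le_mul_of_one_le_right (by positivity) ?_) _
        rw [← div_eq_mul_inv, one_le_div htail]
        exact tail_antitone hx0
    _ = (2 * π * s * tail μ 0 + c * (D ^ 5 * B)) * (tail μ x)⁻¹ := by ring

end RadialKernel

section Rearrangement

variable {μ : Measure ℝ} {r x a β : ℝ}

lemma continuous_tail [IsFiniteMeasure μ] [NullSingletonClass μ] : Continuous (tail μ) := by
  have hprim : Continuous fun r => ∫ _ in (0 : ℝ)..r, (1 : ℝ) ∂μ :=
    intervalIntegral.continuous_primitive (fun _ _ => (integrable_const _).intervalIntegrable) 0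
  refine (continuous_const.sub hprim).congr (f := fun r => tail μ 0 - ∫ _ in 0..r, 1 ∂μ) fun r => ?_
  rw [← intervalIntegral.integral_Ioi_sub_Ioi' (integrable_const _) (integrable_const _)]
  simp [tail]

@[fun_prop]
lemma measurable_tail [IsFiniteMeasure μ] : Measurable (tail μ) := tail_antitone.measurable

lemma tail_one [IsRadialMeasure μ] : tail μ 1 = 0 := by
  have : μ (Ioi 1) = 0 := by
    rw [measure_eq_zero_iff_ae_notMem]
    filter_upwards [IsRadialMeasure.ae_mem_Ioo (μ := μ)] with s hs using not_lt.2 hs.2.le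
  simp [tail, Measure.real, this]

lemma measure_univ_eq_ofReal_tail [IsRadialMeasure μ] : μ univ = ENNReal.ofReal (tail μ 0) := by
  rw [ofReal_tail]
  refine measure_congr (Filter.eventuallyEq_set.2 ?_)
  filter_upwards [IsRadialMeasure.ae_mem_Ioo (μ := μ)] with s hs using by simp [hs.1]

lemma exists_tail_eq [IsRadialMeasure μ] {t : ℝ} (ht0 : 0 ≤ t) (ht : t ≤ tail μ 0) :
    ∃ r, tail μ r = t :=
  mem_range_of_exists_le_of_exists_ge continuous_tail ⟨1, tail_one.trans_le ht0⟩ ⟨0, ht⟩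

lemma measure_tail_lt_le [IsRadialMeasure μ] {t : ℝ} (ht0 : 0 ≤ t) (ht : t ≤ tail μ 0) :
    μ {s | tail μ s < t} ≤ ENNReal.ofReal t := by
  obtain ⟨r, rfl⟩ := exists_tail_eq ht0 ht
  rw [ofReal_tail]
  exact measure_mono fun s hs => tail_antitone.reflect_lt hs

lemma le_measure_tail_le [IsRadialMeasure μ] {t : ℝ} (ht0 : 0 ≤ t) (ht : t ≤ tail μ 0) :
    ENNReal.ofReal t ≤ μ {s | tail μ s ≤ t} := by
  obtain ⟨r, rfl⟩ := exists_tail_eq ht0 ht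
  rw [ofReal_tail]
  exact measure_mono fun s hs => tail_antitone (le_of_lt hs)

lemma measure_tail_le [IsRadialMeasure μ] {t : ℝ} (ht0 : 0 ≤ t) (ht : t < tail μ 0) :
    μ {s | tail μ s ≤ t} = ENNReal.ofReal t := by
  refine le_antisymm ?_ (le_measure_tail_le ht0 ht.le)
  have hlim : Filter.Tendsto ENNReal.ofReal (𝓝[>] t) (𝓝 (ENNReal.ofReal t)) :=
    ENNReal.continuous_ofReal.continuousWithinAt
  refine ge_of_tendsto hlim ?_
  filter_upwards [Ioc_mem_nhdsGT ht] with t' ht'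
  exact (measure_mono fun s hs => lt_of_le_of_lt hs ht'.1).trans
    (measure_tail_lt_le (ht0.trans ht'.1.le) ht'.2)

theorem map_tail [IsRadialMeasure μ] :
    μ.map (tail μ) = volume.restrict (Ioc 0 (tail μ 0)) := by
  have : IsFiniteMeasure (μ.map (tail μ)) := Measure.isFiniteMeasure_map μ _
  refine Measure.ext_of_Iic _ _ fun t => ?_
  rw [Measure.map_apply measurable_tail measurableSet_Iic,
    Measure.restrict_apply measurableSet_Iic, inter_comm, Ioc_inter_Iic, Real.volume_Ioc, sub_zero]
  rcases lt_or_ge t 0 with ht | ht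
  · have hempty : tail μ ⁻¹' Iic t = ∅ :=
      eq_empty_of_forall_notMem fun s hs => (ht.trans_le (tail_nonneg s)).not_ge hs
    rw [ENNReal.ofReal_of_nonpos ((min_le_right _ _).trans ht.le), hempty, measure_empty]
  rcases le_or_gt (tail μ 0) t with ht' | ht'
  · rw [min_eq_left ht', ← measure_univ_eq_ofReal_tail]
    refine measure_congr (Filter.eventuallyEq_univ.2 ?_)
    filter_upwards [IsRadialMeasure.ae_mem_Ioo (μ := μ)] with s hs
    exact (tail_antitone hs.1.le).trans ht'
  · rw [min_eq_right ht'.le]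
    exact measure_tail_le ht ht'

lemma lintegral_comp_tail [IsRadialMeasure μ] {G : ℝ → ℝ≥0∞} (hG : Measurable G) :
    ∫⁻ s, G (tail μ s) ∂μ = ∫⁻ y in Ioc 0 (tail μ 0), G y := by
  rw [← map_tail, lintegral_map hG measurable_tail]

lemma tail_restrict_Ioi (r s : ℝ) : tail (μ.restrict (Ioi r)) s = tail μ (max s r) := by
  rw [tail, measureReal_restrict_apply measurableSet_Ioi, Ioi_inter_Ioi, tail]

lemma isRadialMeasure_restrict_Ioi [IsRadialMeasure μ] (hr : r < 1) :
    IsRadialMeasure (μ.restrict (Ioi r)) where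
  ae_mem_Ioo := ae_restrict_of_ae IsRadialMeasure.ae_mem_Ioo
  tail_pos s hs := by
    rw [tail_restrict_Ioi]
    exact tail_pos (max_lt hs hr)

lemma setLIntegral_Ioi_comp_tail [IsRadialMeasure μ] {G : ℝ → ℝ≥0∞} (hG : Measurable G)
    (hr0 : 0 ≤ r) (hr : r < 1) :
    ∫⁻ s in Ioi r, G (tail μ s) ∂μ = ∫⁻ y in Ioc 0 (tail μ r), G y := by
  have := isRadialMeasure_restrict_Ioi (μ := μ) hr
  rw [← max_eq_right hr0, ← tail_restrict_Ioi r 0, ← lintegral_comp_tail hG, max_eq_right hr0]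
  refine setLIntegral_congr_fun measurableSet_Ioi fun s hs => ?_
  rw [tail_restrict_Ioi, max_eq_left (le_of_lt hs)]

lemma setLIntegral_Ioc_rpow (ha : -1 < a) (hx : 0 ≤ x) :
    ∫⁻ y in Ioc 0 x, ENNReal.ofReal y ^ a = ENNReal.ofReal (x ^ (a + 1) / (a + 1)) := by
  have hint : IntegrableOn (fun y : ℝ => y ^ a) (Ioc 0 x) :=
    (intervalIntegrable_iff_integrableOn_Ioc_of_le hx).1
      (intervalIntegral.intervalIntegrable_rpow' ha)
  calc ∫⁻ y in Ioc 0 x, ENNReal.ofReal y ^ a = ∫⁻ y in Ioc 0 x, ENNReal.ofReal (y ^ a) :=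
        setLIntegral_congr_fun measurableSet_Ioc fun y hy => ENNReal.ofReal_rpow_of_pos hy.1
    _ = ENNReal.ofReal (∫ y in Ioc 0 x, y ^ a) := by
        refine (ofReal_integral_eq_lintegral_ofReal hint ?_).symm
        filter_upwards [ae_restrict_mem measurableSet_Ioc] with y hy
        exact Real.rpow_nonneg hy.1.le _
    _ = ENNReal.ofReal (x ^ (a + 1) / (a + 1)) := by
        rw [← intervalIntegral.integral_of_le hx, integral_rpow (Or.inl ha),
          Real.zero_rpow (by linarith), sub_zero]

lemma setLIntegral_Ioc_rpow_eq_top (ha : a ≤ -1) (hx : 0 < x) :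
    ∫⁻ y in Ioc 0 x, ENNReal.ofReal y ^ a = ⊤ := by
  by_contra hfin
  have hint : IntegrableOn (fun y : ℝ => y ^ a) (Ioo 0 x) := by
    refine ⟨by fun_prop, ?_⟩
    rw [hasFiniteIntegral_iff_ofReal]
    · calc ∫⁻ y in Ioo 0 x, ENNReal.ofReal (y ^ a) = ∫⁻ y in Ioo 0 x, ENNReal.ofReal y ^ a :=
            setLIntegral_congr_fun measurableSet_Ioo fun y hy =>
              (ENNReal.ofReal_rpow_of_pos hy.1).symm
        _ ≤ ∫⁻ y in Ioc 0 x, ENNReal.ofReal y ^ a := lintegral_mono_set Ioo_subset_Ioc_self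
        _ < ⊤ := lt_top_iff_ne_top.2 hfin
    · filter_upwards [ae_restrict_mem measurableSet_Ioo] with y hy
      exact Real.rpow_nonneg hy.1.le _
  linarith [(intervalIntegral.integrableOn_Ioo_rpow_iff hx).1 hint]

lemma setLIntegral_Ioi_rpow (ha : a < -1) (hx : 0 < x) :
    ∫⁻ y in Ioi x, ENNReal.ofReal y ^ a = ENNReal.ofReal (x ^ (a + 1) / (-(a + 1))) := by
  calc ∫⁻ y in Ioi x, ENNReal.ofReal y ^ a = ∫⁻ y in Ioi x, ENNReal.ofReal (y ^ a) :=
        setLIntegral_congr_fun measurableSet_Ioi fun y hy =>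
          ENNReal.ofReal_rpow_of_pos (hx.trans hy)
    _ = ENNReal.ofReal (∫ y in Ioi x, y ^ a) := by
        refine (ofReal_integral_eq_lintegral_ofReal (integrableOn_Ioi_rpow_of_lt ha hx) ?_).symm
        filter_upwards [ae_restrict_mem measurableSet_Ioi] with y hy
        exact Real.rpow_nonneg (hx.trans hy).le _
    _ = ENNReal.ofReal (x ^ (a + 1) / (-(a + 1))) := by
        rw [integral_Ioi_rpow_of_lt ha hx, div_neg, neg_div]

lemma setLIntegral_Ioc_inv {b : ℝ} (ha : 0 < a) (hab : a ≤ b) :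
    ∫⁻ y in Ioc a b, (ENNReal.ofReal y)⁻¹ = ENNReal.ofReal (Real.log (b / a)) := by
  have hint : IntervalIntegrable (fun y : ℝ => y⁻¹) volume a b :=
    intervalIntegral.intervalIntegrable_inv
      (fun y hy => (ha.trans_le (uIcc_of_le hab ▸ hy).1).ne') continuousOn_id
  calc ∫⁻ y in Ioc a b, (ENNReal.ofReal y)⁻¹ = ∫⁻ y in Ioc a b, ENNReal.ofReal y⁻¹ :=
        setLIntegral_congr_fun measurableSet_Ioc fun y hy =>
          (ENNReal.ofReal_inv_of_pos (ha.trans hy.1)).symm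
    _ = ENNReal.ofReal (∫ y in Ioc a b, y⁻¹) := by
        refine (ofReal_integral_eq_lintegral_ofReal hint.1 ?_).symm
        filter_upwards [ae_restrict_mem measurableSet_Ioc] with y hy
        exact inv_nonneg.2 (ha.trans hy.1).le
    _ = ENNReal.ofReal (Real.log (b / a)) := by
        rw [← intervalIntegral.integral_of_le hab, integral_inv_of_pos ha (ha.trans_le hab)]

lemma setLIntegral_Ioc_rpow_mul_inv_max (hβ : β < 1) (hx : 0 < x) :
    ∫⁻ y in Ioc 0 x, ENNReal.ofReal y ^ (-β) * (ENNReal.ofReal (max x y))⁻¹ =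
      ENNReal.ofReal (1 / (1 - β)) * ENNReal.ofReal x ^ (-β) := by
  have : 0 < 1 - β := sub_pos.2 hβ
  calc ∫⁻ y in Ioc 0 x, ENNReal.ofReal y ^ (-β) * (ENNReal.ofReal (max x y))⁻¹
      = ∫⁻ y in Ioc 0 x, ENNReal.ofReal y ^ (-β) * ENNReal.ofReal x⁻¹ :=
        setLIntegral_congr_fun measurableSet_Ioc fun y hy => by
          simp only [max_eq_left hy.2, ENNReal.ofReal_inv_of_pos hx]
    _ = ENNReal.ofReal (x ^ (-β + 1) / (-β + 1)) * ENNReal.ofReal x⁻¹ := by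
        rw [lintegral_mul_const' _ _ ENNReal.ofReal_ne_top,
          setLIntegral_Ioc_rpow (by linarith) hx.le]
    _ = ENNReal.ofReal (1 / (1 - β)) * ENNReal.ofReal x ^ (-β) := by
        rw [ENNReal.ofReal_rpow_of_pos hx, ← ENNReal.ofReal_mul' (by positivity),
          ← ENNReal.ofReal_mul (by positivity), Real.rpow_add_one hx.ne',
          show -β + 1 = 1 - β by ring]
        congr 1
        field_simp

lemma setLIntegral_Ioi_rpow_mul_inv_max (hβ : 0 < β) (hx : 0 < x) :
    ∫⁻ y in Ioi x, ENNReal.ofReal y ^ (-β) * (ENNReal.ofReal (max x y))⁻¹ =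
      ENNReal.ofReal (1 / β) * ENNReal.ofReal x ^ (-β) := by
  calc ∫⁻ y in Ioi x, ENNReal.ofReal y ^ (-β) * (ENNReal.ofReal (max x y))⁻¹
      = ∫⁻ y in Ioi x, ENNReal.ofReal y ^ (-β - 1) :=
        setLIntegral_congr_fun measurableSet_Ioi fun y hy => by
          simp only [max_eq_right (mem_Ioi.1 hy).le]
          rw [← ENNReal.rpow_neg_one,
            ← ENNReal.rpow_add _ _ (ENNReal.ofReal_pos.2 (hx.trans hy)).ne' ENNReal.ofReal_ne_top,
            sub_eq_add_neg]
    _ = ENNReal.ofReal (1 / β) * ENNReal.ofReal x ^ (-β) := by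
        rw [setLIntegral_Ioi_rpow (by linarith) hx, ENNReal.ofReal_rpow_of_pos hx,
          ← ENNReal.ofReal_mul (by positivity), sub_add_cancel, neg_neg, one_div_mul_eq_div]

theorem lintegral_tail_rpow_mul_inv_max_le [IsRadialMeasure μ] (hβ0 : 0 < β) (hβ1 : β < 1)
    (hx : 0 < x) :
    ∫⁻ s, ENNReal.ofReal (tail μ s) ^ (-β) * (ENNReal.ofReal (max x (tail μ s)))⁻¹ ∂μ ≤
      ENNReal.ofReal (1 / (1 - β) + 1 / β) * ENNReal.ofReal x ^ (-β) := by
  have : 0 < 1 - β := sub_pos.2 hβ1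
  rw [lintegral_comp_tail
    (G := fun y => ENNReal.ofReal y ^ (-β) * (ENNReal.ofReal (max x y))⁻¹) (by fun_prop)]
  have hsub : Ioc 0 (tail μ 0) ⊆ Ioc 0 x ∪ Ioi x := by
    rw [Ioc_union_Ioi_eq_Ioi hx.le]
    exact Ioc_subset_Ioi_self
  refine ((lintegral_mono_set hsub).trans (lintegral_union_le _ _ _)).trans_eq ?_
  rw [setLIntegral_Ioc_rpow_mul_inv_max hβ1 hx, setLIntegral_Ioi_rpow_mul_inv_max hβ0 hx,
    ENNReal.ofReal_add (by positivity) (by positivity), add_mul]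

end Rearrangement

section SchurTest

variable {X : Type*} [MeasurableSpace X] {μ : Measure X} {p q : ℝ} {C₁ C₂ : ℝ≥0∞}
  {g h v : X → ℝ≥0∞}

lemma mul_eq_rpow_inv_mul_mul (hpq : p.HolderConjugate q) (a b : ℝ≥0∞) {c : ℝ≥0∞} (hc0 : c ≠ 0)
    (hc : c ≠ ⊤) : a * b = a ^ p⁻¹ * (b / c) * (a ^ q⁻¹ * c) := by
  have ha : a ^ p⁻¹ * a ^ q⁻¹ = a := by
    rw [← ENNReal.rpow_add_of_nonneg _ _ hpq.inv_nonneg hpq.symm.inv_nonneg,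
      hpq.inv_add_inv_eq_one, ENNReal.rpow_one]
  calc a * b = a ^ p⁻¹ * a ^ q⁻¹ * (b / c * c) := by rw [ha, ENNReal.div_mul_cancel hc0 hc]
    _ = a ^ p⁻¹ * (b / c) * (a ^ q⁻¹ * c) := by ring

lemma rpow_inv_mul_rpow (hp : 0 < p) (a b : ℝ≥0∞) : (a ^ p⁻¹ * b) ^ p = a * b ^ p := by
  rw [ENNReal.mul_rpow_of_nonneg _ _ hp.le, ENNReal.rpow_inv_rpow hp.ne']

lemma rpow_lintegral_mul_le (hpq : p.HolderConjugate q) {k : X → ℝ≥0∞} (hk : Measurable k)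
    (hg : Measurable g) (hh : Measurable h) (hh0 : ∀ᵐ x ∂μ, h x ≠ 0) (hhtop : ∀ᵐ x ∂μ, h x ≠ ⊤) :
    (∫⁻ x, k x * g x ∂μ) ^ p ≤
      (∫⁻ x, k x * (g x / h x) ^ p ∂μ) * (∫⁻ x, k x * h x ^ q ∂μ) ^ (p - 1) := by
  have hsplit : ∫⁻ x, k x * g x ∂μ =
      ∫⁻ x, (k x ^ p⁻¹ * (g x / h x)) * (k x ^ q⁻¹ * h x) ∂μ := by
    refine lintegral_congr_ae ?_
    filter_upwards [hh0, hhtop] with x hx0 hx using mul_eq_rpow_inv_mul_mul hpq _ _ hx0 hx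
  have holder := ENNReal.lintegral_mul_le_Lp_mul_Lq μ hpq
    (f := fun x => k x ^ p⁻¹ * (g x / h x)) (g := fun x => k x ^ q⁻¹ * h x)
    (by fun_prop) (by fun_prop)
  simp only [Pi.mul_apply, rpow_inv_mul_rpow hpq.pos, rpow_inv_mul_rpow hpq.symm.pos,
    ← hsplit] at holder
  have hexp : 1 / q * p = p - 1 := by
    rw [one_div, ← div_eq_inv_mul, hpq.div_conj_eq_sub_one]
  refine (ENNReal.rpow_le_rpow holder hpq.nonneg).trans_eq ?_
  rw [ENNReal.mul_rpow_of_nonneg _ _ hpq.nonneg, ← ENNReal.rpow_mul, ← ENNReal.rpow_mul,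
    one_div_mul_cancel hpq.ne_zero, ENNReal.rpow_one, hexp]

lemma rpow_lintegral_mul_le_of_lintegral_le (hpq : p.HolderConjugate q) {k : X → ℝ≥0∞}
    (hk : Measurable k) (hg : Measurable g) (hh : Measurable h) (hh0 : ∀ᵐ x ∂μ, h x ≠ 0)
    (hhtop : ∀ᵐ x ∂μ, h x ≠ ⊤) {b : ℝ≥0∞} (hb : ∫⁻ x, k x * h x ^ q ∂μ ≤ C₁ * b ^ q) :
    (∫⁻ x, k x * g x ∂μ) ^ p ≤ C₁ ^ (p - 1) * ∫⁻ x, k x * b ^ p * (g x / h x) ^ p ∂μ := by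
  have hp1 := hpq.sub_one_pos.le
  have hqp : q * (p - 1) = p := by rw [mul_comm, hpq.sub_one_mul_conj]
  calc (∫⁻ x, k x * g x ∂μ) ^ p
      ≤ (∫⁻ x, k x * (g x / h x) ^ p ∂μ) * (C₁ * b ^ q) ^ (p - 1) := by
        refine (rpow_lintegral_mul_le hpq hk hg hh hh0 hhtop).trans ?_
        gcongr
    _ = C₁ ^ (p - 1) * (b ^ p * ∫⁻ x, k x * (g x / h x) ^ p ∂μ) := by
        rw [ENNReal.mul_rpow_of_nonneg _ _ hp1, ← ENNReal.rpow_mul, hqp]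
        ring
    _ = C₁ ^ (p - 1) * ∫⁻ x, k x * b ^ p * (g x / h x) ^ p ∂μ := by
        rw [← lintegral_const_mul _ (by fun_prop)]
        congr! 3
        ring

theorem schur_test [SFinite μ] (hpq : p.HolderConjugate q) {k : X → X → ℝ≥0∞}
    (hk : Measurable (Function.uncurry k)) (hh : Measurable h) (hv : Measurable v)
    (hh0 : ∀ᵐ x ∂μ, h x ≠ 0) (hhtop : ∀ᵐ x ∂μ, h x ≠ ⊤)
    (h₁ : ∀ᵐ x ∂μ, ∫⁻ y, k x y * h y ^ q ∂μ ≤ C₁ * h x ^ q)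
    (h₂ : ∀ᵐ y ∂μ, ∫⁻ x, k x y * (h x ^ p * v x) ∂μ ≤ C₂ * (h y ^ p * v y)) (hg : Measurable g) :
    ∫⁻ x, (∫⁻ y, k x y * g y ∂μ) ^ p * v x ∂μ ≤ C₁ ^ (p - 1) * C₂ * ∫⁻ y, g y ^ p * v y ∂μ := by
  have hjoint : Measurable (Function.uncurry fun x y =>
      k x y * (h x ^ p * v x) * (g y / h y) ^ p) := by
    refine Measurable.mul (Measurable.mul hk ?_) ?_ <;> fun_prop
  have hiterated : Measurable fun x => ∫⁻ y, k x y * (h x ^ p * v x) * (g y / h y) ^ p ∂μ :=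
    hjoint.lintegral_prod_right'
  have hpointwise : ∀ᵐ x ∂μ, (∫⁻ y, k x y * g y ∂μ) ^ p * v x ≤
      C₁ ^ (p - 1) * ∫⁻ y, k x y * (h x ^ p * v x) * (g y / h y) ^ p ∂μ := by
    filter_upwards [h₁] with x hx
    have hkx : Measurable (k x) := hk.of_uncurry_left
    refine (mul_le_mul_left (rpow_lintegral_mul_le_of_lintegral_le hpq hkx hg hh hh0 hhtop hx)
      (v x)).trans_eq ?_
    rw [mul_assoc, ← lintegral_mul_const _ (by fun_prop)]
    congr! 3
    ring
  refine (lintegral_mono_ae hpointwise).trans ?_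
  rw [lintegral_const_mul _ hiterated, lintegral_lintegral_swap hjoint.aemeasurable, mul_assoc,
    ← lintegral_const_mul C₂ (by fun_prop)]
  refine mul_le_mul_right (lintegral_mono_ae ?_) _
  filter_upwards [h₂, hh0, hhtop] with y hy hy0 hytop
  have hky : Measurable fun x => k x y := hk.of_uncurry_right
  calc ∫⁻ x, k x y * (h x ^ p * v x) * (g y / h y) ^ p ∂μ
      ≤ C₂ * (h y ^ p * v y) * (g y / h y) ^ p := by
        rw [lintegral_mul_const _ (by fun_prop)]
        gcongr
    _ = C₂ * ((g y / h y * h y) ^ p * v y) := by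
        rw [ENNReal.mul_rpow_of_nonneg _ _ hpq.nonneg]
        ring
    _ = C₂ * (g y ^ p * v y) := by rw [ENNReal.div_mul_cancel hy0 hytop]

end SchurTest

section DiscMeasure

/-- The rotation-invariant measure `s ↦ dμ(s) dθ` on the plane. For `μ = s ω(s) ds` it is `ω`
times Lebesgue measure on the disc. -/
def discMeasure (μ : Measure ℝ) : Measure ℂ :=
  (μ.prod (volume.restrict (Ioc (-π) π))).map fun q => q.1 * Circle.exp q.2

variable {μ : Measure ℝ} {G : ℂ → ℝ≥0∞} {φ : ℝ → ℝ≥0∞}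

lemma norm_ofReal_mul_circleExp (s θ : ℝ) : ‖(s * Circle.exp θ : ℂ)‖ = |s| := by
  rw [norm_mul, Circle.norm_coe, mul_one, Complex.norm_real, Real.norm_eq_abs]

lemma measurable_ofReal_mul_circleExp :
    Measurable fun q : ℝ × ℝ => (q.1 * Circle.exp q.2 : ℂ) := by
  have : Continuous fun q : ℝ × ℝ => (q.1 * Circle.exp q.2 : ℂ) := by fun_prop
  exact this.measurable

instance [SFinite μ] : SFinite (discMeasure μ) := by
  rw [discMeasure]
  infer_instance

lemma lintegral_discMeasure (hG : Measurable G) :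
    ∫⁻ z, G z ∂discMeasure μ = ∫⁻ s, (∫⁻ θ in Ioc (-π) π, G (s * Circle.exp θ)) ∂μ :=
  (lintegral_map hG measurable_ofReal_mul_circleExp).trans
    (lintegral_prod _ (hG.comp measurable_ofReal_mul_circleExp).aemeasurable)

lemma map_norm_discMeasure (hμ : ∀ᵐ s ∂μ, 0 ≤ s) :
    (discMeasure μ).map norm = ENNReal.ofReal (2 * π) • μ := by
  have hnorm : (norm ∘ fun q : ℝ × ℝ => (q.1 * Circle.exp q.2 : ℂ)) = abs ∘ Prod.fst :=
    funext fun q => norm_ofReal_mul_circleExp q.1 q.2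
  have habs : μ.map abs = μ := by
    refine (Measure.map_congr ?_).trans Measure.map_id
    filter_upwards [hμ] with s hs using abs_of_nonneg hs
  rw [discMeasure, Measure.map_map measurable_norm measurable_ofReal_mul_circleExp, hnorm,
    ← Measure.map_map (by fun_prop) measurable_fst, Measure.map_fst_prod, Measure.map_smul, habs,
    Measure.restrict_apply_univ, Real.volume_Ioc, sub_neg_eq_add, two_mul]

lemma lintegral_comp_norm_discMeasure (hμ : ∀ᵐ s ∂μ, 0 ≤ s) (hφ : Measurable φ) :
    ∫⁻ z, φ ‖z‖ ∂discMeasure μ = ENNReal.ofReal (2 * π) * ∫⁻ s, φ s ∂μ := by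
  rw [← lintegral_map hφ measurable_norm, map_norm_discMeasure hμ, lintegral_smul_measure,
    smul_eq_mul]

lemma quasiMeasurePreserving_norm_discMeasure (hμ : ∀ᵐ s ∂μ, 0 ≤ s) :
    Measure.QuasiMeasurePreserving (norm : ℂ → ℝ) (discMeasure μ) μ :=
  ⟨measurable_norm, map_norm_discMeasure hμ ▸ Measure.smul_absolutelyContinuous⟩

lemma ae_nonneg_of_isRadialMeasure [IsRadialMeasure μ] : ∀ᵐ s ∂μ, 0 ≤ s := by
  filter_upwards [IsRadialMeasure.ae_mem_Ioo (μ := μ)] with s hs using hs.1.le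

lemma ae_discMeasure_norm_lt_one [IsRadialMeasure μ] : ∀ᵐ z ∂discMeasure μ, ‖z‖ < 1 :=
  (quasiMeasurePreserving_norm_discMeasure ae_nonneg_of_isRadialMeasure).ae
    (IsRadialMeasure.ae_mem_Ioo.mono fun _ hs => hs.2)

lemma discMeasure_withDensity (hμ : ∀ᵐ s ∂μ, 0 ≤ s) (hφ : AEMeasurable φ μ) :
    discMeasure (μ.withDensity φ) = (discMeasure μ).withDensity fun z => φ ‖z‖ := by
  obtain ⟨ψ, hψ, hφψ⟩ := hφ
  have hnorm : (fun z : ℂ => φ ‖z‖) =ᵐ[discMeasure μ] fun z => ψ ‖z‖ :=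
    (quasiMeasurePreserving_norm_discMeasure hμ).ae_eq hφψ
  rw [withDensity_congr_ae hφψ, withDensity_congr_ae hnorm]
  refine Measure.ext_of_lintegral _ fun G hG => ?_
  have hcirc : Measurable fun s : ℝ => ∫⁻ θ in Ioc (-π) π, G (s * Circle.exp θ) :=
    (hG.comp measurable_ofReal_mul_circleExp).lintegral_prod_right'
  rw [lintegral_withDensity_eq_lintegral_mul _ (by fun_prop) hG, lintegral_discMeasure hG,
    lintegral_withDensity_eq_lintegral_mul _ hψ hcirc, lintegral_discMeasure (by fun_prop)]
  refine lintegral_congr_ae ?_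
  filter_upwards [hμ] with s hs
  simp only [Pi.mul_apply, norm_ofReal_mul_circleExp, abs_of_nonneg hs]
  exact (lintegral_const_mul _ (hG.comp (measurable_ofReal_mul_circleExp.comp
    measurable_prodMk_left))).symm

lemma discMeasure_withDensity_ofReal :
    discMeasure ((volume.restrict (Ioo 0 1)).withDensity ENNReal.ofReal) =
      volume.restrict (ball 0 1) := by
  refine Measure.ext_of_lintegral _ fun G hG => ?_
  have hpolar (q : ℝ × ℝ) : Complex.polarCoord.symm q = q.1 * Circle.exp q.2 := by
    rw [Complex.polarCoord_symm_apply, Circle.coe_exp, Complex.exp_mul_I]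
    push_cast
    rfl
  have hmeas : Measurable fun q : ℝ × ℝ =>
      ENNReal.ofReal q.1 * (ball 0 1).indicator G (q.1 * Circle.exp q.2) :=
    measurable_fst.ennreal_ofReal.mul
      ((hG.indicator measurableSet_ball).comp measurable_ofReal_mul_circleExp)
  have hcirc : Measurable fun s : ℝ => ∫⁻ θ in Ioc (-π) π, G (s * Circle.exp θ) :=
    (hG.comp measurable_ofReal_mul_circleExp).lintegral_prod_right'
  rw [lintegral_discMeasure hG, lintegral_withDensity_eq_lintegral_mul _ (by fun_prop) hcirc,
    ← lintegral_indicator measurableSet_ball, ← Complex.lintegral_comp_polarCoord_symm]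
  simp only [hpolar, polarCoord_target, smul_eq_mul]
  rw [Measure.volume_eq_prod, ← Measure.prod_restrict, lintegral_prod _ hmeas.aemeasurable,
    ← Ioi_inter_Iio, inter_comm, ← Measure.restrict_restrict measurableSet_Iio,
    ← lintegral_indicator measurableSet_Iio]
  refine setLIntegral_congr_fun measurableSet_Ioi fun r hr => ?_
  have hmem (θ : ℝ) : (r * Circle.exp θ : ℂ) ∈ ball 0 1 ↔ r ∈ Iio 1 := by
    rw [mem_ball_zero_iff, norm_ofReal_mul_circleExp, abs_of_pos hr, mem_Iio]
  simp only [lintegral_const_mul' _ _ ENNReal.ofReal_ne_top, indicator, hmem, Pi.mul_apply]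
  split_ifs
  · rw [restrict_Ioo_eq_restrict_Ioc]
  · rw [lintegral_zero, mul_zero]

end DiscMeasure

section KernelModulus

open scoped ComplexConjugate

variable {μ : Measure ℝ} {z ξ : ℂ} {s : ℝ}

/-- The modulus of the kernel, cut off to the unit disc so that it is measurable. -/
def kernelAbs (μ : Measure ℝ) (ξ : ℂ) : ℝ≥0∞ := (ball 0 1).indicator (‖radialKernel μ ·‖ₑ) ξ

lemma kernelAbs_of_norm_lt_one (hξ : ‖ξ‖ < 1) : kernelAbs μ ξ = ‖radialKernel μ ξ‖ₑ :=
  indicator_of_mem (mem_ball_zero_iff.2 hξ) _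

@[fun_prop]
lemma measurable_kernelAbs [IsRadialMeasure μ] : Measurable (kernelAbs μ) := by
  classical
  have hpiece := continuousOn_radialKernel (μ := μ).enorm.measurable_piecewise
    (g := 0) continuousOn_const measurableSet_ball
  rwa [piecewise_eq_indicator] at hpiece

lemma kernelAbs_conj (ξ : ℂ) : kernelAbs μ (conj ξ) = kernelAbs μ ξ := by
  have hker : radialKernel μ (conj ξ) = conj (radialKernel μ ξ) := by
    simp only [radialKernel, Complex.conj_tsum, map_mul, map_pow, Complex.conj_ofReal]
  simp only [kernelAbs, indicator, mem_ball_zero_iff, RCLike.norm_conj, hker]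
  congr 1
  simp [enorm]

lemma kernelAbs_conj_mul_comm (z ζ : ℂ) : kernelAbs μ (conj z * ζ) = kernelAbs μ (conj ζ * z) := by
  rw [← kernelAbs_conj, map_mul, Complex.conj_conj, mul_comm]

lemma conj_mul_ofReal_mul_circleExp (z : ℂ) (s θ : ℝ) :
    conj z * (s * Circle.exp θ) = ((‖z‖ * s : ℝ) : ℂ) * Circle.exp (θ - z.arg) := by
  conv_lhs => rw [← Complex.norm_mul_exp_arg_mul_I z]
  simp only [Circle.coe_exp, map_mul, Complex.conj_ofReal, ← Complex.exp_conj, Complex.conj_I]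
  push_cast
  rw [sub_mul, sub_eq_add_neg, Complex.exp_add, mul_neg]
  ring

lemma lintegral_circle_kernelAbs [IsRadialMeasure μ] (hz : ‖z‖ < 1) (hs0 : 0 ≤ s) (hs : s < 1) :
    ∫⁻ θ in Ioc (-π) π, kernelAbs μ (conj z * (s * Circle.exp θ)) =
      ENNReal.ofReal (kernelMean μ (‖z‖ * s)) := by
  have hx0 : 0 ≤ ‖z‖ * s := by positivity
  have hnorm (θ : ℝ) : ‖(((‖z‖ * s : ℝ) : ℂ) * Circle.exp θ)‖ < 1 := by
    rw [norm_ofReal_mul_circleExp, abs_of_nonneg hx0]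
    exact mul_lt_one_of_nonneg_of_lt_one_left (norm_nonneg z) hz hs.le
  have hcont : Continuous fun θ =>
      radialKernel μ (((‖z‖ * s : ℝ) : ℂ) * Circle.exp (θ - z.arg)) :=
    continuousOn_radialKernel.comp_continuous (by fun_prop) fun θ =>
      mem_ball_zero_iff.2 (hnorm _)
  simp only [conj_mul_ofReal_mul_circleExp, kernelAbs_of_norm_lt_one (hnorm _)]
  rw [← ofReal_integral_norm_eq_lintegral_enorm (hcont.integrableOn_Ioc),
    ← intervalIntegral.integral_of_le (by linarith [Real.pi_pos]),
    intervalIntegral.integral_comp_sub_right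
      (fun θ => ‖radialKernel μ (((‖z‖ * s : ℝ) : ℂ) * Circle.exp θ)‖),
    ← integral_norm_radialKernel_eq_kernelMean _ (-π - z.arg)]
  congr! 2
  ring

end KernelModulus

section MaximalOperator

open scoped ComplexConjugate

/-- The maximal Bergman projection of a nonnegative function, with respect to the measure
`discMeasure μ` and hence without the factor `1 / π`. -/
def maximalOp (μ : Measure ℝ) (g : ℂ → ℝ≥0∞) (z : ℂ) : ℝ≥0∞ :=
  ∫⁻ ζ, kernelAbs μ (conj z * ζ) * g ζ ∂discMeasure μ

/-- The `p`-th power of the norm of `g` in `L^p_ν` for `ν = ω ω̂₁^α`, up to the factor `1 / π`. -/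
def weightedMass (μ : Measure ℝ) (p α : ℝ) (g : ℂ → ℝ≥0∞) : ℝ≥0∞ :=
  ∫⁻ z, g z ^ p * ENNReal.ofReal (tail μ ‖z‖) ^ α ∂discMeasure μ

/-- Boundedness of `maximalOp μ` on `L^p_ν`, `ν = ω ω̂₁^α`, tested on nonnegative functions. -/
def MaximalOpBounded (μ : Measure ℝ) (p α : ℝ) : Prop :=
  ∃ C ≠ ⊤, ∀ g, Measurable g → weightedMass μ p α (maximalOp μ g) ≤ C * weightedMass μ p α g

variable {μ : Measure ℝ} {p q α β C : ℝ} {g : ℂ → ℝ≥0∞} {φ : ℝ → ℝ≥0∞} {z : ℂ}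

lemma weightedMass_congr_ae {g₁ g₂ : ℂ → ℝ≥0∞} (h : g₁ =ᵐ[discMeasure μ] g₂) :
    weightedMass μ p α g₁ = weightedMass μ p α g₂ := by
  refine lintegral_congr_ae ?_
  filter_upwards [h] with z hz
  rw [hz]

lemma maximalOp_congr_ae {g₁ g₂ : ℂ → ℝ≥0∞} (h : g₁ =ᵐ[discMeasure μ] g₂) :
    maximalOp μ g₁ = maximalOp μ g₂ := by
  refine funext fun z => lintegral_congr_ae ?_
  filter_upwards [h] with ζ hζ
  rw [hζ]

lemma weightedMass_div_const (hp : 0 ≤ p) {c : ℝ≥0∞} (hc : c ≠ 0) (g : ℂ → ℝ≥0∞) :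
    weightedMass μ p α (fun z => g z / c) = weightedMass μ p α g / c ^ p := by
  have hcp : (c ^ p)⁻¹ ≠ ⊤ := by
    rw [← ENNReal.inv_rpow]
    exact ENNReal.rpow_ne_top_of_nonneg hp (ENNReal.inv_ne_top.2 hc)
  rw [weightedMass, weightedMass, div_eq_mul_inv, ← lintegral_mul_const' _ _ hcp]
  refine lintegral_congr fun z => ?_
  rw [ENNReal.div_rpow_of_nonneg _ _ hp, div_eq_mul_inv, mul_right_comm]

variable [IsRadialMeasure μ]

lemma ofReal_tail_ne_zero {r : ℝ} (hr : r < 1) : ENNReal.ofReal (tail μ r) ≠ 0 :=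
  (ENNReal.ofReal_pos.2 (tail_pos hr)).ne'

lemma ae_lt_top_of_weightedMass_lt_top (hp : 0 < p) (hg : Measurable g)
    (hfin : weightedMass μ p α g < ⊤) : ∀ᵐ z ∂discMeasure μ, g z < ⊤ := by
  have hmeas : Measurable fun z : ℂ => g z ^ p * ENNReal.ofReal (tail μ ‖z‖) ^ α := by fun_prop
  filter_upwards [ae_lt_top hmeas hfin.ne, ae_discMeasure_norm_lt_one] with z hz hz1
  by_contra hgz
  refine hz.ne ?_
  rw [not_lt_top_iff.1 hgz, ENNReal.top_rpow_of_pos hp, ENNReal.top_mul]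
  exact (ENNReal.rpow_pos (ofReal_tail_ne_zero hz1).bot_lt ENNReal.ofReal_ne_top).ne'

lemma tail_rpow_mul_rpow (hp : p ≠ 0) {r : ℝ} (hr : r < 1) (c α : ℝ) :
    (ENNReal.ofReal (tail μ r) ^ (-(c / p))) ^ p * ENNReal.ofReal (tail μ r) ^ α =
      ENNReal.ofReal (tail μ r) ^ (-(c - α)) := by
  rw [← ENNReal.rpow_mul, neg_mul, div_mul_cancel₀ _ hp,
    ← ENNReal.rpow_add _ _ (ofReal_tail_ne_zero hr) ENNReal.ofReal_ne_top, neg_sub, neg_add_eq_sub]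

lemma maximalOp_comp_norm (hφ : Measurable φ) (hz : ‖z‖ < 1) :
    maximalOp μ (fun ζ => φ ‖ζ‖) z =
      ∫⁻ s, ENNReal.ofReal (kernelMean μ (‖z‖ * s)) * φ s ∂μ := by
  rw [maximalOp, lintegral_discMeasure (by fun_prop)]
  refine lintegral_congr_ae ?_
  filter_upwards [IsRadialMeasure.ae_mem_Ioo (μ := μ)] with s hs
  have hcont : Continuous fun θ : ℝ => conj z * (s * Circle.exp θ) := by fun_prop
  simp only [norm_ofReal_mul_circleExp, abs_of_pos hs.1]
  rw [← lintegral_circle_kernelAbs hz hs.1.le hs.2]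
  exact lintegral_mul_const _ (measurable_kernelAbs.comp hcont.measurable)

lemma weightedMass_comp_norm (hφ : Measurable φ) :
    weightedMass μ p α (fun z => φ ‖z‖) =
      ENNReal.ofReal (2 * π) * ∫⁻ s, φ s ^ p * ENNReal.ofReal (tail μ s) ^ α ∂μ :=
  lintegral_comp_norm_discMeasure (φ := fun s => φ s ^ p * ENNReal.ofReal (tail μ s) ^ α)
    ae_nonneg_of_isRadialMeasure (by fun_prop)

lemma kernelMean_mul_le (hmean : ∀ x, 0 ≤ x → x < 1 → kernelMean μ x ≤ C * (tail μ x)⁻¹)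
    (hC : 0 ≤ C) {x s : ℝ} (hx0 : 0 ≤ x) (hx : x < 1) (hs : s ∈ Ioo (0 : ℝ) 1) :
    kernelMean μ (x * s) ≤ C * (max (tail μ x) (tail μ s))⁻¹ := by
  have hxs : x * s < 1 := mul_lt_one_of_nonneg_of_lt_one_left hx0 hx hs.2.le
  have hmax : max (tail μ x) (tail μ s) ≤ tail μ (x * s) :=
    max_le (tail_antitone (mul_le_of_le_one_right hx0 hs.2.le))
      (tail_antitone (mul_le_of_le_one_left hs.1.le hx.le))
  have hpos : 0 < max (tail μ x) (tail μ s) := lt_max_of_lt_left (tail_pos hx)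
  calc kernelMean μ (x * s) ≤ C * (tail μ (x * s))⁻¹ := hmean _ (mul_nonneg hx0 hs.1.le) hxs
    _ ≤ C * (max (tail μ x) (tail μ s))⁻¹ := by gcongr

theorem maximalOp_tail_rpow_le (hmean : ∀ x, 0 ≤ x → x < 1 → kernelMean μ x ≤ C * (tail μ x)⁻¹)
    (hC : 0 ≤ C) (hβ0 : 0 < β) (hβ1 : β < 1) (hz : ‖z‖ < 1) :
    maximalOp μ (fun ζ => ENNReal.ofReal (tail μ ‖ζ‖) ^ (-β)) z ≤
      ENNReal.ofReal (C * (1 / (1 - β) + 1 / β)) * ENNReal.ofReal (tail μ ‖z‖) ^ (-β) := by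
  rw [maximalOp_comp_norm (φ := fun s => ENNReal.ofReal (tail μ s) ^ (-β)) (by fun_prop) hz]
  calc ∫⁻ s, ENNReal.ofReal (kernelMean μ (‖z‖ * s)) * ENNReal.ofReal (tail μ s) ^ (-β) ∂μ
      ≤ ∫⁻ s, ENNReal.ofReal C * (ENNReal.ofReal (tail μ s) ^ (-β) *
          (ENNReal.ofReal (max (tail μ ‖z‖) (tail μ s)))⁻¹) ∂μ := by
        refine lintegral_mono_ae ?_
        filter_upwards [IsRadialMeasure.ae_mem_Ioo (μ := μ)] with s hs
        rw [← ENNReal.ofReal_inv_of_pos (lt_max_of_lt_left (tail_pos hz)), mul_left_comm, mul_comm,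
          ← ENNReal.ofReal_mul hC]
        gcongr
        exact kernelMean_mul_le hmean hC (norm_nonneg z) hz hs
    _ ≤ ENNReal.ofReal C * (ENNReal.ofReal (1 / (1 - β) + 1 / β) *
          ENNReal.ofReal (tail μ ‖z‖) ^ (-β)) := by
        rw [lintegral_const_mul' _ _ ENNReal.ofReal_ne_top]
        gcongr
        exact lintegral_tail_rpow_mul_inv_max_le hβ0 hβ1 (tail_pos hz)
    _ = ENNReal.ofReal (C * (1 / (1 - β) + 1 / β)) * ENNReal.ofReal (tail μ ‖z‖) ^ (-β) := by
        rw [ENNReal.ofReal_mul hC, mul_assoc]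

theorem maximalOpBounded_of_kernelMean_le
    (hmean : ∀ x, 0 ≤ x → x < 1 → kernelMean μ x ≤ C * (tail μ x)⁻¹) (hC : 0 ≤ C)
    (hp : 1 < p) (hα : -1 < α) (hαp : α < p - 1) : MaximalOpBounded μ p α := by
  have hp1 : 0 < p - 1 := sub_pos.2 hp
  have hpq : p.HolderConjugate (p / (p - 1)) := .conjExponent hp
  obtain ⟨c, hc, hc'⟩ : ∃ c, max 0 α < c ∧ c < min (p - 1) (1 + α) :=
    exists_between (max_lt (lt_min hp1 (by linarith)) (lt_min hαp (by linarith)))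
  obtain ⟨hc0, hcα⟩ := max_lt_iff.1 hc
  obtain ⟨hcp, hcα'⟩ := lt_min_iff.1 hc'
  have htest (x : ℂ) : (ENNReal.ofReal (tail μ ‖x‖) ^ (-(c / p))) ^ (p / (p - 1)) =
      ENNReal.ofReal (tail μ ‖x‖) ^ (-(c / (p - 1))) := by
    rw [← ENNReal.rpow_mul, neg_mul, div_mul_div_cancel₀ hpq.ne_zero]
  refine ⟨_, ?_, fun g hg => schur_test hpq (k := fun z ζ => kernelAbs μ (conj z * ζ))
    (h := fun x => ENNReal.ofReal (tail μ ‖x‖) ^ (-(c / p)))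
    (C₁ := ENNReal.ofReal (C * (1 / (1 - c / (p - 1)) + 1 / (c / (p - 1)))))
    (C₂ := ENNReal.ofReal (C * (1 / (1 - (c - α)) + 1 / (c - α))))
    ?_ (by fun_prop) (by fun_prop) ?_ ?_ ?_ ?_ hg⟩
  · exact ENNReal.mul_ne_top (ENNReal.rpow_ne_top_of_nonneg hp1.le ENNReal.ofReal_ne_top)
      ENNReal.ofReal_ne_top
  · have hcont : Continuous fun x : ℂ × ℂ => conj x.1 * x.2 := by fun_prop
    exact measurable_kernelAbs.comp hcont.measurable
  · filter_upwards [ae_discMeasure_norm_lt_one] with x hx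
    exact (ENNReal.rpow_pos (ENNReal.ofReal_pos.2 (tail_pos hx)) ENNReal.ofReal_ne_top).ne'
  · filter_upwards [ae_discMeasure_norm_lt_one] with x hx
    exact ENNReal.rpow_ne_top_of_ne_zero (ofReal_tail_ne_zero hx) ENNReal.ofReal_ne_top
  · filter_upwards [ae_discMeasure_norm_lt_one] with z hz
    simp only [htest]
    exact maximalOp_tail_rpow_le hmean hC (div_pos hc0 hp1) ((div_lt_one hp1).2 hcp) hz
  · filter_upwards [ae_discMeasure_norm_lt_one] with ζ hζ
    rw [tail_rpow_mul_rpow hpq.ne_zero hζ]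
    refine le_trans (lintegral_mono_ae ?_) (maximalOp_tail_rpow_le hmean hC (sub_pos.2 hcα)
      (by linarith) hζ)
    filter_upwards [ae_discMeasure_norm_lt_one] with z hz
    rw [tail_rpow_mul_rpow hpq.ne_zero hz, kernelAbs_conj_mul_comm]

lemma lintegral_lt_top_of_weightedMass_lt_top (hp : 1 < p) (hαp : α < p - 1) (hg : Measurable g)
    (hfin : weightedMass μ p α g < ⊤) : ∫⁻ z, g z ∂discMeasure μ < ⊤ := by
  have hp1 : 0 < p - 1 := sub_pos.2 hp
  have hpq : p.HolderConjugate (p / (p - 1)) := .conjExponent hp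
  have holder := ENNReal.lintegral_mul_le_Lp_mul_Lq (discMeasure μ) hpq
    (f := fun z => g z * ENNReal.ofReal (tail μ ‖z‖) ^ (α / p))
    (g := fun z => ENNReal.ofReal (tail μ ‖z‖) ^ (-(α / p))) (by fun_prop) (by fun_prop)
  have hsplit : ∫⁻ z, g z ∂discMeasure μ = ∫⁻ z, (g z * ENNReal.ofReal (tail μ ‖z‖) ^ (α / p)) *
      ENNReal.ofReal (tail μ ‖z‖) ^ (-(α / p)) ∂discMeasure μ := by
    refine lintegral_congr_ae ?_
    filter_upwards [ae_discMeasure_norm_lt_one] with z hz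
    rw [mul_assoc, ← ENNReal.rpow_add _ _ (ofReal_tail_ne_zero hz) ENNReal.ofReal_ne_top,
      add_neg_cancel, ENNReal.rpow_zero, mul_one]
  have hmass : ∫⁻ z, (g z * ENNReal.ofReal (tail μ ‖z‖) ^ (α / p)) ^ p ∂discMeasure μ =
      weightedMass μ p α g := by
    simp only [ENNReal.mul_rpow_of_nonneg _ _ hpq.nonneg, ← ENNReal.rpow_mul,
      div_mul_cancel₀ _ hpq.ne_zero, weightedMass]
  have hdual : ∫⁻ z, (ENNReal.ofReal (tail μ ‖z‖) ^ (-(α / p))) ^ (p / (p - 1)) ∂discMeasure μ <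
      ⊤ := by
    have hexp : -1 < -(α / (p - 1)) := neg_lt_neg ((div_lt_one hp1).2 hαp)
    simp only [← ENNReal.rpow_mul, neg_mul, div_mul_div_cancel₀ hpq.ne_zero]
    rw [lintegral_comp_norm_discMeasure (φ := fun s => ENNReal.ofReal (tail μ s) ^ _)
        ae_nonneg_of_isRadialMeasure (by fun_prop),
      lintegral_comp_tail (G := fun y => ENNReal.ofReal y ^ _) (by fun_prop),
      setLIntegral_Ioc_rpow hexp (tail_nonneg 0)]
    exact ENNReal.mul_lt_top ENNReal.ofReal_lt_top ENNReal.ofReal_lt_top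
  simp only [Pi.mul_apply, ← hsplit, hmass] at holder
  exact holder.trans_lt (ENNReal.mul_lt_top
    (ENNReal.rpow_lt_top_of_nonneg hpq.one_div_nonneg hfin.ne)
    (ENNReal.rpow_lt_top_of_nonneg hpq.symm.one_div_nonneg hdual.ne))

lemma exists_kernelAbs_conj_mul_le (hz : ‖z‖ < 1) :
    ∃ M : ℝ, ∀ ζ, ‖ζ‖ < 1 → kernelAbs μ (conj z * ζ) ≤ ENNReal.ofReal M := by
  have hsub : closedBall (0 : ℂ) ‖z‖ ⊆ ball 0 1 := closedBall_subset_ball hz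
  obtain ⟨M, hM⟩ := (isCompact_closedBall (0 : ℂ) ‖z‖).exists_bound_of_continuousOn
    (continuousOn_radialKernel (μ := μ) |>.mono hsub)
  refine ⟨M, fun ζ hζ => ?_⟩
  have hmem : conj z * ζ ∈ closedBall 0 ‖z‖ := by
    rw [mem_closedBall_zero_iff, norm_mul, RCLike.norm_conj]
    exact mul_le_of_le_one_right (norm_nonneg z) hζ.le
  rw [kernelAbs_of_norm_lt_one (mem_ball_zero_iff.1 (hsub hmem)), ← ofReal_norm]
  exact ENNReal.ofReal_le_ofReal (hM _ hmem)

theorem maximalOp_lt_top (hp : 1 < p) (hαp : α < p - 1) (hg : Measurable g)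
    (hfin : weightedMass μ p α g < ⊤) (hz : ‖z‖ < 1) : maximalOp μ g z < ⊤ := by
  obtain ⟨M, hM⟩ := exists_kernelAbs_conj_mul_le (μ := μ) hz
  calc maximalOp μ g z ≤ ∫⁻ ζ, ENNReal.ofReal M * g ζ ∂discMeasure μ := by
        refine lintegral_mono_ae ?_
        filter_upwards [ae_discMeasure_norm_lt_one] with ζ hζ
        gcongr
        exact hM ζ hζ
    _ = ENNReal.ofReal M * ∫⁻ ζ, g ζ ∂discMeasure μ :=
        lintegral_const_mul' _ _ ENNReal.ofReal_ne_top
    _ < ⊤ := ENNReal.mul_lt_top ENNReal.ofReal_lt_top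
        (lintegral_lt_top_of_weightedMass_lt_top hp hαp hg hfin)

end MaximalOperator

section Necessity

variable {μ : Measure ℝ} [IsRadialMeasure μ] {p α x δ r : ℝ}

lemma two_pi_mul_kernelCoeff_zero_le_kernelMean (hx0 : 0 ≤ x) (hx : x < 1) :
    2 * π * kernelCoeff μ 0 ≤ kernelMean μ x := by
  have hmean := two_pi_mul_norm_coeff_zero_le
    (summable_ofReal_kernelCoeff_mul_pow (μ := μ) hx0 hx)
  rwa [pow_zero, mul_one, Complex.norm_real, Real.norm_of_nonneg (kernelCoeff_pos 0).le,
    ← kernelMean_eq_integral_circleSeries] at hmean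

lemma two_mul_sum_kernelCoeff_mul_pow_div_le_kernelMean (hx0 : 0 ≤ x) (hx : x < 1)
    (t : Finset ℕ) : 2 * ∑ n ∈ t, kernelCoeff μ n * x ^ n / n ≤ kernelMean μ x := by
  rw [kernelMean_eq_integral_circleSeries]
  exact two_mul_sum_div_le_integral_norm_circleSeries
    (fun n => mul_nonneg (kernelCoeff_pos n).le (pow_nonneg hx0 n))
    (summable_kernelCoeff_mul_pow hx0 hx) t

lemma MaximalOpBounded.exists_lintegral_kernelMean_rpow_le (h : MaximalOpBounded μ p α) :
    ∃ C ≠ ⊤, ∀ φ : ℝ → ℝ≥0∞, Measurable φ →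
      ∫⁻ r, (∫⁻ s, ENNReal.ofReal (kernelMean μ (r * s)) * φ s ∂μ) ^ p *
          ENNReal.ofReal (tail μ r) ^ α ∂μ ≤
        C * ∫⁻ s, φ s ^ p * ENNReal.ofReal (tail μ s) ^ α ∂μ := by
  obtain ⟨C, hC, hbound⟩ := h
  refine ⟨C, hC, fun φ hφ => ?_⟩
  have hpi : ENNReal.ofReal (2 * π) ≠ 0 := (ENNReal.ofReal_pos.2 Real.two_pi_pos).ne'
  rw [← ENNReal.mul_le_mul_iff_right hpi ENNReal.ofReal_ne_top, mul_left_comm,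
    ← weightedMass_comp_norm hφ, ← smul_eq_mul, ← lintegral_smul_measure,
    ← map_norm_discMeasure ae_nonneg_of_isRadialMeasure]
  refine (lintegral_map_le _ _).trans (le_trans ?_ (hbound _ (by fun_prop)))
  refine lintegral_mono_ae ?_
  filter_upwards [ae_discMeasure_norm_lt_one] with z hz
  rw [maximalOp_comp_norm hφ hz]

lemma lintegral_indicator_inv_tail (hδ : 0 < δ) (hδX : δ ≤ tail μ 0) :
    ∫⁻ s, (Ioi δ).indicator (fun y => (ENNReal.ofReal y)⁻¹) (tail μ s) ∂μ =
      ENNReal.ofReal (Real.log (tail μ 0 / δ)) := by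
  have hinter : Ioi δ ∩ Ioc 0 (tail μ 0) = Ioc δ (tail μ 0) := by
    rw [inter_comm, Ioc_inter_Ioi, max_eq_right hδ.le]
  rw [lintegral_comp_tail (Measurable.indicator (by fun_prop) measurableSet_Ioi),
    lintegral_indicator measurableSet_Ioi, Measure.restrict_restrict measurableSet_Ioi, hinter,
    setLIntegral_Ioc_inv hδ hδX]

lemma lintegral_indicator_inv_tail_rpow_le (hp : 0 < p) (hpα : p - 1 ≤ α) (hδ : 0 < δ)
    (hδX : δ ≤ tail μ 0) :
    ∫⁻ s, (Ioi δ).indicator (fun y => (ENNReal.ofReal y)⁻¹) (tail μ s) ^ p *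
        ENNReal.ofReal (tail μ s) ^ α ∂μ ≤
      ENNReal.ofReal (tail μ 0) ^ (α - p + 1) * ENNReal.ofReal (Real.log (tail μ 0 / δ)) := by
  have hexp : 0 ≤ α - p + 1 := by linarith
  rw [← lintegral_indicator_inv_tail hδ hδX, ← lintegral_const_mul' _ _
    (ENNReal.rpow_ne_top_of_nonneg hexp ENNReal.ofReal_ne_top)]
  refine lintegral_mono_ae ?_
  filter_upwards [IsRadialMeasure.ae_mem_Ioo (μ := μ)] with s hs
  by_cases hy : tail μ s ∈ Ioi δ
  · have htop : ENNReal.ofReal (tail μ s) ≠ ⊤ := ENNReal.ofReal_ne_top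
    simp only [indicator_of_mem hy]
    calc (ENNReal.ofReal (tail μ s))⁻¹ ^ p * ENNReal.ofReal (tail μ s) ^ α
        = ENNReal.ofReal (tail μ s) ^ (α - p + 1) * (ENNReal.ofReal (tail μ s))⁻¹ := by
          rw [ENNReal.inv_rpow, ← ENNReal.rpow_neg, ← ENNReal.rpow_neg_one,
            ← ENNReal.rpow_add _ _ (ofReal_tail_ne_zero hs.2) htop,
            ← ENNReal.rpow_add _ _ (ofReal_tail_ne_zero hs.2) htop]
          ring_nf
      _ ≤ ENNReal.ofReal (tail μ 0) ^ (α - p + 1) * (ENNReal.ofReal (tail μ s))⁻¹ := by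
          gcongr
          exact tail_antitone hs.1.le
  · simp only [indicator_of_notMem hy, ENNReal.zero_rpow_of_pos hp, zero_mul, zero_le]

lemma ofReal_mul_log_le_lintegral_kernelMean (hδ : 0 < δ) (hδX : δ ≤ tail μ 0)
    (hr : r ∈ Ioo (0 : ℝ) 1) :
    ENNReal.ofReal (2 * π * kernelCoeff μ 0 * Real.log (tail μ 0 / δ)) ≤
      ∫⁻ s, ENNReal.ofReal (kernelMean μ (r * s)) *
        (Ioi δ).indicator (fun y => (ENNReal.ofReal y)⁻¹) (tail μ s) ∂μ := by
  rw [ENNReal.ofReal_mul (mul_pos Real.two_pi_pos (kernelCoeff_pos 0)).le,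
    ← lintegral_indicator_inv_tail hδ hδX, ← lintegral_const_mul' _ _ ENNReal.ofReal_ne_top]
  refine lintegral_mono_ae ?_
  filter_upwards [IsRadialMeasure.ae_mem_Ioo (μ := μ)] with s hs
  gcongr
  exact two_pi_mul_kernelCoeff_zero_le_kernelMean (mul_pos hr.1 hs.1).le
    (mul_lt_one_of_nonneg_of_lt_one_left hr.1.le hr.2 hs.2.le)

/-- Tested on `1 / ω̂₁` truncated where `ω̂₁ ≤ ω̂₁(0) e^{-L}`: the image is `≳ L`, while the `p`-th
power of the norm is only `O(L)`. -/
lemma MaximalOpBounded.exists_rpow_le_mul (h : MaximalOpBounded μ p α) (hp : 0 < p) (hα : -1 < α)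
    (hpα : p - 1 ≤ α) : ∃ C : ℝ, ∀ L > 0, L ^ p ≤ C * L := by
  obtain ⟨C, hC, hbound⟩ := h.exists_lintegral_kernelMean_rpow_le
  set X := tail μ 0
  have hX : 0 < X := tail_pos zero_lt_one
  set c := 2 * π * kernelCoeff μ 0
  have hc : 0 < c := mul_pos Real.two_pi_pos (kernelCoeff_pos 0)
  have hα1 : 0 < α + 1 := by linarith
  refine ⟨C.toReal * X ^ (α - p + 1) / (c ^ p * (X ^ (α + 1) / (α + 1))), fun L hL => ?_⟩
  obtain ⟨δ, hδ, hδX, hlog⟩ : ∃ δ, 0 < δ ∧ δ ≤ X ∧ Real.log (X / δ) = L := by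
    refine ⟨X * Real.exp (-L), by positivity,
      mul_le_of_le_one_right hX.le (Real.exp_le_one_iff.2 (by linarith)), ?_⟩
    rw [div_mul_cancel_left₀ hX.ne', ← Real.exp_neg, neg_neg, Real.log_exp]
  have htest : ENNReal.ofReal (c * L) ^ p * ENNReal.ofReal (X ^ (α + 1) / (α + 1)) ≤
      C * (ENNReal.ofReal X ^ (α - p + 1) * ENNReal.ofReal L) := by
    rw [← setLIntegral_Ioc_rpow hα hX.le, ← lintegral_comp_tail (by fun_prop),
      ← lintegral_const_mul _ (by fun_prop), ← hlog]
    refine (lintegral_mono_ae ?_).trans ((hbound _ ?_).trans (mul_le_mul_right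
      (lintegral_indicator_inv_tail_rpow_le hp hpα hδ hδX) C))
    · filter_upwards [IsRadialMeasure.ae_mem_Ioo (μ := μ)] with r hr
      gcongr
      exact ofReal_mul_log_le_lintegral_kernelMean hδ hδX hr
    · exact (Measurable.indicator (by fun_prop) measurableSet_Ioi).comp measurable_tail
  rw [← ENNReal.ofReal_toReal hC, ENNReal.ofReal_rpow_of_pos (by positivity),
    ENNReal.ofReal_rpow_of_pos hX, ← ENNReal.ofReal_mul (by positivity),
    ← ENNReal.ofReal_mul (by positivity), ← ENNReal.ofReal_mul ENNReal.toReal_nonneg,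
    ENNReal.ofReal_le_ofReal_iff (by positivity), Real.mul_rpow hc.le hL.le] at htest
  rw [div_mul_eq_mul_div, le_div_iff₀ (by positivity)]
  linarith

theorem MaximalOpBounded.lt_sub_one (h : MaximalOpBounded μ p α) (hp : 1 < p) (hα : -1 < α) :
    α < p - 1 := by
  by_contra! hpα
  obtain ⟨C, hC⟩ := h.exists_rpow_le_mul (zero_lt_one.trans hp) hα hpα
  obtain ⟨L, hLC, hL⟩ := ((tendsto_rpow_atTop (sub_pos.2 hp)).eventually_gt_atTop C |>.and
    (Filter.eventually_gt_atTop 0)).exists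
  have hle := hC L hL
  rw [← sub_add_cancel p 1, Real.rpow_add_one hL.ne'] at hle
  exact hLC.not_ge (le_of_mul_le_mul_right hle hL)

lemma ofReal_sum_mul_tail_le_lintegral_kernelMean {ρ : ℝ} (hρ : 0 ≤ ρ) (hρr : ρ < r) (hr : r < 1)
    (t : Finset ℕ) :
    ENNReal.ofReal ((2 * ∑ n ∈ t, kernelCoeff μ n * (ρ ^ 2) ^ n / n) * tail μ ρ) ≤
      ∫⁻ s, ENNReal.ofReal (kernelMean μ (r * s)) * (Ioi ρ).indicator 1 s ∂μ := by
  have hr0 : 0 ≤ r := hρ.trans hρr.le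
  rw [ENNReal.ofReal_mul' (tail_nonneg ρ), ofReal_tail, ← lintegral_indicator_one measurableSet_Ioi,
    ← lintegral_const_mul' _ _ ENNReal.ofReal_ne_top]
  refine lintegral_mono_ae ?_
  filter_upwards [IsRadialMeasure.ae_mem_Ioo (μ := μ)] with s hs
  by_cases hρs : s ∈ Ioi ρ
  · have hpow : ρ ^ 2 ≤ r * s := sq ρ ▸ mul_le_mul hρr.le (le_of_lt hρs) hρ hr0
    refine mul_le_mul_left (ENNReal.ofReal_le_ofReal (le_trans ?_
      (two_mul_sum_kernelCoeff_mul_pow_div_le_kernelMean (mul_nonneg hr0 hs.1.le)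
        (mul_lt_one_of_nonneg_of_lt_one_left hr0 hr hs.2.le) t))) _
    gcongr with n
    exact (kernelCoeff_pos n).le
  · simp only [indicator_of_notMem hρs, mul_zero, le_refl]

lemma MaximalOpBounded.exists_sum_mul_tail_le (h : MaximalOpBounded μ p α) (hp : 0 < p)
    (hα : -1 < α) :
    ∃ B, ∀ ρ ∈ Ico (0 : ℝ) 1, ∀ t : Finset ℕ,
      (2 * ∑ n ∈ t, kernelCoeff μ n * (ρ ^ 2) ^ n / n) * tail μ ρ ≤ B := by
  obtain ⟨C, hC, hbound⟩ := h.exists_lintegral_kernelMean_rpow_le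
  refine ⟨(C ^ p⁻¹).toReal, fun ρ hρ t => ?_⟩
  have hα1 : 0 < α + 1 := by linarith
  set S := (2 * ∑ n ∈ t, kernelCoeff μ n * (ρ ^ 2) ^ n / n) * tail μ ρ
  have hV : ∫⁻ s in Ioi ρ, ENNReal.ofReal (tail μ s) ^ α ∂μ =
      ENNReal.ofReal (tail μ ρ ^ (α + 1) / (α + 1)) := by
    rw [setLIntegral_Ioi_comp_tail (G := fun y => ENNReal.ofReal y ^ α) (by fun_prop) hρ.1 hρ.2,
      setLIntegral_Ioc_rpow hα (tail_nonneg ρ)]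
  have hV0 : ∫⁻ s in Ioi ρ, ENNReal.ofReal (tail μ s) ^ α ∂μ ≠ 0 := by
    rw [hV]
    exact (ENNReal.ofReal_pos.2 (div_pos (Real.rpow_pos_of_pos (tail_pos hρ.2) _) hα1)).ne'
  have hnorm : ∫⁻ s, (Ioi ρ).indicator 1 s ^ p * ENNReal.ofReal (tail μ s) ^ α ∂μ =
      ∫⁻ s in Ioi ρ, ENNReal.ofReal (tail μ s) ^ α ∂μ := by
    rw [← lintegral_indicator measurableSet_Ioi]
    refine lintegral_congr fun s => ?_
    by_cases hs : s ∈ Ioi ρ <;> simp [hs, hp]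
  have htest : ENNReal.ofReal S ^ p * ∫⁻ s in Ioi ρ, ENNReal.ofReal (tail μ s) ^ α ∂μ ≤
      C * ∫⁻ s in Ioi ρ, ENNReal.ofReal (tail μ s) ^ α ∂μ := by
    rw [← lintegral_const_mul _ (by fun_prop)]
    refine le_trans ?_ ((setLIntegral_le_lintegral (Ioi ρ) _).trans
      ((hbound _ (measurable_one.indicator measurableSet_Ioi)).trans_eq (by rw [hnorm])))
    refine lintegral_mono_ae ?_
    filter_upwards [ae_restrict_mem measurableSet_Ioi,
      ae_restrict_of_ae (IsRadialMeasure.ae_mem_Ioo (μ := μ))] with r hρr hr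
    gcongr
    exact ofReal_sum_mul_tail_le_lintegral_kernelMean hρ.1 hρr hr.2 t
  have hS := (ENNReal.mul_le_mul_iff_left hV0 (hV ▸ ENNReal.ofReal_ne_top)).1 htest
  rw [← ENNReal.le_rpow_inv_iff hp] at hS
  exact (ENNReal.ofReal_le_iff_le_toReal
    (ENNReal.rpow_ne_top_of_nonneg (inv_nonneg.2 hp.le) hC)).1 hS

lemma half_le_sum_Ioc_one_div {N : ℕ} (hN : 1 ≤ N) :
    (1 : ℝ) / 2 ≤ ∑ n ∈ Finset.Ioc N (2 * N), (1 : ℝ) / n := by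
  have : (0 : ℝ) < N := by exact_mod_cast hN
  have hcard := Finset.card_nsmul_le_sum (Finset.Ioc N (2 * N)) (fun n : ℕ => (1 : ℝ) / n)
    (1 / (2 * N)) fun n hn => by
      obtain ⟨hNn, hnN⟩ := Finset.mem_Ioc.1 hn
      have : (0 : ℝ) < n := by exact_mod_cast (Nat.zero_le N).trans_lt hNn
      gcongr
      exact_mod_cast hnN
  refine le_trans (le_of_eq ?_) hcard
  rw [Nat.card_Ioc, two_mul N, Nat.add_sub_cancel, nsmul_eq_mul]
  field_simp

lemma half_mul_le_sum_Ioc_one_div {N : ℕ} (hN : 1 ≤ N) (j : ℕ) :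
    (j : ℝ) / 2 ≤ ∑ n ∈ Finset.Ioc N (2 ^ j * N), (1 : ℝ) / n := by
  induction j with
  | zero => simp
  | succ j ih =>
    have hj : N ≤ 2 ^ j * N := Nat.le_mul_of_pos_left _ (by positivity)
    rw [pow_succ', mul_assoc,
      ← Finset.sum_Ioc_consecutive _ hj (Nat.le_mul_of_pos_left _ two_pos)]
    push_cast
    linarith [half_le_sum_Ioc_one_div (hN.trans hj)]

/-- Tails that drop by a fixed factor when `1 - r` is divided by a fixed number. For `F = ω̂` this
is the class `Ď`. -/
def ReverseDoubling (F : ℝ → ℝ) : Prop :=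
  ∃ K > (1 : ℝ), ∃ C > (1 : ℝ), ∀ r ∈ Ico (0 : ℝ) 1, C * F (1 - (1 - r) / K) ≤ F r

lemma half_le_one_sub_pow {q : ℝ} (hq : q ≤ 2) {n : ℕ} (hn : n * q ≤ 1 / 2) :
    1 / 2 ≤ (1 - q) ^ n := by
  have := one_add_mul_le_pow (neg_le_neg hq) n
  rw [← sub_eq_add_neg] at this
  linarith

lemma one_div_le_kernelCoeff_mul_pow {C : ℝ} (hC : 0 < C)
    (hmoment : ∀ n : ℕ, 1 ≤ n → evenMoment μ n ≤ C * tail μ (1 - 1 / n)) (hr : r < 1) {n : ℕ}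
    (hn : 1 ≤ n) (hnr : 1 / (1 - r) ≤ n) {q : ℝ} (hq : q ≤ 1) (hnq : n * q ≤ 1 / 4) :
    1 / (4 * C * tail μ r) ≤ kernelCoeff μ n * ((1 - q) ^ 2) ^ n := by
  have hn0 : (0 : ℝ) < n := by exact_mod_cast hn
  have htail := tail_pos (μ := μ) hr
  have hcoeff : 1 / (2 * C * tail μ r) ≤ kernelCoeff μ n := by
    have hanti : tail μ (1 - 1 / n) ≤ tail μ r :=
      tail_antitone (le_sub_comm.1 ((one_div_le hn0 (sub_pos.2 hr)).2 hnr))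
    have := evenMoment_pos (μ := μ) n
    rw [kernelCoeff, ← one_div, mul_assoc]
    gcongr
    exact (hmoment n hn).trans (by gcongr)
  have hpow : 1 / 2 ≤ ((1 - q) ^ 2) ^ n := by
    rw [← pow_mul]
    exact half_le_one_sub_pow (by linarith) (by push_cast; linarith)
  calc 1 / (4 * C * tail μ r) = 1 / (2 * C * tail μ r) * (1 / 2) := by field_simp; norm_num
    _ ≤ _ := by gcongr; exact (kernelCoeff_pos n).le

lemma div_le_sum_kernelCoeff_mul_pow {C : ℝ} (hC : 0 < C)
    (hmoment : ∀ n : ℕ, 1 ≤ n → evenMoment μ n ≤ C * tail μ (1 - 1 / n)) (hr : r ∈ Ico (0 : ℝ) 1)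
    (j : ℕ) :
    ∃ t : Finset ℕ, j / (4 * C * tail μ r) ≤
      2 * ∑ n ∈ t, kernelCoeff μ n * ((1 - (1 - r) / 2 ^ (j + 3)) ^ 2) ^ n / n := by
  have hr1 : 0 < 1 - r := sub_pos.2 hr.2
  have := tail_pos (μ := μ) hr.2
  set N := ⌈1 / (1 - r)⌉₊
  have hN : 1 / (1 - r) ≤ N := Nat.le_ceil _
  have hN1 : 1 ≤ N := Nat.one_le_ceil_iff.2 (by positivity)
  have hN2 : (N : ℝ) * (1 - r) ≤ 2 := by
    have := Nat.ceil_lt_add_one (one_div_nonneg.2 hr1.le)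
    calc (N : ℝ) * (1 - r) ≤ (1 / (1 - r) + 1) * (1 - r) := by gcongr
      _ = 1 + (1 - r) := by field_simp
      _ ≤ 2 := by linarith [hr.1]
  have hterm : ∀ n ∈ Finset.Ioc N (2 ^ j * N), 1 / (4 * C * tail μ r) * (1 / n) ≤
      kernelCoeff μ n * ((1 - (1 - r) / 2 ^ (j + 3)) ^ 2) ^ n / n := fun n hn => by
    obtain ⟨hNn, hnN⟩ := Finset.mem_Ioc.1 hn
    rw [mul_one_div]
    gcongr
    refine one_div_le_kernelCoeff_mul_pow hC hmoment hr.2 (hN1.trans hNn.le)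
      (hN.trans (by exact_mod_cast hNn.le))
      ((div_le_self hr1.le (one_le_pow₀ one_le_two)).trans (by linarith [hr.1])) ?_
    calc (n : ℝ) * ((1 - r) / 2 ^ (j + 3)) ≤ 2 ^ j * N * ((1 - r) / 2 ^ (j + 3)) := by
          gcongr
          exact_mod_cast hnN
      _ = N * (1 - r) / 8 := by rw [pow_add]; field_simp; norm_num
      _ ≤ 1 / 4 := by linarith
  refine ⟨Finset.Ioc N (2 ^ j * N), ?_⟩
  calc j / (4 * C * tail μ r) = 2 * (1 / (4 * C * tail μ r) * (j / 2)) := by ring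
    _ ≤ 2 * (1 / (4 * C * tail μ r) * ∑ n ∈ Finset.Ioc N (2 ^ j * N), (1 : ℝ) / n) := by
        gcongr; exact half_mul_le_sum_Ioc_one_div hN1 j
    _ ≤ _ := by rw [Finset.mul_sum]; gcongr with n hn; exact hterm n hn

theorem MaximalOpBounded.reverseDoubling_tail (h : MaximalOpBounded μ p α) {D : ℝ}
    (hD : TailDoubling μ D) (hp : 0 < p) (hα : -1 < α) : ReverseDoubling (tail μ) := by
  obtain ⟨B, hB⟩ := h.exists_sum_mul_tail_le hp hα
  obtain ⟨C, hC, hmoment⟩ := hD.exists_evenMoment_le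
  obtain ⟨j, hj⟩ := exists_nat_gt (max 0 (8 * C * B))
  obtain ⟨hj0, hjB⟩ := max_lt_iff.1 hj
  refine ⟨2 ^ (j + 3), one_lt_pow₀ one_lt_two (by positivity), 2, one_lt_two, fun r hr => ?_⟩
  have hr1 : 0 < 1 - r := sub_pos.2 hr.2
  set ρ := 1 - (1 - r) / 2 ^ (j + 3)
  have hρ : ρ ∈ Ico (0 : ℝ) 1 := by
    have : (1 - r) / 2 ^ (j + 3) ≤ 1 - r := div_le_self hr1.le (one_le_pow₀ one_le_two)
    exact ⟨by linarith [hr.1], sub_lt_self 1 (by positivity)⟩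
  obtain ⟨t, ht⟩ := div_le_sum_kernelCoeff_mul_pow hC hmoment hr j
  have htail := tail_pos (μ := μ) hr.2
  have hle : j / (4 * C * tail μ r) * tail μ ρ ≤ B :=
    (mul_le_mul_of_nonneg_right ht (tail_nonneg ρ)).trans (hB ρ hρ t)
  rw [div_mul_eq_mul_div, div_le_iff₀ (by positivity)] at hle
  nlinarith

lemma ReverseDoubling.exists_pow {F : ℝ → ℝ} (h : ReverseDoubling F) :
    ∃ K > (1 : ℝ), ∃ C > (1 : ℝ), ∀ (m : ℕ), ∀ r ∈ Ico (0 : ℝ) 1,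
      C ^ m * F (1 - (1 - r) / K ^ m) ≤ F r := by
  obtain ⟨K, hK, C, hC, hF⟩ := h
  refine ⟨K, hK, C, hC, fun m => ?_⟩
  induction m with
  | zero => simp
  | succ m ih =>
    intro r hr
    have hKm : (1 : ℝ) ≤ K ^ m := one_le_pow₀ hK.le
    have hr1 : 0 < 1 - r := sub_pos.2 hr.2
    have hmem : 1 - (1 - r) / K ^ m ∈ Ico (0 : ℝ) 1 :=
      ⟨by linarith [div_le_self hr1.le hKm, hr.1], sub_lt_self 1 (by positivity)⟩
    have hstep := hF _ hmem
    rw [sub_sub_cancel, div_div, ← pow_succ] at hstep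
    calc C ^ (m + 1) * F (1 - (1 - r) / K ^ (m + 1))
        = C ^ m * (C * F (1 - (1 - r) / K ^ (m + 1))) := by ring
      _ ≤ C ^ m * F (1 - (1 - r) / K ^ m) := by gcongr
      _ ≤ F r := ih r hr

lemma ReverseDoubling.of_comparable {F G : ℝ → ℝ} (h : ReverseDoubling F) {a b : ℝ} (ha : 0 < a)
    (hF : ∀ r ∈ Ico (0 : ℝ) 1, 0 ≤ F r) (hFG : ∀ r ∈ Ico (0 : ℝ) 1, F r ≤ a * G r)
    (hGF : ∀ r ∈ Ico (0 : ℝ) 1, G r ≤ b * F r) : ReverseDoubling G := by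
  obtain ⟨K, hK, C, hC, hpow⟩ := h.exists_pow
  obtain ⟨m, hm⟩ := pow_unbounded_of_one_lt (2 * a * b) hC
  have hKm : (1 : ℝ) < K ^ (m + 1) := one_lt_pow₀ hK m.succ_ne_zero
  refine ⟨K ^ (m + 1), hKm, 2, one_lt_two, fun r hr => ?_⟩
  have hr1 : 0 < 1 - r := sub_pos.2 hr.2
  set ρ := 1 - (1 - r) / K ^ (m + 1)
  have hρ : ρ ∈ Ico (0 : ℝ) 1 :=
    ⟨by linarith [div_le_self hr1.le hKm.le, hr.1], sub_lt_self 1 (by positivity)⟩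
  have hFρ := hF ρ hρ
  refine le_of_mul_le_mul_left ?_ ha
  calc a * (2 * G ρ) ≤ a * (2 * (b * F ρ)) := by gcongr; exact hGF ρ hρ
    _ = 2 * a * b * F ρ := by ring
    _ ≤ C ^ (m + 1) * F ρ := by
        gcongr
        exact hm.le.trans (pow_le_pow_right₀ hC.le m.le_succ)
    _ ≤ F r := hpow (m + 1) r hr
    _ ≤ a * G r := hFG r hr

lemma ReverseDoubling.exists_sum_dyadicInvTail_le (h : ReverseDoubling (tail μ)) :
    ∃ A, ∀ m, ∑ k ∈ range (m + 1), dyadicInvTail μ k ≤ A * dyadicInvTail μ m := by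
  obtain ⟨K, hK, C, hC, hF⟩ := h
  obtain ⟨j, hj⟩ := pow_unbounded_of_one_lt K one_lt_two
  refine ⟨j * C / (C - 1), sum_le_of_mul_le_add (fun k => (dyadicInvTail_pos k).le)
    dyadicInvTail_monotone hC fun k => ?_⟩
  have hk : (1 : ℝ) - 1 / 2 ^ k ∈ Ico (0 : ℝ) 1 :=
    ⟨sub_nonneg.2 (div_le_self zero_le_one (one_le_pow₀ one_le_two)),
      one_sub_inv_two_pow_lt_one k⟩
  have hle : C * tail μ (1 - 1 / 2 ^ (k + j)) ≤ tail μ (1 - 1 / 2 ^ k) := by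
    refine le_trans ?_ (hF _ hk)
    gcongr
    refine tail_antitone ?_
    rw [sub_sub_cancel, div_div, pow_add]
    gcongr
  have := tail_pos (μ := μ) hk.2
  have := tail_pos (μ := μ) (one_sub_inv_two_pow_lt_one (k + j))
  rw [dyadicInvTail, dyadicInvTail, ← div_eq_mul_inv, ← one_div, div_le_div_iff₀ ‹_› ‹_›]
  linarith

theorem maximalOpBounded_iff {D : ℝ} (hD : TailDoubling μ D) (hp : 1 < p) (hα : -1 < α) :
    MaximalOpBounded μ p α ↔ α < p - 1 ∧ ReverseDoubling (tail μ) := by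
  refine ⟨fun h => ⟨h.lt_sub_one hp hα, h.reverseDoubling_tail hD (zero_lt_one.trans hp) hα⟩,
    fun ⟨hαp, h⟩ => ?_⟩
  obtain ⟨A, hA⟩ := h.exists_sum_dyadicInvTail_le
  obtain ⟨C, hC, hmean⟩ := hD.exists_kernelMean_le hA
  exact maximalOpBounded_of_kernelMean_le hmean hC.le hp hα hαp

end Necessity

section RadialWeight

open scoped ComplexConjugate

/-- The measure `s ω(s) ds` on `(0, 1)`, whose tail is `ω̂₁`. -/
def radialMeasure (w : ℝ → ℝ) : Measure ℝ :=
  (volume.restrict (Ioo 0 1)).withDensity fun s => ENNReal.ofReal (s * w s)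

variable {w : ℝ → ℝ} {r : ℝ} {z ζ : ℂ}

lemma IsRadialWeight.integrableOn_Ioo (hw : IsRadialWeight w) (hr : 0 ≤ r) :
    IntegrableOn w (Ioo r 1) :=
  hw.2.1.mono_set fun _ hs => ⟨hr.trans hs.1.le, hs.2⟩

lemma IsRadialWeight.integrableOn_id_mul_Ioo (hw : IsRadialWeight w) (hr : 0 ≤ r) :
    IntegrableOn (fun s => s * w s) (Ioo r 1) := by
  refine (hw.integrableOn_Ioo hr).bdd_mul (c := 1) aestronglyMeasurable_id ?_
  filter_upwards [ae_restrict_mem measurableSet_Ioo] with s hs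
  exact abs_le.2 ⟨by linarith [hs.1], hs.2.le⟩

lemma IsRadialWeight.aemeasurable (hw : IsRadialWeight w) :
    AEMeasurable w (volume.restrict (Ioo 0 1)) :=
  (hw.integrableOn_Ioo le_rfl).aestronglyMeasurable.aemeasurable

lemma IsRadialWeight.aemeasurable_ofReal_id_mul (hw : IsRadialWeight w) :
    AEMeasurable (fun s => ENNReal.ofReal (s * w s)) (volume.restrict (Ioo 0 1)) :=
  (aemeasurable_id.mul hw.aemeasurable).ennreal_ofReal

lemma IsRadialWeight.hatw_nonneg (hw : IsRadialWeight w) (hr : 0 ≤ r) : 0 ≤ hatw w r :=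
  setIntegral_nonneg measurableSet_Ioo fun s hs => hw.1 s ⟨hr.trans hs.1.le, hs.2⟩

lemma IsRadialWeight.hat1_nonneg (hw : IsRadialWeight w) (hr : 0 ≤ r) : 0 ≤ hat1 w r :=
  setIntegral_nonneg measurableSet_Ioo fun s hs =>
    mul_nonneg (hr.trans hs.1.le) (hw.1 s ⟨hr.trans hs.1.le, hs.2⟩)

lemma IsRadialWeight.hat1_le_hatw (hw : IsRadialWeight w) (hr : 0 ≤ r) : hat1 w r ≤ hatw w r :=
  setIntegral_mono_on (hw.integrableOn_id_mul_Ioo hr) (hw.integrableOn_Ioo hr) measurableSet_Ioo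
    fun s hs => mul_le_of_le_one_left (hw.1 s ⟨hr.trans hs.1.le, hs.2⟩) hs.2.le

lemma IsRadialWeight.mul_hatw_le_hat1 (hw : IsRadialWeight w) (hr : 0 ≤ r) :
    r * hatw w r ≤ hat1 w r := by
  rw [hatw, hat1, ← integral_const_mul]
  refine setIntegral_mono_on ((hw.integrableOn_Ioo hr).const_mul r)
    (hw.integrableOn_id_mul_Ioo hr) measurableSet_Ioo fun s hs => ?_
  exact mul_le_mul_of_nonneg_right hs.1.le (hw.1 s ⟨hr.trans hs.1.le, hs.2⟩)

lemma IsRadialWeight.setLIntegral_radialMeasure (hw : IsRadialWeight w) (hr : 0 ≤ r)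
    (g : ℝ → ℝ≥0∞) :
    ∫⁻ s in Ioi r, g s ∂radialMeasure w = ∫⁻ s in Ioo r 1, ENNReal.ofReal (s * w s) * g s := by
  have hset : Ioi r ∩ Ioo 0 1 = Ioo r 1 := by
    rw [← Ioi_inter_Iio, ← inter_assoc, Ioi_inter_Ioi, max_eq_left hr, Ioi_inter_Iio]
  rw [radialMeasure, restrict_withDensity measurableSet_Ioi,
    Measure.restrict_restrict measurableSet_Ioi, hset,
    lintegral_withDensity_eq_lintegral_mul_non_measurable₀ _
      (hw.aemeasurable_ofReal_id_mul.mono_set (Ioo_subset_Ioo_left hr)) (by simp)]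
  rfl

lemma IsRadialWeight.tail_radialMeasure (hw : IsRadialWeight w) (hr : 0 ≤ r) :
    tail (radialMeasure w) r = hat1 w r := by
  have hnonneg : 0 ≤ᵐ[volume.restrict (Ioo r 1)] fun s => s * w s := by
    filter_upwards [ae_restrict_mem measurableSet_Ioo] with s hs
    exact mul_nonneg (hr.trans hs.1.le) (hw.1 s ⟨hr.trans hs.1.le, hs.2⟩)
  have hmass : radialMeasure w (Ioi r) = ENNReal.ofReal (hat1 w r) := by
    rw [← setLIntegral_one, hw.setLIntegral_radialMeasure hr, hat1,
      ofReal_integral_eq_lintegral_ofReal (hw.integrableOn_id_mul_Ioo hr) hnonneg]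
    simp only [mul_one]
  rw [tail, Measure.real, hmass, ENNReal.toReal_ofReal (hw.hat1_nonneg hr)]

theorem IsRadialWeight.isRadialMeasure (hw : IsRadialWeight w) :
    IsRadialMeasure (radialMeasure w) := by
  have : IsFiniteMeasure (radialMeasure w) :=
    isFiniteMeasure_withDensity_ofReal (hw.integrableOn_id_mul_Ioo le_rfl).2
  have : NullSingletonClass (radialMeasure w) := by
    rw [radialMeasure]
    infer_instance
  refine ⟨(withDensity_absolutelyContinuous _ _).ae_le (ae_restrict_mem measurableSet_Ioo),
    fun r hr => ?_⟩
  have hmax : max r (1 / 2) ∈ Ico (0 : ℝ) 1 := ⟨by positivity, max_lt hr one_half_lt_one⟩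
  calc 0 < max r (1 / 2) * hatw w (max r (1 / 2)) := by
        have := hw.2.2 _ hmax
        positivity
    _ ≤ hat1 w (max r (1 / 2)) := hw.mul_hatw_le_hat1 hmax.1
    _ = tail (radialMeasure w) (max r (1 / 2)) := (hw.tail_radialMeasure hmax.1).symm
    _ ≤ tail (radialMeasure w) r := tail_antitone (le_max_left _ _)

lemma IsRadialWeight.evenMoment_radialMeasure (hw : IsRadialWeight w) (n : ℕ) :
    evenMoment (radialMeasure w) n = moment w n := by
  rw [evenMoment, radialMeasure, moment, integral_withDensity_eq_integral_toReal_smul₀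
    hw.aemeasurable_ofReal_id_mul (by simp)]
  refine setIntegral_congr_fun measurableSet_Ioo fun s hs => ?_
  rw [ENNReal.toReal_ofReal (mul_nonneg hs.1.le (hw.1 s ⟨hs.1.le, hs.2⟩)), smul_eq_mul]
  ring

lemma IsRadialWeight.Bker_eq_radialKernel (hw : IsRadialWeight w) (z ζ : ℂ) :
    Bker w z ζ = radialKernel (radialMeasure w) (conj z * ζ) := by
  refine tsum_congr fun n => ?_
  rw [kernelCoeff, hw.evenMoment_radialMeasure, div_eq_inv_mul, Complex.ofReal_inv]

lemma ae_nonneg_withDensity_Ioo (φ : ℝ → ℝ≥0∞) :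
    ∀ᵐ s ∂(volume.restrict (Ioo 0 1)).withDensity φ, 0 ≤ s := by
  filter_upwards [(withDensity_absolutelyContinuous _ _).ae_le (ae_restrict_mem measurableSet_Ioo)]
    with s hs using hs.1.le

lemma IsRadialWeight.aemeasurable_comp_norm (hw : IsRadialWeight w) :
    AEMeasurable (fun z : ℂ => w ‖z‖) (volume.restrict (ball 0 1)) := by
  rw [← discMeasure_withDensity_ofReal]
  exact (hw.aemeasurable.mono_ac (withDensity_absolutelyContinuous _ _)).comp_quasiMeasurePreserving
    (quasiMeasurePreserving_norm_discMeasure (ae_nonneg_withDensity_Ioo _))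

theorem IsRadialWeight.discMeasure_radialMeasure (hw : IsRadialWeight w) :
    discMeasure (radialMeasure w) =
      (volume.restrict (ball 0 1)).withDensity fun z => ENNReal.ofReal (w ‖z‖) := by
  have hprod : radialMeasure w = ((volume.restrict (Ioo 0 1)).withDensity
      ENNReal.ofReal).withDensity fun s => ENNReal.ofReal (w s) := by
    rw [radialMeasure, ← withDensity_mul₀ (by fun_prop) hw.aemeasurable.ennreal_ofReal]
    refine withDensity_congr_ae ?_
    filter_upwards [ae_restrict_mem measurableSet_Ioo] with s hs
    exact ENNReal.ofReal_mul hs.1.le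
  rw [hprod, discMeasure_withDensity (ae_nonneg_withDensity_Ioo _)
    (hw.aemeasurable.mono_ac (withDensity_absolutelyContinuous _ _)).ennreal_ofReal,
    discMeasure_withDensity_ofReal]

lemma IsRadialWeight.lintegral_discMeasure_radialMeasure (hw : IsRadialWeight w) (g : ℂ → ℝ≥0∞) :
    ∫⁻ z, g z ∂discMeasure (radialMeasure w) =
      ∫⁻ z in ball 0 1, ENNReal.ofReal (w ‖z‖) * g z := by
  rw [hw.discMeasure_radialMeasure, lintegral_withDensity_eq_lintegral_mul_non_measurable₀ _
    hw.aemeasurable_comp_norm.ennreal_ofReal (by simp)]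
  rfl

end RadialWeight

section Transfer

open scoped ComplexConjugate

variable {w : ℝ → ℝ} {p α : ℝ} {f : ℂ → ℂ} {z : ℂ}

lemma IsRadialWeight.lintegral_rpow_norm_mul {E : Type*} [SeminormedAddCommGroup E]
    (hw : IsRadialWeight w) (hp : 0 ≤ p) (f : ℂ → E) :
    ∫⁻ z in ball (0 : ℂ) 1, ENNReal.ofReal (‖f z‖ ^ p * (w ‖z‖ * hat1 w ‖z‖ ^ α)) =
      weightedMass (radialMeasure w) p α (‖f ·‖ₑ) := by
  have := hw.isRadialMeasure
  rw [weightedMass, hw.lintegral_discMeasure_radialMeasure]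
  refine setLIntegral_congr_fun measurableSet_ball fun z hz => ?_
  have hz1 : ‖z‖ < 1 := mem_ball_zero_iff.1 hz
  have hwz := hw.1 ‖z‖ ⟨norm_nonneg z, hz1⟩
  rw [ENNReal.ofReal_rpow_of_pos (tail_pos hz1), hw.tail_radialMeasure (norm_nonneg z),
    ENNReal.ofReal_mul (by positivity), ENNReal.ofReal_mul hwz,
    ← ENNReal.ofReal_rpow_of_nonneg (norm_nonneg _) hp, ofReal_norm, mul_left_comm]

lemma IsRadialWeight.lintegral_norm_mul_Bker (hw : IsRadialWeight w) (f : ℂ → ℂ) (hz : ‖z‖ < 1) :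
    ∫⁻ ζ in ball (0 : ℂ) 1, ENNReal.ofReal (‖f ζ‖ * ‖Bker w z ζ‖ * w ‖ζ‖) =
      maximalOp (radialMeasure w) (‖f ·‖ₑ) z := by
  rw [maximalOp, hw.lintegral_discMeasure_radialMeasure]
  refine setLIntegral_congr_fun measurableSet_ball fun ζ hζ => ?_
  have hζ1 : ‖ζ‖ < 1 := mem_ball_zero_iff.1 hζ
  have hzζ : ‖conj z * ζ‖ < 1 := by
    rw [norm_mul, RCLike.norm_conj]
    exact mul_lt_one_of_nonneg_of_lt_one_left (norm_nonneg z) hz hζ1.le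
  rw [kernelAbs_of_norm_lt_one hzζ, hw.Bker_eq_radialKernel,
    ENNReal.ofReal_mul (by positivity), ENNReal.ofReal_mul (norm_nonneg _),
    ofReal_norm, ofReal_norm]
  ring

lemma IsRadialWeight.aestronglyMeasurable_norm_mul_Bker (hw : IsRadialWeight w)
    (hf : Measurable f) (hz : ‖z‖ < 1) :
    AEStronglyMeasurable (fun ζ => ‖f ζ‖ * ‖Bker w z ζ‖ * w ‖ζ‖) (volume.restrict (ball 0 1)) := by
  have := hw.isRadialMeasure
  have hker : ContinuousOn (fun ζ => ‖Bker w z ζ‖) (ball 0 1) := by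
    simp only [hw.Bker_eq_radialKernel]
    refine (continuousOn_radialKernel.comp (by fun_prop) fun ζ hζ => ?_).norm
    rw [mem_ball_zero_iff, norm_mul, RCLike.norm_conj]
    exact mul_lt_one_of_nonneg_of_lt_one_left (norm_nonneg z) hz (mem_ball_zero_iff.1 hζ).le
  exact (hf.norm.aestronglyMeasurable.mul (hker.aestronglyMeasurable measurableSet_ball)).mul
    hw.aemeasurable_comp_norm.aestronglyMeasurable

lemma IsRadialWeight.enorm_Pplus (hw : IsRadialWeight w) (hf : Measurable f) (hz : ‖z‖ < 1)
    (hfin : maximalOp (radialMeasure w) (‖f ·‖ₑ) z < ⊤) :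
    ‖Pplus w f z‖ₑ = maximalOp (radialMeasure w) (‖f ·‖ₑ) z / ENNReal.ofReal π := by
  have hpos : ∀ ζ ∈ ball (0 : ℂ) 1, 0 ≤ ‖f ζ‖ * ‖Bker w z ζ‖ * w ‖ζ‖ := fun ζ hζ => by
    have := hw.1 ‖ζ‖ ⟨norm_nonneg ζ, mem_ball_zero_iff.1 hζ⟩
    positivity
  have hPplus : 0 ≤ Pplus w f z :=
    div_nonneg (setIntegral_nonneg measurableSet_ball hpos) Real.pi_pos.le
  rw [Real.enorm_of_nonneg hPplus, Pplus, ENNReal.ofReal_div_of_pos Real.pi_pos,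
    integral_eq_lintegral_of_nonneg_ae ((ae_restrict_iff' measurableSet_ball).2 (.of_forall hpos))
      (hw.aestronglyMeasurable_norm_mul_Bker hf hz),
    hw.lintegral_norm_mul_Bker f hz, ENNReal.ofReal_toReal hfin.ne]

lemma IsRadialWeight.LpC_eq (hw : IsRadialWeight w) (hp : 0 ≤ p) (f : ℂ → ℂ) :
    LpC p (fun s => w s * hat1 w s ^ α) f =
      (weightedMass (radialMeasure w) p α (‖f ·‖ₑ) / ENNReal.ofReal π) ^ (1 / p) := by
  rw [LpC, hw.lintegral_rpow_norm_mul hp]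

lemma IsRadialWeight.LpR_eq (hw : IsRadialWeight w) (hp : 0 ≤ p) (f : ℂ → ℝ) :
    LpR p (fun s => w s * hat1 w s ^ α) f =
      (weightedMass (radialMeasure w) p α (‖f ·‖ₑ) / ENNReal.ofReal π) ^ (1 / p) := by
  rw [LpR, ← hw.lintegral_rpow_norm_mul hp]
  rfl

lemma IsRadialWeight.LpC_lt_top_iff (hw : IsRadialWeight w) (hp : 0 < p) (f : ℂ → ℂ) :
    LpC p (fun s => w s * hat1 w s ^ α) f < ⊤ ↔
      weightedMass (radialMeasure w) p α (‖f ·‖ₑ) < ⊤ := by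
  have hπ : ENNReal.ofReal π ≠ 0 := (ENNReal.ofReal_pos.2 Real.pi_pos).ne'
  rw [hw.LpC_eq hp.le, ENNReal.rpow_lt_top_iff_of_pos (one_div_pos.2 hp), lt_top_iff_ne_top,
    lt_top_iff_ne_top, not_iff_not, ENNReal.div_eq_top]
  simp only [hπ, and_false, false_or]
  exact and_iff_left ENNReal.ofReal_ne_top

lemma IsRadialWeight.LpR_Pplus_le_iff (hw : IsRadialWeight w) (hp : 0 < p) (hf : Measurable f)
    (hfin : ∀ᵐ z ∂volume.restrict (ball 0 1), maximalOp (radialMeasure w) (‖f ·‖ₑ) z < ⊤)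
    {C : ℝ} (hC : 0 ≤ C) :
    LpR p (fun s => w s * hat1 w s ^ α) (Pplus w f) ≤
        ENNReal.ofReal C * LpC p (fun s => w s * hat1 w s ^ α) f ↔
      weightedMass (radialMeasure w) p α (maximalOp (radialMeasure w) (‖f ·‖ₑ)) ≤
        ENNReal.ofReal (C * π) ^ p * weightedMass (radialMeasure w) p α (‖f ·‖ₑ) := by
  have := hw.isRadialMeasure
  have hπ : ENNReal.ofReal π ≠ 0 := (ENNReal.ofReal_pos.2 Real.pi_pos).ne'
  have hπp : ENNReal.ofReal π ^ p ≠ 0 := (ENNReal.rpow_pos hπ.bot_lt ENNReal.ofReal_ne_top).ne'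
  have hac : discMeasure (radialMeasure w) ≪ volume.restrict (ball 0 1) :=
    hw.discMeasure_radialMeasure ▸ withDensity_absolutelyContinuous _ _
  have hPplus : (‖Pplus w f ·‖ₑ) =ᵐ[discMeasure (radialMeasure w)]
      fun z => maximalOp (radialMeasure w) (‖f ·‖ₑ) z / ENNReal.ofReal π := by
    filter_upwards [hac.ae_le hfin, ae_discMeasure_norm_lt_one] with z hz hz1
    exact hw.enorm_Pplus hf hz1 hz
  have hconst (x : ℝ≥0∞) : ENNReal.ofReal C * x ^ (1 / p) =
      (ENNReal.ofReal C ^ p * x) ^ (1 / p) := by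
    rw [ENNReal.mul_rpow_of_nonneg _ _ (one_div_nonneg.2 hp.le), ← ENNReal.rpow_mul,
      mul_one_div_cancel hp.ne', ENNReal.rpow_one]
  rw [hw.LpC_eq hp.le, hw.LpR_eq hp.le, weightedMass_congr_ae hPplus,
    weightedMass_div_const hp.le hπ, hconst, ENNReal.rpow_le_rpow_iff (one_div_pos.2 hp),
    ← mul_div_assoc, ENNReal.div_le_iff hπ ENNReal.ofReal_ne_top,
    ENNReal.div_mul_cancel hπ ENNReal.ofReal_ne_top, ENNReal.div_le_iff hπp
      (ENNReal.rpow_ne_top_of_nonneg hp.le ENNReal.ofReal_ne_top), ENNReal.ofReal_mul hC,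
    ENNReal.mul_rpow_of_nonneg _ _ hp.le, mul_right_comm]

lemma IsRadialWeight.maximalOpBounded_of_pplusBounded (hw : IsRadialWeight w) (hp : 0 < p)
    (h : PplusBounded p w fun s => w s * hat1 w s ^ α) :
    MaximalOpBounded (radialMeasure w) p α := by
  have := hw.isRadialMeasure
  obtain ⟨C, hC, hbound⟩ := h
  refine ⟨ENNReal.ofReal (C * π) ^ p, ENNReal.rpow_ne_top_of_nonneg hp.le ENNReal.ofReal_ne_top,
    fun g hg => ?_⟩
  by_cases hfin : weightedMass (radialMeasure w) p α g = ⊤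
  · rw [hfin, ENNReal.mul_top
      (ENNReal.rpow_pos (ENNReal.ofReal_pos.2 (by positivity)) ENNReal.ofReal_ne_top).ne']
    exact le_top
  set f : ℂ → ℂ := fun z => ((g z).toReal : ℂ)
  have hf : Measurable f := by fun_prop
  have hfg : (‖f ·‖ₑ) =ᵐ[discMeasure (radialMeasure w)] g := by
    filter_upwards [ae_lt_top_of_weightedMass_lt_top hp hg (lt_top_iff_ne_top.2 hfin)] with z hz
    rw [← ofReal_norm, Complex.norm_real, Real.norm_of_nonneg ENNReal.toReal_nonneg,
      ENNReal.ofReal_toReal hz.ne]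
  obtain ⟨hae, hle⟩ := hbound f hf
    ((hw.LpC_lt_top_iff hp f).2 (by rwa [weightedMass_congr_ae hfg, lt_top_iff_ne_top]))
  have hae' : ∀ᵐ z ∂volume.restrict (ball 0 1),
      maximalOp (radialMeasure w) (‖f ·‖ₑ) z < ⊤ := by
    filter_upwards [hae, ae_restrict_mem measurableSet_ball] with z hz hz1
    rwa [← hw.lintegral_norm_mul_Bker f (mem_ball_zero_iff.1 hz1)]
  rw [← weightedMass_congr_ae hfg, ← maximalOp_congr_ae hfg]
  exact (hw.LpR_Pplus_le_iff hp hf hae' hC.le).1 hle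

lemma IsRadialWeight.pplusBounded_of_maximalOpBounded (hw : IsRadialWeight w) (hp : 1 < p)
    (hα : -1 < α) (h : MaximalOpBounded (radialMeasure w) p α) :
    PplusBounded p w fun s => w s * hat1 w s ^ α := by
  have := hw.isRadialMeasure
  have hp0 : 0 < p := zero_lt_one.trans hp
  have hαp := h.lt_sub_one hp hα
  obtain ⟨C, hC, hbound⟩ := h
  refine ⟨(C.toReal + 1) ^ (1 / p) / π, by positivity, fun f hf hfin => ?_⟩
  rw [hw.LpC_lt_top_iff hp0] at hfin
  have hT : ∀ᵐ z ∂volume.restrict (ball 0 1),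
      maximalOp (radialMeasure w) (‖f ·‖ₑ) z < ⊤ := by
    filter_upwards [ae_restrict_mem measurableSet_ball] with z hz
    exact maximalOp_lt_top hp hαp hf.enorm hfin (mem_ball_zero_iff.1 hz)
  refine ⟨?_, (hw.LpR_Pplus_le_iff hp0 hf hT (by positivity)).2 ?_⟩
  · filter_upwards [hT, ae_restrict_mem measurableSet_ball] with z hz hz1
    rwa [hw.lintegral_norm_mul_Bker f (mem_ball_zero_iff.1 hz1)]
  · refine (hbound _ hf.enorm).trans (mul_le_mul_left ?_ _)
    rw [div_mul_cancel₀ _ Real.pi_ne_zero, ENNReal.ofReal_rpow_of_nonneg (by positivity) hp0.le,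
      ← Real.rpow_mul (by positivity), one_div_mul_cancel hp0.ne', Real.rpow_one]
    exact ENNReal.le_ofReal_iff_toReal_le hC (by positivity) |>.2 (by linarith)

theorem IsRadialWeight.pplusBounded_iff (hw : IsRadialWeight w) (hp : 1 < p) (hα : -1 < α) :
    PplusBounded p w (fun s => w s * hat1 w s ^ α) ↔ MaximalOpBounded (radialMeasure w) p α :=
  ⟨hw.maximalOpBounded_of_pplusBounded (zero_lt_one.trans hp),
    hw.pplusBounded_of_maximalOpBounded hp hα⟩

end Transfer

section MuckenhouptAndDoubling

variable {w : ℝ → ℝ} {p α r : ℝ}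

lemma IsRadialWeight.lintegral_ofReal_mul_hat1_rpow (hw : IsRadialWeight w) (hα : -1 < α)
    (hr : r ∈ Ico (0 : ℝ) 1) :
    ∫⁻ s in Ioo r 1, ENNReal.ofReal (s * (w s * hat1 w s ^ α)) =
      ENNReal.ofReal (hat1 w r ^ (α + 1) / (α + 1)) := by
  have := hw.isRadialMeasure
  rw [← hw.tail_radialMeasure hr.1, ← setLIntegral_Ioc_rpow hα (tail_nonneg r),
    ← setLIntegral_Ioi_comp_tail (G := fun y => ENNReal.ofReal y ^ α) (by fun_prop) hr.1 hr.2,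
    hw.setLIntegral_radialMeasure hr.1]
  refine setLIntegral_congr_fun measurableSet_Ioo fun s hs => ?_
  have hs0 : 0 ≤ s := hr.1.trans hs.1.le
  rw [ENNReal.ofReal_rpow_of_pos (tail_pos hs.2), hw.tail_radialMeasure hs0, ← mul_assoc,
    ENNReal.ofReal_mul (mul_nonneg hs0 (hw.1 s ⟨hs0, hs.2⟩))]

lemma sigmaE_mul_rpow {u : ℝ → ℝ} {s : ℝ} (hp : 1 < p) (hw : 0 ≤ w s) (hu : 0 < u s) :
    sigmaE p w (fun s => w s * u s ^ α) s =
      ENNReal.ofReal (w s) * ENNReal.ofReal (u s) ^ (-(α / (p - 1))) := by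
  have hp1 : 0 < p - 1 := sub_pos.2 hp
  have : 0 < p := zero_lt_one.trans hp
  rw [sigmaE]
  rcases hw.eq_or_lt with hw0 | hw0
  · rw [← hw0, ENNReal.ofReal_zero, ENNReal.zero_div, zero_mul,
      ENNReal.zero_rpow_of_pos (by positivity)]
  have hexp : 1 / p * (p / (p - 1)) = 1 / (p - 1) := by field_simp
  have hdiff : p / (p - 1) - 1 / (p - 1) = 1 := by field_simp
  rw [ENNReal.div_rpow_of_nonneg _ _ (by positivity), ← ENNReal.rpow_mul, hexp,
    ENNReal.ofReal_rpow_of_pos hw0, ENNReal.ofReal_rpow_of_pos (by positivity),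
    ENNReal.ofReal_rpow_of_pos hu, ← ENNReal.ofReal_div_of_pos (by positivity),
    ← ENNReal.ofReal_mul hw, Real.mul_rpow hw (by positivity), ← Real.rpow_mul hu.le,
    mul_one_div, ← div_div, ← Real.rpow_sub hw0, hdiff, Real.rpow_one, Real.rpow_neg hu.le,
    div_eq_mul_inv]

lemma IsRadialWeight.lintegral_ofReal_mul_sigmaE (hw : IsRadialWeight w) (hp : 1 < p)
    (hr : r ∈ Ico (0 : ℝ) 1) :
    ∫⁻ s in Ioo r 1, ENNReal.ofReal s * sigmaE p w (fun s => w s * hat1 w s ^ α) s =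
      ∫⁻ y in Ioc 0 (hat1 w r), ENNReal.ofReal y ^ (-(α / (p - 1))) := by
  have := hw.isRadialMeasure
  rw [← hw.tail_radialMeasure hr.1,
    ← setLIntegral_Ioi_comp_tail (G := fun y => ENNReal.ofReal y ^ _) (by fun_prop) hr.1 hr.2,
    hw.setLIntegral_radialMeasure hr.1]
  refine setLIntegral_congr_fun measurableSet_Ioo fun s hs => ?_
  have hs0 : 0 ≤ s := hr.1.trans hs.1.le
  have htail := hw.tail_radialMeasure hs0
  rw [sigmaE_mul_rpow hp (hw.1 s ⟨hs0, hs.2⟩) (htail ▸ tail_pos hs.2), htail,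
    ENNReal.ofReal_mul hs0, mul_assoc]

lemma IsRadialWeight.hat1_pos (hw : IsRadialWeight w) (hr : r ∈ Ico (0 : ℝ) 1) : 0 < hat1 w r := by
  have := hw.isRadialMeasure
  rw [← hw.tail_radialMeasure hr.1]
  exact tail_pos hr.2

lemma IsRadialWeight.lt_sub_one_of_ApE_lt_top (hw : IsRadialWeight w) (hp : 1 < p) (hα : -1 < α)
    (h : ApE p w (fun s => w s * hat1 w s ^ α) < ⊤) : α < p - 1 := by
  by_contra! hpα
  have h0 : (0 : ℝ) ∈ Ico (0 : ℝ) 1 := ⟨le_rfl, zero_lt_one⟩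
  have hpos := hw.hat1_pos h0
  have hp1 : 0 < 1 - 1 / p := sub_pos.2 ((div_lt_one (zero_lt_one.trans hp)).2 hp)
  have hexp : -(α / (p - 1)) ≤ -1 := neg_le_neg ((one_le_div (sub_pos.2 hp)).2 hpα)
  have hν : ENNReal.ofReal (hat1 w 0 ^ (α + 1) / (α + 1)) ^ (1 / p) ≠ 0 := by
    have : 0 < α + 1 := by linarith
    exact (ENNReal.rpow_pos (ENNReal.ofReal_pos.2 (by positivity)) ENNReal.ofReal_ne_top).ne'
  refine (h.trans_le' (le_iSup₂ 0 h0)).ne ?_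
  rw [hw.lintegral_ofReal_mul_hat1_rpow hα h0, hw.lintegral_ofReal_mul_sigmaE hp h0,
    setLIntegral_Ioc_rpow_eq_top hexp hpos, ENNReal.top_rpow_of_pos hp1, ENNReal.mul_top hν,
    ENNReal.top_div_of_ne_top ENNReal.ofReal_ne_top]

lemma rpow_mul_rpow_conj_eq {x a b : ℝ} (hx : 0 < x) (ha : 0 < a) (hb : 0 < b)
    (hab : a * (1 / p) + b * (1 - 1 / p) = 1) :
    (x ^ a / a) ^ (1 / p) * (x ^ b / b) ^ (1 - 1 / p) =
      (1 / a) ^ (1 / p) * (1 / b) ^ (1 - 1 / p) * x := by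
  have hpow : x ^ (a * (1 / p)) * x ^ (b * (1 - 1 / p)) = x := by
    rw [← Real.rpow_add hx, hab, Real.rpow_one]
  rw [div_eq_mul_one_div (x ^ a), div_eq_mul_one_div (x ^ b),
    Real.mul_rpow (by positivity) (by positivity), Real.mul_rpow (by positivity) (by positivity),
    ← Real.rpow_mul hx.le, ← Real.rpow_mul hx.le, mul_mul_mul_comm, hpow, mul_comm]

lemma IsRadialWeight.ApE_lt_top_of_lt_sub_one (hw : IsRadialWeight w) (hp : 1 < p) (hα : -1 < α)
    (hαp : α < p - 1) : ApE p w (fun s => w s * hat1 w s ^ α) < ⊤ := by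
  have hp0 : p ≠ 0 := (zero_lt_one.trans hp).ne'
  have hp1 : 0 < p - 1 := sub_pos.2 hp
  have hexp : -1 < -(α / (p - 1)) := neg_lt_neg ((div_lt_one hp1).2 hαp)
  set b := -(α / (p - 1)) + 1 with hb
  have ha0 : 0 < α + 1 := by linarith
  have hb0 : 0 < b := by linarith
  have hab : (α + 1) * (1 / p) + b * (1 - 1 / p) = 1 := by
    have := hp1.ne'
    rw [hb]
    field_simp
    ring
  refine lt_of_le_of_lt (iSup₂_le fun r hr => le_of_eq ?_)
    (ENNReal.ofReal_lt_top (r := (1 / (α + 1)) ^ (1 / p) * (1 / b) ^ (1 - 1 / p)))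
  have hpos := hw.hat1_pos hr
  rw [hw.lintegral_ofReal_mul_hat1_rpow hα hr, hw.lintegral_ofReal_mul_sigmaE hp hr,
    setLIntegral_Ioc_rpow hexp hpos.le, ENNReal.ofReal_rpow_of_pos (by positivity),
    ENNReal.ofReal_rpow_of_pos (by positivity), ← ENNReal.ofReal_mul (by positivity),
    ← ENNReal.ofReal_div_of_pos hpos, rpow_mul_rpow_conj_eq hpos ha0 hb0 hab,
    mul_div_cancel_right₀ _ hpos.ne']

theorem IsRadialWeight.ApE_lt_top_iff (hw : IsRadialWeight w) (hp : 1 < p) (hα : -1 < α) :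
    ApE p w (fun s => w s * hat1 w s ^ α) < ⊤ ↔ α < p - 1 :=
  ⟨hw.lt_sub_one_of_ApE_lt_top hp hα, hw.ApE_lt_top_of_lt_sub_one hp hα⟩

lemma IsRadialWeight.exists_hatw_le_tail_midpoint (hw : IsRadialWeight w) (hwD : Dhat w) :
    ∃ D > 0, ∀ r ∈ Ico (0 : ℝ) 1, hatw w r ≤ D * tail (radialMeasure w) ((1 + r) / 2) := by
  obtain ⟨C, hC⟩ := hwD
  refine ⟨2 * max C 1, by positivity, fun r hr => ?_⟩
  have hmid : 1 / 2 ≤ (1 + r) / 2 := by linarith [hr.1]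
  have hmid0 : 0 ≤ (1 + r) / 2 := by linarith
  have := hw.hatw_nonneg hmid0
  calc hatw w r ≤ C * hatw w ((1 + r) / 2) := hC r hr
    _ ≤ max C 1 * (2 * ((1 + r) / 2 * hatw w ((1 + r) / 2))) := by
        gcongr
        · exact le_max_left C 1
        · nlinarith
    _ ≤ max C 1 * (2 * tail (radialMeasure w) ((1 + r) / 2)) := by
        rw [hw.tail_radialMeasure hmid0]
        gcongr
        exact hw.mul_hatw_le_hat1 hmid0
    _ = _ := by ring

lemma IsRadialWeight.exists_tailDoubling (hw : IsRadialWeight w) (hwD : Dhat w) :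
    ∃ D, TailDoubling (radialMeasure w) D := by
  have := hw.isRadialMeasure
  obtain ⟨D, hD0, hD⟩ := hw.exists_hatw_le_tail_midpoint hwD
  have hnonneg : ∀ r ∈ Ico (0 : ℝ) 1,
      tail (radialMeasure w) r ≤ D * tail (radialMeasure w) ((1 + r) / 2) := fun r hr =>
    ((hw.tail_radialMeasure hr.1).trans_le (hw.hat1_le_hatw hr.1)).trans (hD r hr)
  refine ⟨D, fun r hr => ?_⟩
  rcases le_or_gt 0 r with hr0 | hr0
  · exact hnonneg r ⟨hr0, hr⟩
  · calc tail (radialMeasure w) r = tail (radialMeasure w) 0 := tail_eq_tail_zero hr0.le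
      _ ≤ D * tail (radialMeasure w) ((1 + 0) / 2) := hnonneg 0 ⟨le_rfl, zero_lt_one⟩
      _ ≤ D * tail (radialMeasure w) ((1 + r) / 2) :=
        mul_le_mul_of_nonneg_left (tail_antitone (by linarith)) hD0.le

theorem IsRadialWeight.dcheck_iff (hw : IsRadialWeight w) (hwD : Dhat w) :
    Dcheck w ↔ ReverseDoubling (tail (radialMeasure w)) := by
  have := hw.isRadialMeasure
  obtain ⟨D, hD0, hD⟩ := hw.exists_hatw_le_tail_midpoint hwD
  have hle : ∀ r ∈ Ico (0 : ℝ) 1, tail (radialMeasure w) r ≤ 1 * hatw w r := fun r hr => by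
    rw [hw.tail_radialMeasure hr.1, one_mul]
    exact hw.hat1_le_hatw hr.1
  have hge : ∀ r ∈ Ico (0 : ℝ) 1, hatw w r ≤ D * tail (radialMeasure w) r := fun r hr =>
    (hD r hr).trans (mul_le_mul_of_nonneg_left (tail_antitone (by linarith [hr.2])) hD0.le)
  exact ⟨fun h => ReverseDoubling.of_comparable h hD0 (fun r hr => hw.hatw_nonneg hr.1) hge hle,
    fun h => h.of_comparable one_pos (fun r _ => tail_nonneg r) hle hge⟩

end MuckenhouptAndDoubling

/-- Theorem 1, second part. Let `1 < p < ∞`, `-1 < α < ∞`, `ω ∈ D̂` a radial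
weight and `ν = ω ω̂₁^α`. Then `P⁺_ω` is bounded on `L^p_ν` if and only if `A_p(ω,ν) < ∞` and
`ω ∈ 𝒟 = D̂ ∩ Ď`. -/
theorem maximal_projection_bounded_iff (p α : ℝ) (hp : 1 < p) (hα : -1 < α) (w : ℝ → ℝ)
    (hw : IsRadialWeight w) (hwD : Dhat w) :
    PplusBounded p w (fun s => w s * hat1 w s ^ α) ↔
      (ApE p w (fun s => w s * hat1 w s ^ α) < ⊤ ∧ Dhat w ∧ Dcheck w) := by
  have := hw.isRadialMeasure
  obtain ⟨D, hD⟩ := hw.exists_tailDoubling hwD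
  rw [hw.pplusBounded_iff hp hα, maximalOpBounded_iff hD hp hα, hw.ApE_lt_top_iff hp hα,
    hw.dcheck_iff hwD, and_iff_right hwD]

end
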